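/- (Strong form of the generalized Nehari–Schwarz lemma at the boundary) Let B be a maximal Blaschke product and let f ∈ 𝓑 be nonconstant with C_f ⊇ C_B. Suppose there exists a sequence (z_n) in 𝔻 with B'(z_n) ≠ 0 for all n, |z_n| → 1, and f^h(z_n)/B^h(z_n) = 1 + o((1 − |z_n|)²) as n → ∞, where f^h and B^h denote the hyperbolic derivatives. Then f = T ∘ B for some conformal automorphism T of 𝔻; in particular f is itself a maximal Blaschke product. -/

import Mathlib

/-!
Write `f' = q B'` with `q` holomorphic. Maximality of `B` says that the ratio
`u = |q| (1 - |B|²) / (1 - |f|²)` of the two pulled back hyperbolic metrics is at most one. The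
curvature equations give a differential inequality for `log u` which, compared with the barrier
`ε (|z|⁻² + |z|² - 2)` on an annulus, yields a Hopf type estimate `u ≤ 1 - c (1 - |z|)²` near the
unit circle unless `u` is identically one. The hypothesis excludes such an estimate, so `B` and `f`
induce the same metric, and then `f` differs from `B` by an automorphism of the disk.

It remains to see that a maximal function `F` which, like `f`, is an automorphism applied to a
Blaschke product is a Blaschke product. Split `F = b S` with `b` a Blaschke product and `S`
zero-free. The metric `|F'| / (2 √|S| (1 - |F|))` has curvature at most `-4`. On a slightly smaller
disk there is a finite Blaschke product `G` with the same critical points as `F`; by Ahlfors' lemma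
its metric dominates the given one, and in the limit the maximality of `F` bounds it by
`|F'| / (1 - |F|²)`. The result is `1 + |F| ≤ 2 √|S|`, hence `log |S| ≥ -2 (1 - |F|)`. The circle
means of `1 - |F|` tend to zero because `F` comes from a Blaschke product, so `log |S 0| ≥ 0` by the
mean value property, and `S` is constant by the maximum principle.
-/

open Metric Filter

/-- The order of vanishing of `f` at `z`. -/
noncomputable def vOrder (f : ℂ → ℂ) (z : ℂ) : ℕ∞ :=
  sInf ((fun n : ℕ => (n : ℕ∞)) '' {n : ℕ | iteratedDeriv n f z ≠ 0})

/-- A (finite or infinite) Blaschke product: a holomorphic function on the open unit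
disk of the form `B(z) = η z^m ∏_j (|z_j|/z_j)(z_j − z)/(1 − conj z_j · z)`, where
`|η| = 1`, `m ≥ 0`, the points `z_j ∈ 𝔻 \ {0}` satisfy the Blaschke condition
`Σ_j (1 − |z_j|) < ∞`, and the (possibly infinite) product converges. -/
def IsBlaschkeProduct (B : ℂ → ℂ) : Prop :=
  (∀ z ∈ Metric.ball (0 : ℂ) 1, DifferentiableAt ℂ B z) ∧
  ∃ (η : ℂ) (m : ℕ) (ι : Type) (a : ι → ℂ),
    ‖η‖ = 1 ∧ (∀ j, a j ≠ 0 ∧ ‖a j‖ < 1) ∧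
    Summable (fun j => 1 - ‖a j‖) ∧
    ∀ z ∈ Metric.ball (0 : ℂ) 1,
      B z = η * z ^ m *
        ∏' j, (((‖a j‖ : ℝ) : ℂ) / a j) * ((a j - z) / (1 - (starRingEnd ℂ) (a j) * z))

/-- A Blaschke product `B` is *maximal* if for every nonconstant holomorphic map `f`
of the open unit disk into the closed unit disk whose critical set contains that of
`B` (with multiplicities), one has
`|f'(z)| (1 − |B(z)|²) ≤ |B'(z)| (1 − |f(z)|²)` on the disk. -/
def IsMaximalBlaschke (B : ℂ → ℂ) : Prop :=
  IsBlaschkeProduct B ∧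
  ∀ f : ℂ → ℂ,
    (∀ z ∈ Metric.ball (0 : ℂ) 1, DifferentiableAt ℂ f z) →
    (∀ z ∈ Metric.ball (0 : ℂ) 1, ‖f z‖ ≤ 1) →
    (∃ z ∈ Metric.ball (0 : ℂ) 1, ∃ w ∈ Metric.ball (0 : ℂ) 1, f z ≠ f w) →
    (∀ z ∈ Metric.ball (0 : ℂ) 1, vOrder (deriv B) z ≤ vOrder (deriv f) z) →
    ∀ z ∈ Metric.ball (0 : ℂ) 1,
      ‖deriv f z‖ * (1 - ‖B z‖ ^ 2) ≤ ‖deriv B z‖ * (1 - ‖f z‖ ^ 2)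

/-- The hyperbolic derivative `f^h(z) = (1 − |z|²)|f'(z)|/(1 − |f(z)|²)`. -/
noncomputable def hDeriv (f : ℂ → ℂ) (z : ℂ) : ℝ :=
  (1 - ‖z‖ ^ 2) * ‖deriv f z‖ / (1 - ‖f z‖ ^ 2)

open scoped Topology ComplexConjugate

local notation "𝔻" => Metric.ball (0 : ℂ) 1

/-- The function `φ` has a second order expansion at `z` with complex Hessian (Levi form) `L`,
i.e. `L = ∂²φ/∂w∂w̄ = Δφ/4` at `z`: up to `o(‖w - z‖²)`, it is the real part of an analytic
function plus `L ‖w - z‖²`. The pluriharmonic part may be changed freely, so no derivatives of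
`φ` are needed. -/
def HasLeviAt (φ : ℂ → ℝ) (z : ℂ) (L : ℝ) : Prop :=
  ∃ H : ℂ → ℂ, AnalyticAt ℂ H z ∧
    (fun w => φ w - (H w).re - L * ‖w - z‖ ^ 2) =o[𝓝 z] fun w => ‖w - z‖ ^ 2

namespace HasLeviAt

variable {φ ψ : ℂ → ℝ} {h : ℂ → ℂ} {z : ℂ} {L M : ℝ}

lemma congr_of_isLittleO (hφ : HasLeviAt φ z L)
    (hψ : (fun w => ψ w - φ w) =o[𝓝 z] fun w => ‖w - z‖ ^ 2) : HasLeviAt ψ z L := by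
  obtain ⟨H, hH, ho⟩ := hφ
  exact ⟨H, hH, (hψ.add ho).congr_left fun w => by ring⟩

lemma congr (hφ : HasLeviAt φ z L) (h : ψ =ᶠ[𝓝 z] φ) : HasLeviAt ψ z L := by
  refine hφ.congr_of_isLittleO ((Asymptotics.isLittleO_zero _ _).congr' ?_ .rfl)
  filter_upwards [h] with w hw
  rw [hw, sub_self]

lemma add (hφ : HasLeviAt φ z L) (hψ : HasLeviAt ψ z M) :
    HasLeviAt (fun w => φ w + ψ w) z (L + M) := by
  obtain ⟨H, hH, ho⟩ := hφ
  obtain ⟨K, hK, ho'⟩ := hψ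
  refine ⟨fun w => H w + K w, hH.add hK, (ho.add ho').congr_left fun w => ?_⟩
  rw [Complex.add_re]
  ring

lemma const_mul (hφ : HasLeviAt φ z L) (c : ℝ) : HasLeviAt (fun w => c * φ w) z (c * L) := by
  obtain ⟨H, hH, ho⟩ := hφ
  refine ⟨fun w => c * H w, analyticAt_const.mul hH, (ho.const_mul_left c).congr_left fun w => ?_⟩
  rw [Complex.re_ofReal_mul]
  ring

lemma neg (hφ : HasLeviAt φ z L) : HasLeviAt (fun w => -φ w) z (-L) := by
  simpa using hφ.const_mul (-1)

lemma sub (hφ : HasLeviAt φ z L) (hψ : HasLeviAt ψ z M) :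
    HasLeviAt (fun w => φ w - ψ w) z (L - M) := by
  simpa [sub_eq_add_neg] using hφ.add hψ.neg

lemma re (hh : AnalyticAt ℂ h z) : HasLeviAt (fun w => (h w).re) z 0 :=
  ⟨h, hh, by simp⟩

lemma const (c : ℝ) (z : ℂ) : HasLeviAt (fun _ => c) z 0 := by
  simpa using re (h := fun _ => (c : ℂ)) (z := z) analyticAt_const

lemma log_norm (hh : AnalyticAt ℂ h z) (h0 : h z ≠ 0) :
    HasLeviAt (fun w => Real.log ‖h w‖) z 0 := by
  have hslit : h z / h z ∈ Complex.slitPlane := by simp [h0]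
  have hlog : HasLeviAt (fun w => (Complex.log (h w / h z)).re + Real.log ‖h z‖) z 0 := by
    simpa using (re ((hh.div_const).clog hslit)).add (const (Real.log ‖h z‖) z)
  refine hlog.congr ?_
  filter_upwards [hh.continuousAt.eventually_ne h0] with w hw
  rw [Complex.log_re, norm_div, Real.log_div (by simpa) (by simpa)]
  ring

lemma sq_norm (hh : AnalyticAt ℂ h z) : HasLeviAt (fun w => ‖h w‖ ^ 2) z (‖deriv h z‖ ^ 2) := by
  refine ⟨fun w => (2 : ℝ) * (conj (h z) * h w) - (‖h z‖ ^ 2 : ℝ), by fun_prop, ?_⟩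
  have hd := hasDerivAt_iff_isLittleO.1 hh.differentiableAt.hasDerivAt
  have hsub : (fun w => ‖h w - h z‖ - ‖(w - z) * deriv h z‖) =o[𝓝 z] fun w => ‖w - z‖ :=
    (Asymptotics.IsBigO.of_norm_le fun w => abs_norm_sub_norm_le _ _).trans_isLittleO
      hd.norm_norm
  have hadd : (fun w => ‖h w - h z‖ + ‖(w - z) * deriv h z‖) =O[𝓝 z] fun w => ‖w - z‖ :=
    (hh.differentiableAt.isBigO_sub.norm_left.add (by
      simpa [mul_comm] using
        ((Asymptotics.isBigO_refl (fun w => w - z) (𝓝 z)).const_mul_left (deriv h z)).norm_left)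
      ).norm_right
  refine ((hsub.mul_isBigO hadd).congr_left fun w => ?_).congr_right fun w => (sq _).symm
  have hpolar : ‖h w - h z‖ ^ 2 = ‖h w‖ ^ 2 - 2 * (conj (h z) * h w).re + ‖h z‖ ^ 2 := by
    simp only [Complex.sq_norm, Complex.normSq_sub, mul_comm (conj (h z))]
    ring
  simp only [Complex.sub_re, Complex.ofReal_re, Complex.re_ofReal_mul, norm_mul]
  linear_combination hpolar

lemma log_one_sub_sq_norm_of_eq_zero (hh : AnalyticAt ℂ h z) (h0 : h z = 0) :
    HasLeviAt (fun w => Real.log (1 - ‖h w‖ ^ 2)) z (-‖deriv h z‖ ^ 2) := by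
  have hlog : HasDerivAt (fun x : ℝ => Real.log (1 - x)) (-1) 0 := by
    simpa using ((hasDerivAt_id (0 : ℝ)).const_sub 1).log (by simp)
  have hlim : Tendsto (fun w => ‖h w‖ ^ 2) (𝓝 z) (𝓝 0) := by
    simpa [h0] using (hh.continuousAt.tendsto.norm.pow 2)
  have hbig : (fun w => ‖h w‖ ^ 2) =O[𝓝 z] fun w => ‖w - z‖ ^ 2 := by
    simpa [h0] using hh.differentiableAt.isBigO_sub.norm_norm.pow 2
  refine (sq_norm hh).neg.congr_of_isLittleO ?_
  refine (((hasDerivAt_iff_isLittleO.1 hlog).comp_tendsto hlim).trans_isBigO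
    (hbig.congr_left fun w => by simp)).congr_left fun w => by simp

/-- At a local maximum the analytic part `H` would otherwise violate the maximum modulus principle
for `exp H`. -/
lemma nonpos_of_isLocalMax (hφ : HasLeviAt φ z L) (hm : IsLocalMax φ z) : L ≤ 0 := by
  obtain ⟨H, hH, ho⟩ := hφ
  by_contra! hL
  have hz : φ z = (H z).re := by
    have := (ho.bound one_pos).self_of_nhds
    simpa [sub_eq_zero] using this
  have hlt : ∀ᶠ w in 𝓝 z, (H w).re + L / 2 * ‖w - z‖ ^ 2 ≤ (H z).re := by
    filter_upwards [hm, ho.bound (half_pos hL)] with w hw hb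
    rw [Real.norm_eq_abs, norm_pow, norm_norm] at hb
    linarith [(abs_le.1 hb).1]
  have hmax : IsLocalMax (fun w => ‖Complex.exp (H w)‖) z := by
    filter_upwards [hlt] with w hw
    simp only [Complex.norm_exp]
    exact Real.exp_le_exp.2 (by linarith [mul_nonneg (half_pos hL).le (sq_nonneg ‖w - z‖)])
  have hconst := Complex.eventually_eq_of_isLocalMax_norm (f := fun w => Complex.exp (H w))
    (hH.cexp.eventually_analyticAt.mono fun w hw => hw.differentiableAt) hmax
  have heq : ∀ᶠ w in 𝓝 z, w = z := by
    filter_upwards [hlt, hconst] with w hw he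
    have hre : (H w).re = (H z).re := by
      simpa [Complex.norm_exp] using congrArg norm he
    have : ‖w - z‖ ^ 2 ≤ 0 := by
      by_contra! hpos
      linarith [mul_pos (half_pos hL) hpos]
    exact sub_eq_zero.1 (norm_eq_zero.1 (pow_eq_zero_iff two_ne_zero |>.1 (this.antisymm
      (sq_nonneg _))))
  exact (NeBot.ne (inferInstance : (𝓝[≠] z).NeBot)) (by
    rw [← empty_mem_iff_bot]
    filter_upwards [heq.filter_mono nhdsWithin_le_nhds, self_mem_nhdsWithin] with w hw hw'
    exact hw' hw)

end HasLeviAt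

lemma exists_forall_mul_exp_sq_norm_le {U : Set ℂ} (hb : Bornology.IsBounded U) {Φ : ℂ → ℝ}
    (hΦ : ContinuousOn Φ U) (hbd : ∀ c > 1, ∃ K ⊆ U, IsCompact K ∧ ∀ z ∈ U \ K, Φ z ≤ c)
    {z : ℂ} (hz : z ∈ U) (h1 : 1 < Φ z) :
    ∃ ε > 0, ∃ x ∈ U, 1 < Φ x ∧
      ∀ w ∈ U, Φ w * Real.exp (ε * ‖w‖ ^ 2) ≤ Φ x * Real.exp (ε * ‖x‖ ^ 2) := by
  obtain ⟨R, hR0, hR⟩ := hb.exists_pos_norm_le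
  set ℓ := Real.log (Φ z) with hℓ
  have hℓ0 : 0 < ℓ := Real.log_pos h1
  obtain ⟨ε, hε, hεR⟩ : ∃ ε > 0, ε * R ^ 2 = ℓ / 2 :=
    ⟨ℓ / 2 / R ^ 2, by positivity, div_mul_cancel₀ _ (by positivity)⟩
  have hexp : ∀ w ∈ U, Real.exp (ε * ‖w‖ ^ 2) ≤ Real.exp (ℓ / 2) := fun w hw => by
    rw [Real.exp_le_exp, ← hεR]
    gcongr
    exact hR w hw
  have hhalf : Real.exp (ℓ / 2) * Real.exp (ℓ / 2) = Φ z := by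
    rw [← Real.exp_add, add_halves, hℓ, Real.exp_log (by linarith)]
  have hone : 1 < Real.exp (ℓ / 2) := Real.one_lt_exp_iff.2 (half_pos hℓ0)
  set g : ℂ → ℝ := fun w => Φ w * Real.exp (ε * ‖w‖ ^ 2)
  have hgz : Φ z ≤ g z :=
    le_mul_of_one_le_right (by linarith) (Real.one_le_exp (by positivity))
  obtain ⟨K, hKU, hK, hKc⟩ := hbd _ hone
  have hzK : z ∈ K := by
    by_contra hzK
    have := hKc z ⟨hz, hzK⟩
    nlinarith
  obtain ⟨x, hxK, hx⟩ := hK.exists_isMaxOn ⟨z, hzK⟩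
    ((hΦ.mono hKU).mul (Continuous.continuousOn (by fun_prop)) : ContinuousOn g K)
  have hxU := hKU hxK
  have hgx : Φ z ≤ g x := hgz.trans (hx hzK)
  have hmax : ∀ w ∈ U, g w ≤ g x := fun w hw => by
    by_cases hwK : w ∈ K
    · exact hx hwK
    · calc g w ≤ Real.exp (ℓ / 2) * Real.exp (ℓ / 2) :=
            mul_le_mul (hKc w ⟨hw, hwK⟩) (hexp w hw) (Real.exp_pos _).le (Real.exp_pos _).le
        _ ≤ g x := hhalf.trans_le hgx
  have hΦx : 0 ≤ Φ x :=
    (pos_of_mul_pos_left ((zero_lt_one.trans h1).trans_le hgx) (Real.exp_pos _).le).le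
  exact ⟨ε, hε, x, hxU, hone.trans_le <| le_of_mul_le_mul_right (hhalf.trans_le
    (hgx.trans (mul_le_mul_of_nonneg_left (hexp x hxU) hΦx))) (Real.exp_pos _), hmax⟩

/-- The function `log Φ` need only have a minorant with nonnegative Levi form, and only where it is
positive; adding `ε ‖z‖²` makes the form positive, so that no maximum can be attained. -/
theorem le_one_of_levi_nonneg {U : Set ℂ} (hU : IsOpen U) (hb : Bornology.IsBounded U)
    {Φ : ℂ → ℝ} (hΦ : ContinuousOn Φ U)
    (hbd : ∀ c > 1, ∃ K ⊆ U, IsCompact K ∧ ∀ z ∈ U \ K, Φ z ≤ c)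
    (hlevi : ∀ z ∈ U, 1 < Φ z → ∃ (ψ : ℂ → ℝ) (L : ℝ), 0 ≤ L ∧ HasLeviAt ψ z L ∧
      (∀ᶠ w in 𝓝 z, ψ w ≤ Real.log (Φ w)) ∧ ψ z = Real.log (Φ z))
    {z : ℂ} (hz : z ∈ U) : Φ z ≤ 1 := by
  by_contra! h1
  obtain ⟨ε, hε, x, hxU, hΦx, hmax⟩ := exists_forall_mul_exp_sq_norm_le hb hΦ hbd hz h1
  obtain ⟨ψ, L, hL, hψ, hle, heq⟩ := hlevi x hxU hΦx
  have hloc : IsLocalMax (fun w => ψ w + ε * ‖w‖ ^ 2) x := by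
    filter_upwards [hU.mem_nhds hxU, hle, (hΦ.continuousAt (hU.mem_nhds hxU)).eventually
      (lt_mem_nhds (zero_lt_one.trans hΦx))] with w hw hψw hw0
    have := Real.log_le_log (mul_pos hw0 (Real.exp_pos _)) (hmax w hw)
    rw [Real.log_mul hw0.ne' (Real.exp_ne_zero _), Real.log_exp,
      Real.log_mul (by linarith) (Real.exp_ne_zero _), Real.log_exp] at this
    linarith
  have hε' := (hψ.add ((HasLeviAt.sq_norm analyticAt_id).const_mul ε)).nonpos_of_isLocalMax hloc
  norm_num at hε'
  linarith

lemma one_sub_sq_norm_pos {w : ℂ} (hw : ‖w‖ < 1) : 0 < 1 - ‖w‖ ^ 2 := by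
  nlinarith [norm_nonneg w]

lemma one_sub_conj_mul_ne_zero {c w : ℂ} (hc : ‖c‖ < 1) (hw : ‖w‖ ≤ 1) : 1 - conj c * w ≠ 0 := by
  intro h
  have h1 : ‖conj c * w‖ = 1 := by rw [← sub_eq_zero.1 h, norm_one]
  rw [norm_mul, Complex.norm_conj] at h1
  nlinarith [norm_nonneg c, norm_nonneg w]

/-- The conformal automorphism `w ↦ (w - c) / (1 - conj c * w)` of the unit disk, sending `c`
to `0`. -/
noncomputable def moebius (c w : ℂ) : ℂ := (w - c) / (1 - conj c * w)

section Moebius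

variable {c d w σ : ℂ}

@[simp] lemma moebius_self (c : ℂ) : moebius c c = 0 := by simp [moebius]

@[simp] lemma moebius_zero_left (w : ℂ) : moebius 0 w = w := by simp [moebius]

@[simp] lemma moebius_zero_right (c : ℂ) : moebius c 0 = -c := by simp [moebius]

lemma one_sub_sq_norm_moebius (hc : ‖c‖ < 1) (hw : ‖w‖ ≤ 1) :
    1 - ‖moebius c w‖ ^ 2 = (1 - ‖c‖ ^ 2) * (1 - ‖w‖ ^ 2) / ‖1 - conj c * w‖ ^ 2 := by
  have h1 : ‖1 - conj c * w‖ ^ 2 ≠ 0 := by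
    simpa using one_sub_conj_mul_ne_zero hc hw
  rw [moebius, norm_div, div_pow, eq_div_iff h1, sub_mul, div_mul_cancel₀ _ h1]
  simp only [Complex.sq_norm, Complex.normSq_apply, Complex.sub_re, Complex.sub_im, Complex.mul_re,
    Complex.mul_im, Complex.conj_re, Complex.conj_im, Complex.one_re, Complex.one_im]
  ring

lemma norm_moebius_lt_one (hc : ‖c‖ < 1) (hw : ‖w‖ < 1) : ‖moebius c w‖ < 1 := by
  have h := one_sub_sq_norm_moebius hc hw.le
  have := one_sub_sq_norm_pos hc
  have := one_sub_sq_norm_pos hw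
  have := norm_pos_iff.2 (one_sub_conj_mul_ne_zero hc hw.le)
  refine (sq_lt_one_iff₀ (norm_nonneg _)).1 (sub_pos.1 ?_)
  rw [h]
  positivity

lemma norm_moebius_of_norm_eq_one (hc : ‖c‖ < 1) (hw : ‖w‖ = 1) : ‖moebius c w‖ = 1 := by
  have h := one_sub_sq_norm_moebius hc hw.le
  rw [hw, one_pow, sub_self, mul_zero, zero_div, sub_eq_zero] at h
  exact (pow_eq_one_iff_of_nonneg (norm_nonneg _) two_ne_zero).1 h.symm

lemma sq_norm_sub_mul_conj_sub_sq_norm_sub_mul (hσ : ‖σ‖ = 1) :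
    ‖σ - d * conj c‖ ^ 2 - ‖d - σ * c‖ ^ 2 = (1 - ‖c‖ ^ 2) * (1 - ‖d‖ ^ 2) := by
  have hσ2 : ‖σ‖ ^ 2 = 1 := by rw [hσ, one_pow]
  simp only [Complex.sq_norm, Complex.normSq_apply, Complex.sub_re, Complex.sub_im,
    Complex.mul_re, Complex.mul_im, Complex.conj_re, Complex.conj_im] at hσ2 ⊢
  linear_combination (1 - (c.re * c.re + c.im * c.im)) * hσ2

/-- With `α = σ - d * conj c` and `β = d - σ * c`, the numerator of the composition is `α w + β` and
its denominator is `σ (conj β w + conj α)`. -/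
lemma exists_moebius_mul_moebius (hc : ‖c‖ < 1) (hd : ‖d‖ < 1) (hσ : ‖σ‖ = 1) :
    ∃ τ e : ℂ, ‖τ‖ = 1 ∧ ‖e‖ < 1 ∧
      ∀ w, ‖w‖ < 1 → moebius (-d) (σ * moebius c w) = τ * moebius e w := by
  have hσ0 : σ ≠ 0 := by rintro rfl; simp at hσ
  set α := σ - d * conj c with hα
  set β := d - σ * c with hβ
  have hsq : ‖α‖ ^ 2 - ‖β‖ ^ 2 = (1 - ‖c‖ ^ 2) * (1 - ‖d‖ ^ 2) :=
    sq_norm_sub_mul_conj_sub_sq_norm_sub_mul hσ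
  have hβα : ‖β‖ < ‖α‖ := by
    have := mul_pos (one_sub_sq_norm_pos hc) (one_sub_sq_norm_pos hd)
    exact lt_of_pow_lt_pow_left₀ 2 (norm_nonneg α) (by linarith)
  have hα0 : α ≠ 0 := norm_pos_iff.1 ((norm_nonneg β).trans_lt hβα)
  have he : ‖-β / α‖ < 1 := by rwa [norm_div, norm_neg, div_lt_one (norm_pos_iff.2 hα0)]
  refine ⟨α / (σ * conj α), -β / α, by simp [hσ, hα0], he, fun w hw => ?_⟩
  have hσσ : conj σ * σ = 1 := by simp [← Complex.normSq_eq_conj_mul_self, ← Complex.sq_norm, hσ]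
  have hα0' : conj α ≠ 0 := by simpa using hα0
  have hcw := one_sub_conj_mul_ne_zero hc hw.le
  have hew : conj α + conj β * w ≠ 0 := by
    have := mul_ne_zero hα0' (one_sub_conj_mul_ne_zero he hw.le)
    rw [map_div₀, map_neg] at this
    convert this using 1
    field
  have hden : 1 - conj (-d) * (σ * moebius c w) ≠ 0 :=
    one_sub_conj_mul_ne_zero (by simpa using hd)
      (by simpa [hσ] using (norm_moebius_lt_one hc hw).le)
  have hrhs : α / (σ * conj α) * moebius (-β / α) w =
      (α * w + β) / (σ * (conj α + conj β * w)) := by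
    rw [moebius, map_div₀, map_neg, show 1 - -conj β / conj α * w =
      (conj α + conj β * w) / conj α by field]
    field
  have hm : moebius c w * (1 - conj c * w) = w - c := div_mul_cancel₀ _ hcw
  rw [hrhs, moebius, div_eq_div_iff hden (mul_ne_zero hσ0 hew), ← mul_left_inj' hcw]
  simp only [hα, hβ, map_sub, map_mul, Complex.conj_conj, map_neg]
  linear_combination
    (σ * (σ * (conj σ - conj d * c + (conj d - conj σ * conj c) * w)) -
      ((σ - d * conj c) * w + (d - σ * c)) * conj d * σ) * hm +
    ((σ - d * conj c) * w + (d - σ * c)) * (1 - conj c * w) * hσσ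

lemma moebius_neg_moebius (hc : ‖c‖ < 1) (hw : ‖w‖ < 1) : moebius (-c) (moebius c w) = w := by
  have h1 := one_sub_conj_mul_ne_zero hc hw.le
  have h3 : 1 - conj (-c) * moebius c w ≠ 0 :=
    one_sub_conj_mul_ne_zero (by simpa using hc) (norm_moebius_lt_one hc hw).le
  rw [moebius, div_eq_iff h3]
  simp only [moebius, map_neg]
  have h1' : 1 - w * conj c ≠ 0 := by rwa [mul_comm]
  field_simp
  ring

lemma hasDerivAt_moebius (hc : ‖c‖ < 1) (hw : ‖w‖ ≤ 1) :
    HasDerivAt (moebius c) ((1 - ‖c‖ ^ 2 : ℝ) / (1 - conj c * w) ^ 2) w := by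
  have hnum : HasDerivAt (fun w => w - c) 1 w := (hasDerivAt_id w).sub_const c
  have hden : HasDerivAt (fun w => 1 - conj c * w) (-conj c) w := by
    simpa using ((hasDerivAt_id w).const_mul (conj c)).const_sub 1
  refine (hnum.div hden (one_sub_conj_mul_ne_zero hc hw)).congr_deriv ?_
  congr 1
  rw [Complex.sq_norm, Complex.ofReal_sub, Complex.ofReal_one, Complex.normSq_eq_conj_mul_self]
  ring

lemma norm_deriv_moebius (hc : ‖c‖ < 1) (hw : ‖w‖ < 1) :
    ‖deriv (moebius c) w‖ = (1 - ‖moebius c w‖ ^ 2) / (1 - ‖w‖ ^ 2) := by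
  rw [(hasDerivAt_moebius hc hw.le).deriv, one_sub_sq_norm_moebius hc hw.le, norm_div, norm_pow,
    Complex.norm_real, Real.norm_of_nonneg (one_sub_sq_norm_pos hc).le]
  field [(one_sub_sq_norm_pos hw).ne']

lemma differentiableOn_moebius (hc : ‖c‖ < 1) : DifferentiableOn ℂ (moebius c) 𝔻 := fun _ hw =>
  (hasDerivAt_moebius hc (mem_ball_zero_iff.1 hw).le).differentiableAt.differentiableWithinAt

lemma mapsTo_moebius (hc : ‖c‖ < 1) : Set.MapsTo (moebius c) 𝔻 𝔻 := fun _ hw =>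
  mem_ball_zero_iff.2 (norm_moebius_lt_one hc (mem_ball_zero_iff.1 hw))

lemma one_sub_sq_norm_moebius_ge (hc : ‖c‖ < 1) (hw : ‖w‖ < 1) :
    (1 - ‖c‖ ^ 2) / 4 * (1 - ‖w‖ ^ 2) ≤ 1 - ‖moebius c w‖ ^ 2 := by
  have hpos := norm_pos_iff.2 (one_sub_conj_mul_ne_zero hc hw.le)
  have htwo : ‖1 - conj c * w‖ ^ 2 ≤ 2 ^ 2 := by
    gcongr
    calc ‖1 - conj c * w‖ ≤ ‖(1 : ℂ)‖ + ‖conj c * w‖ := norm_sub_le _ _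
      _ ≤ 1 + 1 * 1 := by
        rw [norm_one, norm_mul, Complex.norm_conj]
        gcongr
      _ = 2 := by norm_num
  have := mul_nonneg (one_sub_sq_norm_pos hc).le (one_sub_sq_norm_pos hw).le
  rw [one_sub_sq_norm_moebius hc hw.le, div_mul_eq_mul_div]
  exact div_le_div_of_nonneg_left this (by positivity) (htwo.trans (by norm_num))

end Moebius

/-- The density `‖h'‖ / (1 - ‖h‖²)` of the pullback under `h` of the hyperbolic metric of the unit
disk, normalised to have curvature `-4`. -/
noncomputable def hypDensity (h : ℂ → ℂ) (z : ℂ) : ℝ := ‖deriv h z‖ / (1 - ‖h z‖ ^ 2)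

lemma hypDensity_comp {h k : ℂ → ℂ} {z : ℂ} (hh : DifferentiableAt ℂ h (k z))
    (hk : DifferentiableAt ℂ k z) :
    hypDensity (h ∘ k) z = hypDensity h (k z) * ‖deriv k z‖ := by
  rw [hypDensity, hypDensity, deriv_comp z hh hk, norm_mul, div_mul_eq_mul_div, Function.comp_apply]

lemma hypDensity_moebius_comp {h : ℂ → ℂ} {c z : ℂ} (hc : ‖c‖ < 1)
    (hd : DifferentiableAt ℂ h z) (hz : ‖h z‖ < 1) :
    hypDensity (moebius c ∘ h) z = hypDensity h z := by
  have := one_sub_sq_norm_pos (norm_moebius_lt_one hc hz)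
  have := one_sub_sq_norm_pos hz
  rw [hypDensity_comp (hasDerivAt_moebius hc hz.le).differentiableAt hd, hypDensity, hypDensity,
    norm_deriv_moebius hc hz]
  field

/-- **Schwarz–Pick lemma.** -/
theorem hypDensity_le_one_div {h : ℂ → ℂ} (hd : DifferentiableOn ℂ h 𝔻) (hm : Set.MapsTo h 𝔻 𝔻)
    {z : ℂ} (hz : z ∈ 𝔻) : hypDensity h z ≤ 1 / (1 - ‖z‖ ^ 2) := by
  have hz1 : ‖z‖ < 1 := mem_ball_zero_iff.1 hz
  have hz1' : ‖-z‖ < 1 := by rwa [norm_neg]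
  have hhz : ‖h z‖ < 1 := mem_ball_zero_iff.1 (hm hz)
  have hk := (hasDerivAt_moebius hz1' (w := 0) (by simp)).differentiableAt
  have hk0 : moebius (-z) 0 = z := by simp
  have hhk : DifferentiableAt ℂ h (moebius (-z) 0) :=
    hd.differentiableAt (isOpen_ball.mem_nhds (by rwa [hk0]))
  set g : ℂ → ℂ := moebius (h z) ∘ h ∘ moebius (-z) with hg
  have hg0 : g 0 = 0 := by simp [hg]
  have hgm : Set.MapsTo g 𝔻 𝔻 := (mapsTo_moebius hhz).comp (hm.comp (mapsTo_moebius hz1'))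
  have hgd : DifferentiableOn ℂ g 𝔻 := (differentiableOn_moebius hhz).comp
    (hd.comp (differentiableOn_moebius hz1') (mapsTo_moebius hz1')) (hm.comp (mapsTo_moebius hz1'))
  have hschwarz : ‖deriv g 0‖ ≤ 1 :=
    Complex.norm_deriv_le_one_of_mapsTo_ball hgd
      (by rw [hg0]; exact hgm.mono_right ball_subset_closedBall) one_pos
  have hdens : hypDensity g 0 = hypDensity h z * (1 - ‖z‖ ^ 2) := by
    rw [hg, hypDensity_moebius_comp hhz (hhk.comp 0 hk) (by simpa using hhz),
      hypDensity_comp hhk hk, norm_deriv_moebius hz1' (by simp)]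
    simp
  rw [le_div_iff₀ (one_sub_sq_norm_pos hz1), ← hdens]
  simpa [hypDensity, hg0] using hschwarz

lemma HasLeviAt.log_one_sub_sq_norm {g : ℂ → ℂ} {z : ℂ} (hg : AnalyticAt ℂ g z)
    (h1 : ‖g z‖ < 1) :
    HasLeviAt (fun w => Real.log (1 - ‖g w‖ ^ 2)) z (-hypDensity g z ^ 2) := by
  set T : ℂ → ℂ := moebius (g z) ∘ g with hT
  have hden : AnalyticAt ℂ (fun w => 1 - conj (g z) * g w) z := by fun_prop
  have hden0 : 1 - conj (g z) * g z ≠ 0 := one_sub_conj_mul_ne_zero h1 h1.le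
  have hTa : AnalyticAt ℂ T z := (hg.sub analyticAt_const).div hden hden0
  have hTz : T z = 0 := moebius_self _
  have hTd : ‖deriv T z‖ = hypDensity g z := by
    rw [← hypDensity_moebius_comp h1 hg.differentiableAt h1, ← hT, hypDensity, hTz]
    simp
  have hlevi := ((log_one_sub_sq_norm_of_eq_zero hTa hTz).sub
    (const (Real.log (1 - ‖g z‖ ^ 2)) z)).add ((log_norm hden hden0).const_mul 2)
  rw [hTd, sub_zero, mul_zero, add_zero] at hlevi
  refine hlevi.congr ?_
  filter_upwards [hg.continuousAt.norm.eventually_lt_const h1] with w hw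
  have := one_sub_sq_norm_pos h1
  have := one_sub_sq_norm_pos hw
  have := norm_pos_iff.2 (one_sub_conj_mul_ne_zero h1 hw.le)
  rw [hT, Function.comp_apply, one_sub_sq_norm_moebius h1 hw.le,
    Real.log_div (by positivity) (by positivity), Real.log_mul (by positivity) (by positivity),
    Real.log_pow]
  push_cast
  ring

/-- A holomorphic self-map of the open unit disk. -/
structure IsSelfMap (h : ℂ → ℂ) : Prop where
  differentiableOn : DifferentiableOn ℂ h 𝔻
  mapsTo : Set.MapsTo h 𝔻 𝔻

namespace IsSelfMap

variable {h k : ℂ → ℂ} {c τ z : ℂ}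

lemma norm_lt_one (hh : IsSelfMap h) (hz : z ∈ 𝔻) : ‖h z‖ < 1 := mem_ball_zero_iff.1 (hh.mapsTo hz)

lemma one_sub_sq_norm_pos (hh : IsSelfMap h) (hz : z ∈ 𝔻) : 0 < 1 - ‖h z‖ ^ 2 :=
  _root_.one_sub_sq_norm_pos (hh.norm_lt_one hz)

lemma analyticAt (hh : IsSelfMap h) (hz : z ∈ 𝔻) : AnalyticAt ℂ h z :=
  hh.differentiableOn.analyticAt (isOpen_ball.mem_nhds hz)

lemma differentiableAt (hh : IsSelfMap h) (hz : z ∈ 𝔻) : DifferentiableAt ℂ h z :=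
  (hh.analyticAt hz).differentiableAt

lemma comp (hh : IsSelfMap h) (hk : IsSelfMap k) : IsSelfMap (h ∘ k) :=
  ⟨hh.differentiableOn.comp hk.differentiableOn hk.mapsTo, hh.mapsTo.comp hk.mapsTo⟩

protected lemma moebius (hc : ‖c‖ < 1) : IsSelfMap (moebius c) :=
  ⟨differentiableOn_moebius hc, mapsTo_moebius hc⟩

lemma const_mul (hh : IsSelfMap h) (hτ : ‖τ‖ ≤ 1) : IsSelfMap (fun w => τ * h w) :=
  ⟨hh.differentiableOn.const_mul τ, fun w hw => by
    rw [mem_ball_zero_iff, norm_mul]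
    exact mul_lt_one_of_nonneg_of_lt_one_right hτ (norm_nonneg _) (hh.norm_lt_one hw)⟩

end IsSelfMap

/-- The quotient of the densities of the pullbacks under `f` and `B` of the hyperbolic metric, when
`deriv f = q * deriv B`. Writing it through `q` gives it the right value at critical points
of `B`. -/
noncomputable def densityRatio (q B f : ℂ → ℂ) (z : ℂ) : ℝ :=
  ‖q z‖ * (1 - ‖B z‖ ^ 2) / (1 - ‖f z‖ ^ 2)

section DensityRatio

variable {B f q : ℂ → ℂ} {z : ℂ}

lemma densityRatio_nonneg (hB : IsSelfMap B) (hf : IsSelfMap f) (hz : z ∈ 𝔻) :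
    0 ≤ densityRatio q B f z := by
  have := hB.one_sub_sq_norm_pos hz
  have := hf.one_sub_sq_norm_pos hz
  unfold densityRatio
  positivity

lemma continuousOn_densityRatio (hB : IsSelfMap B) (hf : IsSelfMap f) (hq : ContinuousOn q 𝔻) :
    ContinuousOn (densityRatio q B f) 𝔻 :=
  (hq.norm.mul (continuousOn_const.sub (hB.differentiableOn.continuousOn.norm.pow 2))).div
    (continuousOn_const.sub (hf.differentiableOn.continuousOn.norm.pow 2))
    fun _ hz => (hf.one_sub_sq_norm_pos hz).ne'

lemma hypDensity_eq_densityRatio_mul (hB : IsSelfMap B) (hz : z ∈ 𝔻)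
    (hfq : deriv f z = q z * deriv B z) :
    hypDensity f z = densityRatio q B f z * hypDensity B z := by
  have := hB.one_sub_sq_norm_pos hz
  rw [hypDensity, hypDensity, densityRatio, hfq, norm_mul]
  field

lemma hasLeviAt_log_densityRatio (hB : IsSelfMap B) (hf : IsSelfMap f)
    (hq : AnalyticAt ℂ q z) (hz : z ∈ 𝔻) (hqz : q z ≠ 0) :
    HasLeviAt (fun w => Real.log (densityRatio q B f w)) z
      (hypDensity f z ^ 2 - hypDensity B z ^ 2) := by
  have hlevi := ((HasLeviAt.log_norm hq hqz).add (HasLeviAt.log_one_sub_sq_norm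
    (hB.analyticAt hz) (hB.norm_lt_one hz))).sub
    (HasLeviAt.log_one_sub_sq_norm (hf.analyticAt hz) (hf.norm_lt_one hz))
  rw [zero_add, neg_sub_neg] at hlevi
  refine hlevi.congr ?_
  filter_upwards [isOpen_ball.mem_nhds hz, hq.continuousAt.eventually_ne hqz] with w hw hqw
  have := hB.one_sub_sq_norm_pos hw
  have := hf.one_sub_sq_norm_pos hw
  have := norm_pos_iff.2 hqw
  rw [densityRatio, Real.log_div (by positivity) (by positivity),
    Real.log_mul (by positivity) (by positivity)]

lemma hasLeviAt_sq_inv_norm_sub_norm (hz : z ≠ 0) :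
    HasLeviAt (fun w => (‖w‖⁻¹ - ‖w‖) ^ 2) z ((‖z‖⁻¹ ^ 2) ^ 2 + 1) := by
  have hlevi := ((HasLeviAt.sq_norm (analyticAt_inv (𝕜 := ℂ) hz)).add
    (HasLeviAt.sq_norm analyticAt_id)).sub (HasLeviAt.const 2 z)
  rw [deriv_inv, deriv_id, norm_one, norm_neg, norm_inv, norm_pow, ← inv_pow, one_pow,
    sub_zero] at hlevi
  refine hlevi.congr ?_
  filter_upwards [eventually_ne_nhds hz] with w hw
  have := norm_pos_iff.2 hw
  rw [norm_inv, id]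
  field

lemma sq_mul_one_sub_sq_le_of_log_pos {b E ε t : ℝ} (ht : 0 < t) (hb0 : 0 ≤ b * (1 - t ^ 2))
    (hb : b * (1 - t ^ 2) ≤ 1) (hE : 0 < E) (hε : 0 < ε)
    (hlog : 0 < Real.log E + ε * (t⁻¹ - t) ^ 2) :
    b ^ 2 * (1 - E ^ 2) ≤ ε * ((t⁻¹ ^ 2) ^ 2 + 1) := by
  have hE2 : 1 - E ^ 2 ≤ 2 * ε * (t⁻¹ - t) ^ 2 := by
    have := Real.log_le_sub_one_of_pos (pow_pos hE 2)
    rw [Real.log_pow] at this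
    push_cast at this
    linarith
  calc b ^ 2 * (1 - E ^ 2) ≤ b ^ 2 * (2 * ε * (t⁻¹ - t) ^ 2) := by gcongr
    _ = 2 * ε * t⁻¹ ^ 2 * (b * (1 - t ^ 2)) ^ 2 := by field
    _ ≤ 2 * ε * t⁻¹ ^ 2 * 1 ^ 2 := by gcongr
    _ ≤ ε * ((t⁻¹ ^ 2) ^ 2 + 1) := by nlinarith [mul_nonneg hε.le (sq_nonneg (t⁻¹ ^ 2 - 1))]

/-- With `E` the ratio and `b` the density of `B`, the Levi form is `ε (‖z‖⁻⁴ + 1) - (1 - E²) b²`.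
Here `1 - E² ≤ -2 log E < 2 ε (‖z‖⁻¹ - ‖z‖)²`, and `b (1 - ‖z‖²) ≤ 1` by Schwarz–Pick. -/
lemma exists_hasLeviAt_log_densityRatio_mul_exp (hB : IsSelfMap B) (hf : IsSelfMap f)
    (hq : DifferentiableOn ℂ q 𝔻) (hz : z ∈ 𝔻) (hz0 : z ≠ 0) (hfq : deriv f z = q z * deriv B z)
    {ε : ℝ} (hε : 0 < ε)
    (h1 : 1 < densityRatio q B f z * Real.exp (ε * (‖z‖⁻¹ - ‖z‖) ^ 2)) :
    ∃ L, 0 ≤ L ∧ HasLeviAt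
      (fun w => Real.log (densityRatio q B f w * Real.exp (ε * (‖w‖⁻¹ - ‖w‖) ^ 2))) z L := by
  set E := densityRatio q B f z with hE
  have hE0 : 0 < E := by
    by_contra! h
    linarith [mul_nonpos_of_nonpos_of_nonneg h (Real.exp_pos (ε * (‖z‖⁻¹ - ‖z‖) ^ 2)).le]
  have hlog : 0 < Real.log E + ε * (‖z‖⁻¹ - ‖z‖) ^ 2 := by
    rw [← Real.log_exp (ε * _), ← Real.log_mul hE0.ne' (Real.exp_ne_zero _)]
    exact Real.log_pos h1
  have hqz : q z ≠ 0 := fun h => hE0.ne' (by simp [hE, densityRatio, h])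
  have hlevi := (hasLeviAt_log_densityRatio hB hf (hq.analyticAt (isOpen_ball.mem_nhds hz)) hz
    hqz).add ((hasLeviAt_sq_inv_norm_sub_norm hz0).const_mul ε)
  refine ⟨_, ?_, hlevi.congr ?_⟩
  · have hz1 := one_sub_sq_norm_pos (mem_ball_zero_iff.1 hz)
    have hpick : hypDensity B z * (1 - ‖z‖ ^ 2) ≤ 1 :=
      (le_div_iff₀ hz1).1 (hypDensity_le_one_div hB.differentiableOn hB.mapsTo hz)
    have hnonneg : 0 ≤ hypDensity B z * (1 - ‖z‖ ^ 2) :=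
      mul_nonneg (div_nonneg (norm_nonneg _) (hB.one_sub_sq_norm_pos hz).le) hz1.le
    have := sq_mul_one_sub_sq_le_of_log_pos (norm_pos_iff.2 hz0) hnonneg hpick hE0 hε hlog
    rw [hypDensity_eq_densityRatio_mul hB hz hfq]
    linarith
  · have hcont := (continuousOn_densityRatio hB hf hq.continuousOn).continuousAt
      (isOpen_ball.mem_nhds hz)
    filter_upwards [hcont.eventually_ne hE0.ne'] with w hEw
    rw [Real.log_mul hEw (Real.exp_ne_zero _), Real.log_exp]

lemma sq_inv_sub_le_sq_inv_sub {s t : ℝ} (hs : 0 < s) (hst : s ≤ t) (ht : t ≤ 1) :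
    (t⁻¹ - t) ^ 2 ≤ (s⁻¹ - s) ^ 2 := by
  have h1 : 1 ≤ t⁻¹ := (one_le_inv₀ (hs.trans_le hst)).2 ht
  have h2 : t⁻¹ ≤ s⁻¹ := inv_anti₀ hs hst
  exact pow_le_pow_left₀ (by linarith) (by linarith) 2

lemma exists_lt_one_forall_exp_mul_le {c : ℝ} (hc : 1 < c) (ε : ℝ) :
    ∃ R < 1, ∀ t, R < t → t ≤ 1 → Real.exp (ε * (t⁻¹ - t) ^ 2) ≤ c := by
  have hcont : ContinuousAt (fun t : ℝ => Real.exp (ε * (t⁻¹ - t) ^ 2)) 1 := by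
    fun_prop (disch := simp)
  have hlt : ∀ᶠ t in 𝓝[<] (1 : ℝ), Real.exp (ε * (t⁻¹ - t) ^ 2) < c :=
    (hcont.tendsto.mono_left nhdsWithin_le_nhds).eventually_lt_const (by simpa using hc)
  obtain ⟨R, hR1, hR⟩ := mem_nhdsLT_iff_exists_Ioo_subset.1 hlt
  refine ⟨R, hR1, fun t hRt ht1 => ?_⟩
  rcases ht1.lt_or_eq with ht1 | rfl
  · exact (hR ⟨hRt, ht1⟩).le
  · simpa using hc.le

lemma densityRatio_mul_exp_le_one (hB : IsSelfMap B) (hf : IsSelfMap f)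
    (hq : DifferentiableOn ℂ q 𝔻) (hfq : ∀ z ∈ 𝔻, deriv f z = q z * deriv B z)
    (hE : ∀ z ∈ 𝔻, densityRatio q B f z ≤ 1) {ε r s : ℝ} (hε : 0 < ε) (hs : 0 < s) (hsr : s < r)
    (hE0 : ∀ z ∈ ball 0 r, densityRatio q B f z ≤ Real.exp (-(ε * (s⁻¹ - s) ^ 2)))
    (hsz : s < ‖z‖) (hz : z ∈ 𝔻) :
    densityRatio q B f z * Real.exp (ε * (‖z‖⁻¹ - ‖z‖) ^ 2) ≤ 1 := by
  have hU : IsOpen {w : ℂ | s < ‖w‖ ∧ w ∈ 𝔻} :=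
    (isOpen_lt continuous_const continuous_norm).inter isOpen_ball
  have hw0 : ∀ w : ℂ, s < ‖w‖ → w ≠ 0 := fun w hw => norm_pos_iff.1 (hs.trans hw)
  refine le_one_of_levi_nonneg
    (Φ := fun w => densityRatio q B f w * Real.exp (ε * (‖w‖⁻¹ - ‖w‖) ^ 2)) hU
    (isBounded_ball.subset fun w hw => hw.2) ?_ ?_ ?_ ⟨hsz, hz⟩
  · refine ((continuousOn_densityRatio hB hf hq.continuousOn).mono fun w hw => hw.2).mul ?_
    exact Real.continuous_exp.comp_continuousOn (continuousOn_const.mul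
      (((continuousOn_id.norm.inv₀ fun w hw => (norm_pos_iff.2 (hw0 w hw.1)).ne').sub
        continuousOn_id.norm).pow 2))
  · intro c hc
    obtain ⟨R, hR1, hR⟩ := exists_lt_one_forall_exp_mul_le hc ε
    refine ⟨closedBall 0 R \ ball 0 r, ?_, (isCompact_closedBall 0 R).diff isOpen_ball, ?_⟩
    · rintro w ⟨hwR, hwr⟩
      rw [mem_closedBall_zero_iff] at hwR
      rw [mem_ball_zero_iff, not_lt] at hwr
      exact ⟨hsr.trans_le hwr, mem_ball_zero_iff.2 (hwR.trans_lt hR1)⟩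
    · rintro w ⟨⟨hsw, hw⟩, hwK⟩
      have hw1 := (mem_ball_zero_iff.1 hw).le
      rw [Set.mem_sdiff, not_and, not_not, mem_closedBall_zero_iff] at hwK
      rcases le_or_gt ‖w‖ R with hwR | hwR
      · calc densityRatio q B f w * Real.exp (ε * (‖w‖⁻¹ - ‖w‖) ^ 2)
            ≤ Real.exp (-(ε * (s⁻¹ - s) ^ 2)) * Real.exp (ε * (s⁻¹ - s) ^ 2) :=
              mul_le_mul (hE0 w (hwK hwR)) (Real.exp_le_exp.2 (mul_le_mul_of_nonneg_left
                (sq_inv_sub_le_sq_inv_sub hs hsw.le hw1) hε.le)) (Real.exp_pos _).le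
                (Real.exp_pos _).le
          _ ≤ c := by rw [← Real.exp_add, neg_add_cancel, Real.exp_zero]; exact hc.le
      · exact (mul_le_of_le_one_left (Real.exp_pos _).le (hE w hw)).trans (hR _ hwR hw1)
  · intro w hw h1
    obtain ⟨L, hL, hlevi⟩ := exists_hasLeviAt_log_densityRatio_mul_exp hB hf hq hw.2 (hw0 w hw.1)
      (hfq w hw.2) hε h1
    exact ⟨_, L, hL, hlevi, .of_forall fun _ => le_rfl, rfl⟩

lemma exists_densityRatio_le_exp_of_zero_lt_one (hB : IsSelfMap B) (hf : IsSelfMap f)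
    (hq : DifferentiableOn ℂ q 𝔻) (hfq : ∀ z ∈ 𝔻, deriv f z = q z * deriv B z)
    (hE : ∀ z ∈ 𝔻, densityRatio q B f z ≤ 1) (h0 : densityRatio q B f 0 < 1) :
    ∃ ε > 0, ∀ z ∈ 𝔻, densityRatio q B f z ≤ Real.exp (-(ε * (1 - ‖z‖) ^ 2)) := by
  have h0D : (0 : ℂ) ∈ 𝔻 := mem_ball_self one_pos
  obtain ⟨t, ht, ht1⟩ := exists_between h0
  have ht0 : 0 < t := (densityRatio_nonneg hB hf h0D).trans_lt ht
  have hcont := (continuousOn_densityRatio hB hf hq.continuousOn).continuousAt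
    (isOpen_ball.mem_nhds h0D)
  obtain ⟨δ, hδ, hball⟩ := Metric.eventually_nhds_iff_ball.1 (hcont.eventually_lt_const ht)
  set r := min δ 1
  have hr0 : 0 < r := lt_min hδ one_pos
  have hr1 : r ≤ 1 := min_le_right _ _
  set v := ((r / 2)⁻¹ - r / 2) ^ 2
  have hv1 : 1 ≤ v := by
    have : 2 ≤ (r / 2)⁻¹ := (le_inv_comm₀ two_pos (half_pos hr0)).2 (by linarith)
    exact one_le_pow₀ (by linarith)
  have hv0 : 0 < v := one_pos.trans_le hv1
  have hlog : 0 < -Real.log t := neg_pos.2 (Real.log_neg ht0 ht1)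
  have hE0 : ∀ z ∈ ball 0 r, densityRatio q B f z ≤ Real.exp (-(-Real.log t / v * v)) :=
    fun z hz => by
      rw [div_mul_cancel₀ _ hv0.ne', neg_neg, Real.exp_log ht0]
      exact (hball z (ball_subset_ball (min_le_left _ _) hz)).le
  refine ⟨-Real.log t / v, by positivity, fun z hz => ?_⟩
  have hz1 := mem_ball_zero_iff.1 hz
  rcases le_or_gt ‖z‖ (r / 2) with hzr | hzr
  · refine (hE0 z (mem_ball_zero_iff.2 (by linarith))).trans ?_
    gcongr
    nlinarith [norm_nonneg z]
  · have h := densityRatio_mul_exp_le_one hB hf hq hfq hE (div_pos hlog hv0) (half_pos hr0)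
      (half_lt_self hr0) hE0 hzr hz
    rw [← le_div_iff₀ (Real.exp_pos _), one_div, ← Real.exp_neg] at h
    refine h.trans ?_
    have : 1 ≤ ‖z‖⁻¹ := (one_le_inv₀ ((half_pos hr0).trans hzr)).2 hz1.le
    gcongr

theorem exists_densityRatio_le_exp (hB : IsSelfMap B) (hf : IsSelfMap f)
    (hq : DifferentiableOn ℂ q 𝔻) (hfq : ∀ z ∈ 𝔻, deriv f z = q z * deriv B z)
    (hE : ∀ z ∈ 𝔻, densityRatio q B f z ≤ 1) {a : ℂ} (ha : a ∈ 𝔻)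
    (hEa : densityRatio q B f a < 1) :
    ∃ ε > 0, ∀ z ∈ 𝔻, densityRatio q B f z ≤ Real.exp (-(ε * (1 - ‖z‖) ^ 2)) := by
  have ha1 := mem_ball_zero_iff.1 ha
  have ha1' : ‖-a‖ < 1 := by rwa [norm_neg]
  have hm := IsSelfMap.moebius ha1'
  obtain ⟨ε, hε, h⟩ := exists_densityRatio_le_exp_of_zero_lt_one (hB.comp hm) (hf.comp hm)
    (q := q ∘ moebius (-a)) (hq.comp hm.differentiableOn hm.mapsTo)
    (fun z hz => by
      have hmz := hm.mapsTo hz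
      rw [deriv_comp z (hf.differentiableAt hmz) (hm.differentiableAt hz),
        deriv_comp z (hB.differentiableAt hmz) (hm.differentiableAt hz), hfq _ hmz, mul_assoc,
        Function.comp_apply])
    (fun z hz => hE _ (hm.mapsTo hz)) (by simpa [densityRatio] using hEa)
  have hκ := one_sub_sq_norm_pos ha1
  refine ⟨ε * ((1 - ‖a‖ ^ 2) / 8) ^ 2, by positivity, fun z hz => ?_⟩
  have hz1 := mem_ball_zero_iff.1 hz
  have hEz := h _ (mapsTo_moebius ha1 hz)
  simp only [densityRatio, Function.comp_apply, moebius_neg_moebius ha1 hz1] at hEz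
  refine hEz.trans (Real.exp_le_exp.2 (neg_le_neg ?_))
  have hge : (1 - ‖a‖ ^ 2) / 8 * (1 - ‖z‖) ≤ 1 - ‖moebius a z‖ := by
    have := one_sub_sq_norm_moebius_ge ha1 hz1
    have := norm_moebius_lt_one ha1 hz1
    nlinarith [norm_nonneg z, norm_nonneg (moebius a z)]
  rw [mul_assoc, ← mul_pow]
  gcongr

theorem densityRatio_eq_one_of_tendsto {ι : Type*} {l : Filter ι} [l.NeBot] (hB : IsSelfMap B)
    (hf : IsSelfMap f) (hq : DifferentiableOn ℂ q 𝔻)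
    (hfq : ∀ z ∈ 𝔻, deriv f z = q z * deriv B z) (hE : ∀ z ∈ 𝔻, densityRatio q B f z ≤ 1)
    {z : ι → ℂ} (hz : ∀ i, z i ∈ 𝔻)
    (hlim : Tendsto (fun i => (densityRatio q B f (z i) - 1) / (1 - ‖z i‖) ^ 2) l (𝓝 0)) :
    ∀ w ∈ 𝔻, densityRatio q B f w = 1 := by
  by_contra! ⟨a, ha, hEa⟩
  obtain ⟨ε, hε, h⟩ := exists_densityRatio_le_exp hB hf hq hfq hE ha ((hE a ha).lt_of_ne hEa)
  have hgt : ∀ᶠ i in l, -(ε / (1 + ε)) < (densityRatio q B f (z i) - 1) / (1 - ‖z i‖) ^ 2 :=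
    hlim.eventually_const_lt (by rw [neg_lt_zero]; positivity)
  obtain ⟨i, hi⟩ := hgt.exists
  have hz1 := mem_ball_zero_iff.1 (hz i)
  set t := (1 - ‖z i‖) ^ 2
  have ht : 0 < t := pow_pos (sub_pos.2 hz1) 2
  have ht1 : t ≤ 1 := pow_le_one₀ (sub_nonneg.2 hz1.le) (by linarith [norm_nonneg (z i)])
  have hle : densityRatio q B f (z i) ≤ 1 / (1 + ε * t) := by
    refine (h _ (hz i)).trans ?_
    rw [Real.exp_neg, ← one_div]
    exact one_div_le_one_div_of_le (by positivity) (by linarith [Real.add_one_le_exp (ε * t)])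
  refine hi.not_ge ?_
  calc (densityRatio q B f (z i) - 1) / t ≤ (1 / (1 + ε * t) - 1) / t := by gcongr
    _ = -(ε / (1 + ε * t)) := by field_simp; ring
    _ ≤ -(ε / (1 + ε)) := by
      gcongr
      exact mul_le_of_le_one_right hε.le ht1

lemma densityRatio_eq_one_of_eq_one (hB : IsSelfMap B) (hf : IsSelfMap f)
    (hq : DifferentiableOn ℂ q 𝔻) (hfq : ∀ z ∈ 𝔻, deriv f z = q z * deriv B z)
    (hE : ∀ z ∈ 𝔻, densityRatio q B f z ≤ 1) {a : ℂ} (ha : a ∈ 𝔻)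
    (hEa : densityRatio q B f a = 1) : ∀ w ∈ 𝔻, densityRatio q B f w = 1 :=
  densityRatio_eq_one_of_tendsto (l := pure ()) (z := fun _ => a) hB hf hq hfq hE (fun _ => ha)
    (by simp [hEa])

end DensityRatio

lemma exists_analyticOnNhd_eq_mul {𝕜 : Type*} [NontriviallyNormedField 𝕜] [CompleteSpace 𝕜]
    {U : Set 𝕜} {u v : 𝕜 → 𝕜} (hu : AnalyticOnNhd 𝕜 u U) (hv : AnalyticOnNhd 𝕜 v U)
    (hv0 : ∀ z ∈ U, analyticOrderAt v z ≠ ⊤)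
    (hord : ∀ z ∈ U, analyticOrderAt v z ≤ analyticOrderAt u z) :
    ∃ q, AnalyticOnNhd 𝕜 q U ∧ ∀ z ∈ U, u z = q z * v z := by
  have hm : MeromorphicOn (u / v) U := fun z hz =>
    (hu z hz).meromorphicAt.div (hv z hz).meromorphicAt
  have hq : AnalyticOnNhd 𝕜 (toMeromorphicNFOn (u / v) U) U := fun z hz => by
    have hnf := meromorphicNFOn_toMeromorphicNFOn (u / v) U hz
    rw [← hnf.meromorphicOrderAt_nonneg_iff_analyticAt,
      meromorphicOrderAt_toMeromorphicNFOn hm hz,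
      meromorphicOrderAt_div (hu z hz).meromorphicAt (hv z hz).meromorphicAt,
      (hu z hz).meromorphicOrderAt_eq, (hv z hz).meromorphicOrderAt_eq]
    have h0 := hv0 z hz
    have hle := hord z hz
    generalize analyticOrderAt v z = n at h0 hle
    generalize analyticOrderAt u z = m at hle
    lift n to ℕ using h0
    induction m with
    | top => simp
    | coe m =>
      norm_cast at hle
      exact WithTop.coe_le_coe.2 (sub_nonneg.2 (Int.ofNat_le.2 hle))
  refine ⟨_, hq, fun z hz => ?_⟩
  have hvz : ∀ᶠ w in 𝓝[≠] z, v w ≠ 0 :=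
    (hv z hz).eventually_eq_zero_or_eventually_ne_zero.resolve_left
      (mt analyticOrderAt_eq_top.2 (hv0 z hz))
  have heq : u =ᶠ[𝓝[≠] z] toMeromorphicNFOn (u / v) U * v := by
    filter_upwards [hvz, hm.toMeromorphicNFOn_eq_self_on_nhdsNE hz] with w hvw hqw
    rw [Pi.mul_apply, hqw, Pi.div_apply, div_mul_cancel₀ _ hvw]
  exact (((hu z hz).continuousAt.eventuallyEq_nhds_iff_eventuallyEq_nhdsNE
    ((hq z hz).mul (hv z hz)).continuousAt).1 heq).self_of_nhds

lemma analyticOrderAt_le_of_eventuallyEq_mul {𝕜 : Type*} [NontriviallyNormedField 𝕜]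
    {u v q : 𝕜 → 𝕜} {z : 𝕜} (hv : AnalyticAt 𝕜 v z) (hq : AnalyticAt 𝕜 q z)
    (h : u =ᶠ[𝓝 z] q * v) : analyticOrderAt v z ≤ analyticOrderAt u z := by
  rw [analyticOrderAt_congr h, analyticOrderAt_mul hq hv]
  exact le_add_self

lemma vOrder_eq_analyticOrderAt {g : ℂ → ℂ} {z : ℂ} (hg : AnalyticAt ℂ g z) :
    vOrder g z = analyticOrderAt g z := by
  refine ENat.eq_of_forall_natCast_le_iff fun n => ?_
  rw [natCast_le_analyticOrderAt_iff_iteratedDeriv_eq_zero hg, vOrder, le_sInf_iff]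
  constructor
  · intro h i hi
    by_contra hne
    have : n ≤ i := by exact_mod_cast h i ⟨i, hne, rfl⟩
    omega
  · rintro h _ ⟨i, hi, rfl⟩
    by_contra! hlt
    exact hi (h i (by exact_mod_cast hlt))

lemma isPreconnected_unitDisc : IsPreconnected 𝔻 := (convex_ball 0 1).isPreconnected

section Nonconstant

variable {U : Set ℂ} {h : ℂ → ℂ} {z : ℂ}

lemma norm_lt_one_of_exists_ne (hU : IsOpen U) (hc : IsPreconnected U)
    (hd : DifferentiableOn ℂ h U) (hle : ∀ z ∈ U, ‖h z‖ ≤ 1)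
    (hne : ∃ z ∈ U, ∃ w ∈ U, h z ≠ h w) (hz : z ∈ U) : ‖h z‖ < 1 := by
  by_contra! hge
  have hmax : IsMaxOn (norm ∘ h) U z := fun w hw => (hle w hw).trans hge
  have hconst := Complex.eqOn_of_isPreconnected_of_isMaxOn_norm hc hU hd hz hmax
  obtain ⟨x, hx, y, hy, hxy⟩ := hne
  exact hxy ((hconst hx).trans (hconst hy).symm)

lemma exists_ne_iff_exists_deriv_ne_zero (hU : IsOpen U) (hc : IsPreconnected U)
    (hd : DifferentiableOn ℂ h U) :
    (∃ z ∈ U, ∃ w ∈ U, h z ≠ h w) ↔ ∃ z ∈ U, deriv h z ≠ 0 := by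
  constructor
  · contrapose!
    exact fun hderiv z hz w hw => hU.is_const_of_deriv_eq_zero hc hd hderiv hz hw
  · contrapose!
    intro hconst z hz
    have heq : h =ᶠ[𝓝 z] fun _ => h z := by
      filter_upwards [hU.mem_nhds hz] with w hw using hconst w hw z hz
    rw [heq.deriv_eq, deriv_const]

lemma analyticOrderAt_ne_top_of_exists_ne_zero (hU : IsOpen U) (hc : IsPreconnected U)
    (hd : DifferentiableOn ℂ h U) (hne : ∃ z ∈ U, h z ≠ 0) (hz : z ∈ U) :
    analyticOrderAt h z ≠ ⊤ := by
  obtain ⟨x, hx, hx0⟩ := hne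
  refine (hd.analyticOnNhd hU).analyticOrderAt_ne_top_of_isPreconnected hc hx hz ?_
  rw [analyticOrderAt_eq_zero.2 (Or.inr hx0)]
  exact ENat.zero_ne_top

lemma eventually_ne_zero_of_exists_ne_zero (hU : IsOpen U) (hc : IsPreconnected U)
    (hd : DifferentiableOn ℂ h U) (hne : ∃ z ∈ U, h z ≠ 0) (hz : z ∈ U) :
    ∀ᶠ w in 𝓝[≠] z, h w ≠ 0 :=
  (hd.analyticAt (hU.mem_nhds hz)).eventually_eq_zero_or_eventually_ne_zero.resolve_left
    (mt analyticOrderAt_eq_top.2 (analyticOrderAt_ne_top_of_exists_ne_zero hU hc hd hne hz))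

end Nonconstant

/-- Maximality of a holomorphic self-map of the disk `F`, in terms of the quotient `q` of
derivatives instead of the critical set: no holomorphic self-map `h` with `deriv h = q * deriv F`
and `q` holomorphic has a larger hyperbolic derivative. Unlike `IsMaximalBlaschke`, this does not
require `F` to be a Blaschke product. -/
structure IsDensityMaximal (F : ℂ → ℂ) : Prop extends IsSelfMap F where
  exists_deriv_ne_zero : ∃ z ∈ 𝔻, deriv F z ≠ 0
  densityRatio_le_one : ∀ h q : ℂ → ℂ, IsSelfMap h → DifferentiableOn ℂ q 𝔻 →
    (∀ z ∈ 𝔻, deriv h z = q z * deriv F z) → ∀ z ∈ 𝔻, densityRatio q F h z ≤ 1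

section DensityMaximality

variable {B F f q : ℂ → ℂ} {z : ℂ}

lemma IsSelfMap.of_norm_le_one (hd : DifferentiableOn ℂ f 𝔻) (hle : ∀ z ∈ 𝔻, ‖f z‖ ≤ 1)
    (hne : ∃ z ∈ 𝔻, ∃ w ∈ 𝔻, f z ≠ f w) : IsSelfMap f :=
  ⟨hd, fun _ hz => mem_ball_zero_iff.2
    (norm_lt_one_of_exists_ne isOpen_ball isPreconnected_unitDisc hd hle hne hz)⟩

lemma IsSelfMap.differentiableOn_deriv (hf : IsSelfMap f) : DifferentiableOn ℂ (deriv f) 𝔻 :=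
  hf.differentiableOn.deriv isOpen_ball

lemma IsSelfMap.analyticAt_deriv (hf : IsSelfMap f) (hz : z ∈ 𝔻) : AnalyticAt ℂ (deriv f) z :=
  (hf.analyticAt hz).deriv

lemma densityRatio_le_one_iff (hf : IsSelfMap f) (hz : z ∈ 𝔻) (hBz : deriv B z ≠ 0)
    (hfq : deriv f z = q z * deriv B z) :
    densityRatio q B f z ≤ 1 ↔
      ‖deriv f z‖ * (1 - ‖B z‖ ^ 2) ≤ ‖deriv B z‖ * (1 - ‖f z‖ ^ 2) := by
  rw [densityRatio, div_le_one (hf.one_sub_sq_norm_pos hz), hfq, norm_mul,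
    mul_comm ‖q z‖ ‖deriv B z‖, mul_assoc, mul_le_mul_iff_right₀ (norm_pos_iff.2 hBz)]

lemma IsMaximalBlaschke.isDensityMaximal (hB : IsMaximalBlaschke B) (hBD : IsSelfMap B)
    (hB0 : ∃ z ∈ 𝔻, deriv B z ≠ 0) : IsDensityMaximal B := by
  refine ⟨hBD, hB0, fun h q hh hq hhq z hz => ?_⟩
  have hle : ∀ z ∈ 𝔻, ‖deriv h z‖ * (1 - ‖B z‖ ^ 2) ≤ ‖deriv B z‖ * (1 - ‖h z‖ ^ 2) := by
    by_cases hne : ∃ z ∈ 𝔻, ∃ w ∈ 𝔻, h z ≠ h w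
    · refine hB.2 h (fun z hz => hh.differentiableAt hz) (fun z hz => (hh.norm_lt_one hz).le) hne
        fun z hz => ?_
      rw [vOrder_eq_analyticOrderAt (hBD.analyticAt_deriv hz),
        vOrder_eq_analyticOrderAt (hh.analyticAt_deriv hz)]
      exact analyticOrderAt_le_of_eventuallyEq_mul (hBD.analyticAt_deriv hz)
        (hq.analyticAt (isOpen_ball.mem_nhds hz)) (eventually_of_mem (isOpen_ball.mem_nhds hz) hhq)
    · rw [exists_ne_iff_exists_deriv_ne_zero isOpen_ball isPreconnected_unitDisc
        hh.differentiableOn] at hne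
      push Not at hne
      intro z hz
      rw [hne z hz, norm_zero, zero_mul]
      exact mul_nonneg (norm_nonneg _) (hh.one_sub_sq_norm_pos hz).le
  have hcont : Tendsto (densityRatio q B h) (𝓝[≠] z) (𝓝 (densityRatio q B h z)) :=
    ((continuousOn_densityRatio hBD hh hq.continuousOn).continuousAt
      (isOpen_ball.mem_nhds hz)).tendsto.mono_left nhdsWithin_le_nhds
  refine le_of_tendsto hcont ?_
  filter_upwards [eventually_ne_zero_of_exists_ne_zero isOpen_ball isPreconnected_unitDisc
    hBD.differentiableOn_deriv hB0 hz, nhdsWithin_le_nhds (isOpen_ball.mem_nhds hz)] with w hw hwD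
  exact (densityRatio_le_one_iff hh hwD hw (hhq w hwD)).2 (hle w hwD)

namespace IsDensityMaximal

lemma exists_deriv_eq_mul (hF : IsDensityMaximal F) (hf : IsSelfMap f)
    (hord : ∀ z ∈ 𝔻, vOrder (deriv F) z ≤ vOrder (deriv f) z) :
    ∃ q, DifferentiableOn ℂ q 𝔻 ∧ ∀ z ∈ 𝔻, deriv f z = q z * deriv F z := by
  obtain ⟨q, hq, hfq⟩ := exists_analyticOnNhd_eq_mul (fun z hz => hf.analyticAt_deriv hz)
    (fun z hz => hF.analyticAt_deriv hz)
    (fun z hz => analyticOrderAt_ne_top_of_exists_ne_zero isOpen_ball isPreconnected_unitDisc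
      hF.differentiableOn_deriv hF.exists_deriv_ne_zero hz)
    (fun z hz => by
      rw [← vOrder_eq_analyticOrderAt (hF.analyticAt_deriv hz),
        ← vOrder_eq_analyticOrderAt (hf.analyticAt_deriv hz)]
      exact hord z hz)
  exact ⟨q, hq.differentiableOn, hfq⟩

lemma isMaximalBlaschke (hF : IsDensityMaximal F) (hb : IsBlaschkeProduct F) :
    IsMaximalBlaschke F := by
  refine ⟨hb, fun f hf hle hne hord z hz => ?_⟩
  have hfD := IsSelfMap.of_norm_le_one (fun z hz => (hf z hz).differentiableWithinAt) hle hne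
  obtain ⟨q, hq, hfq⟩ := hF.exists_deriv_eq_mul hfD hord
  by_cases hFz : deriv F z = 0
  · rw [hfq z hz, hFz, mul_zero, norm_zero, zero_mul, zero_mul]
  · exact (densityRatio_le_one_iff hfD hz hFz (hfq z hz)).1
      (hF.densityRatio_le_one f q hfD hq hfq z hz)

lemma congr (hF : IsDensityMaximal F) (heq : Set.EqOn f F 𝔻) : IsDensityMaximal f := by
  have hderiv : Set.EqOn (deriv f) (deriv F) 𝔻 := fun z hz =>
    (heq.eventuallyEq_of_mem (isOpen_ball.mem_nhds hz)).deriv_eq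
  obtain ⟨x, hx, hx0⟩ := hF.exists_deriv_ne_zero
  refine ⟨⟨hF.differentiableOn.congr heq, hF.mapsTo.congr heq.symm⟩,
    ⟨x, hx, by rwa [hderiv hx]⟩, fun h q hh hq hhq z hz => ?_⟩
  have h1 := hF.densityRatio_le_one h q hh hq (fun w hw => by rw [hhq w hw, hderiv hw]) z hz
  rwa [densityRatio, heq hz]

lemma moebius_comp (hB : IsDensityMaximal B) {τ c : ℂ} (hτ : ‖τ‖ = 1) (hc : ‖c‖ < 1) :
    IsDensityMaximal (fun z => τ * moebius c (B z)) := by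
  have hm := IsSelfMap.moebius hc
  have hderiv : ∀ z ∈ 𝔻, deriv (fun z => τ * moebius c (B z)) z =
      τ * deriv (moebius c) (B z) * deriv B z := fun z hz => by
    rw [deriv_const_mul_field, ← Function.comp_def, deriv_comp z
      (hm.differentiableAt (hB.mapsTo hz)) (hB.differentiableAt hz), mul_assoc]
  have hnorm : ∀ z ∈ 𝔻, ‖τ * deriv (moebius c) (B z)‖ * (1 - ‖B z‖ ^ 2) =
      1 - ‖moebius c (B z)‖ ^ 2 := fun z hz => by
    rw [norm_mul, hτ, one_mul, norm_deriv_moebius hc (hB.norm_lt_one hz),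
      div_mul_cancel₀ _ (hB.one_sub_sq_norm_pos hz).ne']
  obtain ⟨x, hx, hx0⟩ := hB.exists_deriv_ne_zero
  refine ⟨(hm.comp hB.toIsSelfMap).const_mul hτ.le, ⟨x, hx, ?_⟩, fun h q hh hq hhq z hz => ?_⟩
  · rw [hderiv x hx]
    refine mul_ne_zero (norm_ne_zero_iff.1 fun h0 => ?_) hx0
    refine ((hm.comp hB.toIsSelfMap).one_sub_sq_norm_pos hx).ne' ?_
    rw [Function.comp_apply, ← hnorm x hx, h0, zero_mul]
  · have h1 := hB.densityRatio_le_one h (fun z => q z * (τ * deriv (moebius c) (B z))) hh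
      (hq.mul ((hm.differentiableOn_deriv.comp hB.differentiableOn hB.mapsTo).const_mul τ))
      (fun z hz => by rw [hhq z hz, hderiv z hz, ← mul_assoc]) z hz
    rw [densityRatio, norm_mul, mul_assoc, hnorm z hz] at h1
    rwa [densityRatio, norm_mul τ, hτ, one_mul]

end IsDensityMaximal

end DensityMaximality

lemma deriv_moebius_self {c : ℂ} (hc : ‖c‖ < 1) :
    deriv (moebius c) c = ((1 - ‖c‖ ^ 2 : ℝ) : ℂ)⁻¹ := by
  have := Complex.ofReal_ne_zero.2 (one_sub_sq_norm_pos hc).ne'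
  rw [(hasDerivAt_moebius hc hc.le).deriv, Complex.conj_mul', ← Complex.ofReal_pow,
    ← Complex.ofReal_one, ← Complex.ofReal_sub]
  field

lemma exists_mul_moebius_eq_and_mul_deriv_eq {a b κ : ℂ} (ha : ‖a‖ < 1) (hb : ‖b‖ < 1)
    (hκ : ‖κ‖ = (1 - ‖b‖ ^ 2) / (1 - ‖a‖ ^ 2)) :
    ∃ τ c : ℂ, ‖τ‖ = 1 ∧ ‖c‖ < 1 ∧ τ * moebius c a = b ∧ τ * deriv (moebius c) a = κ := by
  have ha1 := one_sub_sq_norm_pos ha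
  have hb1 := one_sub_sq_norm_pos hb
  have hb' : ‖-b‖ < 1 := by rwa [norm_neg]
  set σ : ℂ := κ * ((1 - ‖a‖ ^ 2 : ℝ) / (1 - ‖b‖ ^ 2 : ℝ)) with hσ
  have hσ1 : ‖σ‖ = 1 := by
    rw [hσ, norm_mul, hκ, norm_div, Complex.norm_of_nonneg ha1.le, Complex.norm_of_nonneg hb1.le]
    field
  obtain ⟨τ, c, hτ, hc, hτc⟩ := exists_moebius_mul_moebius ha hb hσ1
  refine ⟨τ, c, hτ, hc, by simp [← hτc a ha], ?_⟩
  have hinner : HasDerivAt (fun w => σ * moebius a w) (σ * deriv (moebius a) a) a :=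
    (hasDerivAt_moebius ha ha.le).differentiableAt.hasDerivAt.const_mul σ
  have hzero : σ * moebius a a = 0 := by rw [moebius_self, mul_zero]
  have houter := hasDerivAt_moebius (w := σ * moebius a a) hb' (by simp)
  have hcomp : HasDerivAt (fun w => τ * moebius c w) _ a :=
    (houter.comp a hinner).congr_of_eventuallyEq <| by
      filter_upwards [isOpen_ball.mem_nhds (mem_ball_zero_iff.2 ha)] with w hw
      exact (hτc w (mem_ball_zero_iff.1 hw)).symm
  rw [← deriv_const_mul_field, hcomp.deriv, hzero, deriv_moebius_self ha, hσ, norm_neg]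
  have := Complex.ofReal_ne_zero.2 ha1.ne'
  have := Complex.ofReal_ne_zero.2 hb1.ne'
  field

namespace IsDensityMaximal

variable {B f g p q : ℂ → ℂ}

/-- The mean `(g + B) / 2` has density ratio at least `1` by convexity, hence equal to `1` once it
is so at `x`; equality in the convexity estimate then forces `g = B`. -/
lemma eqOn_of_densityRatio_eq_one (hB : IsDensityMaximal B) (hg : IsSelfMap g)
    (hp : DifferentiableOn ℂ p 𝔻) (hgp : ∀ z ∈ 𝔻, deriv g z = p z * deriv B z)
    (hE : ∀ z ∈ 𝔻, densityRatio p B g z = 1) {x : ℂ} (hx : x ∈ 𝔻) (hgx : g x = B x)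
    (hpx : p x = 1) : Set.EqOn g B 𝔻 := by
  set h : ℂ → ℂ := fun z => (g z + B z) / 2 with hh
  have hD : IsSelfMap h := by
    refine ⟨(hg.differentiableOn.add hB.differentiableOn).div_const 2, fun z hz => ?_⟩
    rw [mem_ball_zero_iff, hh, norm_div, Complex.norm_two]
    linarith [norm_add_le (g z) (B z), hg.norm_lt_one hz, hB.norm_lt_one hz]
  have hder : ∀ z ∈ 𝔻, deriv h z = (p z + 1) / 2 * deriv B z := fun z hz => by
    rw [deriv_div_const, deriv_fun_add (hg.differentiableAt hz) (hB.differentiableAt hz), hgp z hz]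
    ring
  have hq : DifferentiableOn ℂ (fun z => (p z + 1) / 2) 𝔻 := (hp.add_const 1).div_const 2
  have hEh := densityRatio_eq_one_of_eq_one hB.toIsSelfMap hD hq hder
    (hB.densityRatio_le_one h _ hD hq hder) hx <| by
      have hhx : h x = B x := by simp [hh, hgx]
      have := hB.one_sub_sq_norm_pos hx
      rw [densityRatio, hhx, hpx, add_self_div_two, norm_one, one_mul, div_self this.ne']
  intro z hz
  have hEgz := hE z hz
  have hEhz := hEh z hz
  rw [densityRatio, div_eq_one_iff_eq (hg.one_sub_sq_norm_pos hz).ne'] at hEgz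
  rw [densityRatio, div_eq_one_iff_eq (hD.one_sub_sq_norm_pos hz).ne'] at hEhz
  have hmean : ‖(p z + 1) / 2‖ ≤ (‖p z‖ + 1) / 2 := by
    rw [norm_div, Complex.norm_two]
    gcongr
    exact (norm_add_le _ _).trans_eq (by rw [norm_one])
  have hconv := mul_le_mul_of_nonneg_right hmean (hB.one_sub_sq_norm_pos hz).le
  have hnorm : ‖h z‖ = ‖g z + B z‖ / 2 := by rw [hh, norm_div, Complex.norm_two]
  rw [hEhz, hnorm] at hconv
  have hpar := parallelogram_law_with_norm ℝ (g z) (B z)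
  have hsq : ‖g z - B z‖ ^ 2 ≤ 0 := by linarith
  exact sub_eq_zero.1 (norm_eq_zero.1 (sq_eq_zero_iff.1 (hsq.antisymm (sq_nonneg _))))

theorem eqOn_mul_moebius_of_densityRatio_eq_one (hB : IsDensityMaximal B) (hf : IsSelfMap f)
    (hq : DifferentiableOn ℂ q 𝔻) (hfq : ∀ z ∈ 𝔻, deriv f z = q z * deriv B z)
    (hE : ∀ z ∈ 𝔻, densityRatio q B f z = 1) :
    ∃ τ c : ℂ, ‖τ‖ = 1 ∧ ‖c‖ < 1 ∧ Set.EqOn f (fun z => τ * moebius c (B z)) 𝔻 := by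
  have hx : (0 : ℂ) ∈ 𝔻 := mem_ball_self one_pos
  have hf1 := fun {z} (hz : z ∈ 𝔻) => hf.one_sub_sq_norm_pos hz
  have hE' : ∀ z ∈ 𝔻, ‖q z‖ * (1 - ‖B z‖ ^ 2) = 1 - ‖f z‖ ^ 2 := fun z hz =>
    (div_eq_one_iff_eq (hf1 hz).ne').1 (hE z hz)
  have hq0 : q 0 ≠ 0 := fun h0 => (hf1 hx).ne' (by rw [← hE' 0 hx, h0, norm_zero, zero_mul])
  obtain ⟨σ, d, hσ, hd, hval, hder⟩ := exists_mul_moebius_eq_and_mul_deriv_eq (κ := (q 0)⁻¹)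
    (hf.norm_lt_one hx) (hB.norm_lt_one hx) (by
      rw [← hE' 0 hx, norm_inv]
      have := norm_pos_iff.2 hq0
      have := hB.one_sub_sq_norm_pos hx
      field)
  have hm := IsSelfMap.moebius hd
  have hp : DifferentiableOn ℂ (fun z => σ * deriv (moebius d) (f z) * q z) 𝔻 :=
    ((hm.differentiableOn_deriv.comp hf.differentiableOn hf.mapsTo).const_mul σ).mul hq
  have heq : Set.EqOn (fun z => σ * moebius d (f z)) B 𝔻 := by
    refine hB.eqOn_of_densityRatio_eq_one ((hm.comp hf).const_mul hσ.le) hp (fun z hz => ?_)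
      (fun z hz => ?_) hx hval (by rw [hder, inv_mul_cancel₀ hq0])
    · rw [deriv_const_mul_field, ← Function.comp_def, deriv_comp z
        (hm.differentiableAt (hf.mapsTo hz)) (hf.differentiableAt hz), hfq z hz]
      ring
    · have := hf1 hz
      have := (hm.comp hf).one_sub_sq_norm_pos hz
      rw [Function.comp_apply] at this
      rw [densityRatio, norm_mul, mul_assoc, hE' z hz, norm_mul, norm_mul, hσ, one_mul, one_mul,
        norm_deriv_moebius hd (hf.norm_lt_one hz)]
      field
  have hσ0 : σ ≠ 0 := norm_ne_zero_iff.1 (hσ ▸ one_ne_zero)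
  obtain ⟨τ, c, hτ, hc, hτc⟩ := exists_moebius_mul_moebius (c := 0) (d := d) (σ := σ⁻¹)
    (by simp) hd (by rw [norm_inv, hσ, inv_one])
  refine ⟨τ, c, hτ, hc, fun z hz => ?_⟩
  have hBz : B z = σ * moebius d (f z) := (heq hz).symm
  simp only [← hτc (B z) (hB.norm_lt_one hz)]
  simp [hBz, hσ0, moebius_neg_moebius hd (hf.norm_lt_one hz)]

end IsDensityMaximal

section NormalFamilies

variable {ι : Type*} {U : Set ℂ} {h : ι → ℂ → ℂ}

lemma tendstoLocallyUniformlyOn_of_eventually_dist_le {X E : Type*} [PseudoMetricSpace X]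
    [PseudoMetricSpace E] {l : Filter ι} [l.NeBot] {F : ι → X → E} {f : X → E} {V : Set X}
    (hlim : ∀ x ∈ V, Tendsto (F · x) l (𝓝 (f x)))
    (hlip : ∀ x ∈ V, ∃ r > 0, ∃ L > 0,
      ∀ᶠ i in l, ∀ y ∈ ball x r, dist (F i y) (F i x) ≤ L * dist y x) :
    TendstoLocallyUniformlyOn F f l V := by
  rw [Metric.tendstoLocallyUniformlyOn_iff]
  intro ε hε x hx
  obtain ⟨r, hr, L, hL, hlipx⟩ := hlip x hx
  set s := min r (ε / 4 / L)
  have hs : 0 < s := by positivity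
  have hF : ∀ᶠ i in l, ∀ y ∈ ball x s, dist (F i y) (F i x) ≤ ε / 4 := by
    filter_upwards [hlipx] with i hi y hy
    calc dist (F i y) (F i x) ≤ L * dist y x :=
          hi y (ball_subset_ball (min_le_left _ _) hy)
      _ ≤ L * (ε / 4 / L) := by
          gcongr
          exact (mem_ball.1 hy).le.trans (min_le_right _ _)
      _ = ε / 4 := by field
  have hf : ∀ y ∈ ball x s ∩ V, dist (f y) (f x) ≤ ε / 4 := fun y hy =>
    le_of_tendsto ((hlim y hy.2).dist (hlim x hx)) (hF.mono fun i hi => hi y hy.1)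
  refine ⟨ball x s ∩ V, by
    rw [Set.inter_comm]; exact inter_mem_nhdsWithin _ (ball_mem_nhds x hs), ?_⟩
  filter_upwards [hF, Metric.tendsto_nhds.1 (hlim x hx) (ε / 4) (by positivity)] with i hi hix y hy
  have htri := dist_triangle4 (f y) (f x) (F i x) (F i y)
  rw [dist_comm (f x), dist_comm (F i x) (F i y)] at htri
  linarith [hi y hy.1, hf y hy]

/-- **Montel's theorem**, with subsequences replaced by an ultrafilter. -/
theorem exists_tendstoLocallyUniformlyOn_of_eventually_norm_le (l : Ultrafilter ι)
    (hh : ∀ z ∈ U, ∃ r > 0, ∃ C, ∀ᶠ i in (l : Filter ι),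
      DifferentiableOn ℂ (h i) (ball z r) ∧ ∀ w ∈ ball z r, ‖h i w‖ ≤ C) :
    ∃ g, TendstoLocallyUniformlyOn h g l U := by
  have hlim : ∀ z ∈ U, ∃ y, Tendsto (h · z) l (𝓝 y) := by
    intro z hz
    obtain ⟨r, hr, C, hC⟩ := hh z hz
    obtain ⟨y, -, hy⟩ := (isCompact_closedBall (0 : ℂ) C).ultrafilter_le_nhds (l.map (h · z))
      (le_principal_iff.2 (hC.mono fun i hi => by simpa using hi.2 z (mem_ball_self hr)))
    exact ⟨y, hy⟩
  choose! g hg using hlim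
  refine ⟨g, tendstoLocallyUniformlyOn_of_eventually_dist_le hg fun z hz => ?_⟩
  obtain ⟨r, hr, C, hC⟩ := hh z hz
  refine ⟨r, hr, 2 * max C 1 / r, by positivity, ?_⟩
  filter_upwards [hC] with i hi y hy
  refine Complex.dist_le_div_mul_dist_of_mapsTo_ball hi.1 (fun w hw => ?_) hy
  rw [mem_closedBall, dist_eq_norm]
  have := norm_sub_le (h i w) (h i z)
  linarith [hi.2 w hw, hi.2 z (mem_ball_self hr), le_max_left C 1]

end NormalFamilies

/-- The factor `(|a| / a) (a - z) / (1 - conj a z)` of a Blaschke product, normalised to be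
positive at the origin. -/
noncomputable def blaschkeFactor (a z : ℂ) : ℂ :=
  ((‖a‖ : ℝ) : ℂ) / a * ((a - z) / (1 - conj a * z))

section BlaschkeFactor

variable {a z : ℂ}

lemma blaschkeFactor_eq (a : ℂ) :
    blaschkeFactor a = fun z => -(((‖a‖ : ℝ) : ℂ) / a) * moebius a z := by
  ext z
  rw [blaschkeFactor, moebius, ← neg_sub z a]
  ring

lemma norm_blaschkeFactor (ha : a ≠ 0) (z : ℂ) : ‖blaschkeFactor a z‖ = ‖moebius a z‖ := by
  simp [blaschkeFactor_eq, ha]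

lemma norm_blaschkeFactor_zero_right (ha : a ≠ 0) : ‖blaschkeFactor a 0‖ = ‖a‖ := by
  simp [norm_blaschkeFactor ha]

lemma norm_blaschkeFactor_le_one (ha : a ≠ 0) (ha1 : ‖a‖ < 1) (hz : ‖z‖ < 1) :
    ‖blaschkeFactor a z‖ ≤ 1 := by
  rw [norm_blaschkeFactor ha]
  exact (norm_moebius_lt_one ha1 hz).le

lemma norm_blaschkeFactor_of_norm_eq_one (ha : a ≠ 0) (ha1 : ‖a‖ < 1) (hz : ‖z‖ = 1) :
    ‖blaschkeFactor a z‖ = 1 := by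
  rw [norm_blaschkeFactor ha, norm_moebius_of_norm_eq_one ha1 hz]

lemma differentiableAt_blaschkeFactor (ha1 : ‖a‖ < 1) (hz : ‖z‖ ≤ 1) :
    DifferentiableAt ℂ (blaschkeFactor a) z := by
  rw [blaschkeFactor_eq]
  exact (hasDerivAt_moebius ha1 hz).differentiableAt.const_mul _

lemma one_sub_norm_mul_norm_le (a z : ℂ) : 1 - ‖a‖ * ‖z‖ ≤ ‖1 - conj a * z‖ := by
  simpa using norm_sub_norm_le (1 : ℂ) (conj a * z)

lemma norm_blaschkeFactor_sub_one_le (ha : a ≠ 0) (ha1 : ‖a‖ < 1) (hz : ‖z‖ < 1) :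
    ‖blaschkeFactor a z - 1‖ ≤ 2 / (1 - ‖z‖) * (1 - ‖a‖) := by
  have hden := one_sub_conj_mul_ne_zero ha1 hz.le
  have hden' : 1 - z * conj a ≠ 0 := by rwa [mul_comm]
  have haa : conj a * a = ((‖a‖ : ℝ) : ℂ) ^ 2 := Complex.conj_mul' a
  have heq : blaschkeFactor a z - 1 =
      -(((1 - ‖a‖ : ℝ) : ℂ) * ((a + ‖a‖ * z) / a) / (1 - conj a * z)) := by
    rw [blaschkeFactor]
    push_cast
    field_simp
    linear_combination z * haa
  have hnum : ‖(a + ‖a‖ * z) / a‖ ≤ 2 := by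
    rw [norm_div, div_le_iff₀ (norm_pos_iff.2 ha)]
    refine (norm_add_le _ _).trans ?_
    rw [norm_mul, Complex.norm_real, norm_norm]
    nlinarith [norm_nonneg a]
  have : 0 < 1 - ‖z‖ := sub_pos.2 hz
  have ha' : 0 < 1 - ‖a‖ := sub_pos.2 ha1
  calc ‖blaschkeFactor a z - 1‖
      = (1 - ‖a‖) * ‖(a + ‖a‖ * z) / a‖ / ‖1 - conj a * z‖ := by
        rw [heq, norm_neg, norm_div, norm_mul, Complex.norm_real, Real.norm_of_nonneg ha'.le]
    _ ≤ (1 - ‖a‖) * 2 / (1 - ‖z‖) := by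
        gcongr
        nlinarith [one_sub_norm_mul_norm_le a z, norm_nonneg z]
    _ = 2 / (1 - ‖z‖) * (1 - ‖a‖) := by ring

end BlaschkeFactor

section BlaschkeProduct

variable {ι : Type*} {a : ι → ℂ} {z : ℂ}

lemma differentiableAt_prod_blaschkeFactor (ha1 : ∀ j, ‖a j‖ < 1) (s : Finset ι) (hz : ‖z‖ ≤ 1) :
    DifferentiableAt ℂ (fun w => ∏ j ∈ s, blaschkeFactor (a j) w) z :=
  DifferentiableAt.fun_finsetProd fun j _ => differentiableAt_blaschkeFactor (ha1 j) hz

lemma norm_prod_blaschkeFactor_of_norm_eq_one (ha : ∀ j, a j ≠ 0) (ha1 : ∀ j, ‖a j‖ < 1)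
    (s : Finset ι) (hz : ‖z‖ = 1) : ‖∏ j ∈ s, blaschkeFactor (a j) z‖ = 1 := by
  rw [norm_prod]
  exact Finset.prod_eq_one fun j _ => norm_blaschkeFactor_of_norm_eq_one (ha j) (ha1 j) hz

lemma norm_prod_blaschkeFactor_le_one (ha : ∀ j, a j ≠ 0) (ha1 : ∀ j, ‖a j‖ < 1)
    (s : Finset ι) (hz : ‖z‖ < 1) : ‖∏ j ∈ s, blaschkeFactor (a j) z‖ ≤ 1 := by
  rw [norm_prod]
  exact Finset.prod_le_one (fun j _ => norm_nonneg _)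
    fun j _ => norm_blaschkeFactor_le_one (ha j) (ha1 j) hz

lemma hasProdLocallyUniformlyOn_blaschkeFactor (ha : ∀ j, a j ≠ 0) (ha1 : ∀ j, ‖a j‖ < 1)
    (hs : Summable fun j => 1 - ‖a j‖) {r : ℝ} (hr : r < 1) :
    HasProdLocallyUniformlyOn (fun j => blaschkeFactor (a j))
      (fun z => ∏' j, blaschkeFactor (a j) z) (ball 0 r) := by
  have h := Summable.hasProdLocallyUniformlyOn_one_add (f := fun j z => blaschkeFactor (a j) z - 1)
    (K := ball 0 r) isOpen_ball (hs.mul_left (2 / (1 - r))) ?_ ?_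
  · simpa only [add_sub_cancel] using h
  · refine Eventually.of_forall fun j z hz => ?_
    have hzr : ‖z‖ < r := mem_ball_zero_iff.1 hz
    have : 0 < 1 - r := sub_pos.2 hr
    have : 0 < 1 - ‖a j‖ := sub_pos.2 (ha1 j)
    refine (norm_blaschkeFactor_sub_one_le (ha j) (ha1 j) (hzr.trans hr)).trans ?_
    gcongr
  · refine fun j z hz => ContinuousAt.continuousWithinAt (ContinuousAt.sub ?_ continuousAt_const)
    exact (differentiableAt_blaschkeFactor (ha1 j)
      ((mem_ball_zero_iff.1 hz).le.trans hr.le)).continuousAt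

lemma multipliable_blaschkeFactor (ha : ∀ j, a j ≠ 0) (ha1 : ∀ j, ‖a j‖ < 1)
    (hs : Summable fun j => 1 - ‖a j‖) (hz : ‖z‖ < 1) :
    Multipliable fun j => blaschkeFactor (a j) z := by
  obtain ⟨r, hzr, hr⟩ := exists_between hz
  exact ((hasProdLocallyUniformlyOn_blaschkeFactor ha ha1 hs hr).hasProd
    (mem_ball_zero_iff.2 hzr)).multipliable

lemma differentiableOn_tprod_blaschkeFactor (ha : ∀ j, a j ≠ 0) (ha1 : ∀ j, ‖a j‖ < 1)
    (hs : Summable fun j => 1 - ‖a j‖) :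
    DifferentiableOn ℂ (fun z => ∏' j, blaschkeFactor (a j) z) 𝔻 := by
  intro z hz
  obtain ⟨r, hzr, hr⟩ := exists_between (mem_ball_zero_iff.1 hz)
  refine DifferentiableAt.differentiableWithinAt (DifferentiableOn.differentiableAt ?_
    (isOpen_ball.mem_nhds (mem_ball_zero_iff.2 hzr)))
  refine (hasProdLocallyUniformlyOn_blaschkeFactor ha ha1 hs hr).differentiableOn
    (Eventually.of_forall fun s w hw => ?_) isOpen_ball
  exact (differentiableAt_prod_blaschkeFactor ha1 s
    ((mem_ball_zero_iff.1 hw).le.trans hr.le)).differentiableWithinAt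

lemma norm_tprod_blaschkeFactor_le_one (ha : ∀ j, a j ≠ 0) (ha1 : ∀ j, ‖a j‖ < 1)
    (hs : Summable fun j => 1 - ‖a j‖) (hz : ‖z‖ < 1) :
    ‖∏' j, blaschkeFactor (a j) z‖ ≤ 1 :=
  le_of_tendsto (Filter.Tendsto.norm (multipliable_blaschkeFactor ha ha1 hs hz).hasProd)
    (Eventually.of_forall fun s => norm_prod_blaschkeFactor_le_one ha ha1 s hz)

lemma one_sub_sum_one_sub_le_prod (s : Finset ι) {x : ι → ℝ} (h0 : ∀ j ∈ s, 0 ≤ x j)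
    (h1 : ∀ j ∈ s, x j ≤ 1) : 1 - ∑ j ∈ s, (1 - x j) ≤ ∏ j ∈ s, x j := by
  classical
  induction s using Finset.induction_on with
  | empty => simp
  | insert a s ha ih =>
    rw [Finset.forall_mem_insert] at h0 h1
    rw [Finset.sum_insert ha, Finset.prod_insert ha]
    have := Finset.prod_le_one h0.2 h1.2
    nlinarith [ih h0.2 h1.2]

lemma one_sub_tsum_le_norm_tprod_blaschkeFactor_zero (ha : ∀ j, a j ≠ 0) (ha1 : ∀ j, ‖a j‖ < 1)
    (hs : Summable fun j => 1 - ‖a j‖) :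
    1 - ∑' j, (1 - ‖a j‖) ≤ ‖∏' j, blaschkeFactor (a j) 0‖ := by
  refine ge_of_tendsto (Filter.Tendsto.norm
    (multipliable_blaschkeFactor ha ha1 hs (z := 0) (by simp)).hasProd)
    (Eventually.of_forall fun s => ?_)
  calc 1 - ∑' j, (1 - ‖a j‖) ≤ 1 - ∑ j ∈ s, (1 - ‖a j‖) :=
        sub_le_sub_left (hs.sum_le_tsum s fun j _ => sub_nonneg.2 (ha1 j).le) 1
    _ ≤ ∏ j ∈ s, ‖a j‖ :=
        one_sub_sum_one_sub_le_prod s (fun _ _ => norm_nonneg _) fun j _ => (ha1 j).le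
    _ = ‖∏ j ∈ s, blaschkeFactor (a j) 0‖ := by
        simp only [norm_prod, norm_blaschkeFactor_zero_right (ha _)]

end BlaschkeProduct

section CircleMean

lemma norm_le_circleAverage_norm {F : ℂ → ℂ} {c : ℂ} {R : ℝ}
    (hF : DiffContOnCl ℂ F (ball c |R|)) :
    ‖F c‖ ≤ Real.circleAverage (fun z => ‖F z‖) c R := by
  rw [← hF.circleAverage, Real.circleAverage_def, Real.circleAverage_def, norm_smul, smul_eq_mul,
    Real.norm_of_nonneg (by positivity)]
  gcongr
  exact intervalIntegral.norm_integral_le_integral_norm (by positivity)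

/-- The averages of `1 - |F|` over the circles `|z| = ρ` tend to `0` as `ρ → 1`. For `F` holomorphic
and bounded by one, this says that `F` has radial limits of modulus one almost everywhere, without
having to speak of radial limits. -/
def HasUnimodularMean (F : ℂ → ℂ) : Prop :=
  Tendsto (fun ρ => Real.circleAverage (fun z => 1 - ‖F z‖) 0 ρ) (𝓝[<] 1) (𝓝 0)

lemma sphere_subset_unitDisc {ρ : ℝ} (h0 : 0 ≤ ρ) (h1 : ρ < 1) : sphere (0 : ℂ) |ρ| ⊆ 𝔻 := by
  rw [abs_of_nonneg h0]
  exact sphere_subset_closedBall.trans (closedBall_subset_ball h1)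

lemma eventually_zero_lt_and_lt_one : ∀ᶠ ρ : ℝ in 𝓝[<] 1, 0 < ρ ∧ ρ < 1 :=
  Ioo_mem_nhdsLT one_pos

lemma HasUnimodularMean.of_continuousOn {F : ℂ → ℂ} (hF : ContinuousOn F (closedBall 0 1))
    (h1 : ∀ z, ‖z‖ = 1 → ‖F z‖ = 1) : HasUnimodularMean F := by
  have hset : {z : ℂ | ‖z - 0‖ ∈ Set.Icc (0 : ℝ) 1} = closedBall 0 1 := by ext; simp
  have hc : ContinuousOn (Real.circleAverage (fun z => 1 - ‖F z‖) 0) (Set.Icc 0 1) :=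
    Real.ContinuousOn.circleAverage (hset ▸ continuousOn_const.sub hF.norm) fun r hr => hr.1
  have h0 : Real.circleAverage (fun z => 1 - ‖F z‖) 0 1 = 0 :=
    Real.circleAverage_const_on_circle fun z hz => by simp [h1 z (by simpa using hz)]
  have hlim := hc 1 (Set.right_mem_Icc.2 zero_le_one)
  rw [ContinuousWithinAt, h0] at hlim
  refine hlim.mono_left (nhdsWithin_le_of_mem ?_)
  filter_upwards [eventually_zero_lt_and_lt_one] with ρ hρ using ⟨hρ.1.le, hρ.2.le⟩

section Holomorphic

variable {F G : ℂ → ℂ}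

lemma HasUnimodularMean.of_one_sub_norm_le (hF : HasUnimodularMean F) (hFc : ContinuousOn F 𝔻)
    (hGc : ContinuousOn G 𝔻) (hG : ∀ z ∈ 𝔻, ‖G z‖ ≤ 1) {C : ℝ}
    (hle : ∀ z ∈ 𝔻, 1 - ‖G z‖ ≤ C * (1 - ‖F z‖)) : HasUnimodularMean G := by
  refine squeeze_zero' (g := fun ρ => C * Real.circleAverage (fun z => 1 - ‖F z‖) 0 ρ) ?_ ?_
    (by simpa using Filter.Tendsto.const_mul C hF)
  all_goals
    filter_upwards [eventually_zero_lt_and_lt_one] with ρ hρ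
    have hsub := sphere_subset_unitDisc hρ.1.le hρ.2
  · exact Real.circleAverage_nonneg_of_nonneg fun z hz => sub_nonneg.2 (hG z (hsub hz))
  · rw [← smul_eq_mul, ← Real.circleAverage_fun_smul]
    refine Real.circleAverage_mono
      (ContinuousOn.circleIntegrable' (continuousOn_const.sub (hGc.mono hsub).norm))
      (ContinuousOn.circleIntegrable' ((continuousOn_const.sub (hFc.mono hsub).norm).const_smul C))
      fun z hz => hle z (hsub hz)

lemma circleAverage_one_sub_norm_mul_le (hFc : ContinuousOn F 𝔻) (hG : DifferentiableOn ℂ G 𝔻)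
    (hF1 : ∀ z ∈ 𝔻, ‖F z‖ ≤ 1) (hG1 : ∀ z ∈ 𝔻, ‖G z‖ ≤ 1) {ρ : ℝ} (h0 : 0 < ρ) (h1 : ρ < 1) :
    Real.circleAverage (fun z => 1 - ‖F z * G z‖) 0 ρ ≤
      Real.circleAverage (fun z => 1 - ‖F z‖) 0 ρ + (1 - ‖G 0‖) := by
  have hsub := sphere_subset_unitDisc h0.le h1
  have hFi := (hFc.mono hsub).norm
  have hGi := (hG.continuousOn.mono hsub).norm
  have hmean : ‖G 0‖ ≤ Real.circleAverage (fun z => ‖G z‖) 0 ρ := by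
    refine norm_le_circleAverage_norm (DifferentiableOn.diffContOnCl (hG.mono ?_))
    rw [abs_of_pos h0]
    exact closure_ball_subset_closedBall.trans (closedBall_subset_ball h1)
  calc Real.circleAverage (fun z => 1 - ‖F z * G z‖) 0 ρ
      ≤ Real.circleAverage (fun z => 1 - ‖F z‖ + (1 - ‖G z‖)) 0 ρ := by
        refine Real.circleAverage_mono (ContinuousOn.circleIntegrable' ?_)
          (ContinuousOn.circleIntegrable' (by fun_prop)) fun z hz => ?_
        · simp only [norm_mul]
          fun_prop
        · rw [norm_mul]
          nlinarith [hF1 z (hsub hz), hG1 z (hsub hz)]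
    _ = Real.circleAverage (fun z => 1 - ‖F z‖) 0 ρ +
          (1 - Real.circleAverage (fun z => ‖G z‖) 0 ρ) := by
        rw [Real.circleAverage_fun_add, Real.circleAverage_fun_sub (f₁ := fun _ => (1 : ℝ))
          (f₂ := fun z => ‖G z‖), Real.circleAverage_const]
        all_goals exact ContinuousOn.circleIntegrable' (by fun_prop)
    _ ≤ _ := by gcongr

lemma one_sub_norm_moebius_le {c w : ℂ} (hc : ‖c‖ < 1) (hw : ‖w‖ < 1) :
    1 - ‖moebius c w‖ ≤ 2 * (1 + ‖c‖) / (1 - ‖c‖) * (1 - ‖w‖) := by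
  have hc' : 0 < 1 - ‖c‖ := sub_pos.2 hc
  have hden : 1 - ‖c‖ ≤ ‖1 - conj c * w‖ := by
    nlinarith [one_sub_norm_mul_norm_le c w, norm_nonneg c]
  have := one_sub_sq_norm_pos hc
  have := one_sub_sq_norm_pos hw
  calc 1 - ‖moebius c w‖ ≤ 1 - ‖moebius c w‖ ^ 2 := by
        nlinarith [norm_nonneg (moebius c w), norm_moebius_lt_one hc hw]
    _ = (1 - ‖c‖ ^ 2) * (1 - ‖w‖ ^ 2) / ‖1 - conj c * w‖ ^ 2 := one_sub_sq_norm_moebius hc hw.le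
    _ ≤ (1 - ‖c‖ ^ 2) * (1 - ‖w‖ ^ 2) / (1 - ‖c‖) ^ 2 := by gcongr
    _ = (1 + ‖c‖) / (1 - ‖c‖) * (1 - ‖w‖ ^ 2) := by field
    _ ≤ (1 + ‖c‖) / (1 - ‖c‖) * (2 * (1 - ‖w‖)) := by gcongr; nlinarith [norm_nonneg w]
    _ = _ := by ring

lemma HasUnimodularMean.moebius_comp (hF : HasUnimodularMean F) (hFD : IsSelfMap F) {τ c : ℂ}
    (hτ : ‖τ‖ = 1) (hc : ‖c‖ < 1) : HasUnimodularMean (fun z => τ * moebius c (F z)) := by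
  have hself : IsSelfMap (fun z => τ * moebius c (F z)) :=
    ((IsSelfMap.moebius hc).comp hFD).const_mul hτ.le
  refine hF.of_one_sub_norm_le (C := 2 * (1 + ‖c‖) / (1 - ‖c‖)) hFD.differentiableOn.continuousOn
    hself.differentiableOn.continuousOn (fun z hz => (hself.norm_lt_one hz).le) fun z hz => ?_
  rw [norm_mul, hτ, one_mul]
  exact one_sub_norm_moebius_le hc (hFD.norm_lt_one hz)

lemma HasUnimodularMean.congr (hF : HasUnimodularMean F) (h : Set.EqOn F G 𝔻) :
    HasUnimodularMean G := by
  refine Tendsto.congr' ?_ hF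
  filter_upwards [eventually_zero_lt_and_lt_one] with ρ hρ
  exact Real.circleAverage_congr_sphere fun z hz => by
    simp only [h (sphere_subset_unitDisc hρ.1.le hρ.2 hz)]

end Holomorphic

end CircleMean

section BlaschkeMean

variable {ι : Type*} {a : ι → ℂ}

lemma tprod_blaschkeFactor_eq_prod_mul_tprod (ha : ∀ j, a j ≠ 0) (ha1 : ∀ j, ‖a j‖ < 1)
    (hs : Summable fun j => 1 - ‖a j‖) (A : Finset ι) (hz : ‖z‖ < 1) :
    ∏' j, blaschkeFactor (a j) z = (∏ j ∈ A, blaschkeFactor (a j) z) *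
      ∏' j : {j // j ∉ A}, blaschkeFactor (a j) z := by
  have hm : Multipliable fun j : ((A : Set ι)ᶜ : Set ι) => blaschkeFactor (a j) z :=
    multipliable_blaschkeFactor (a := fun j : ((A : Set ι)ᶜ : Set ι) => a j) (fun j => ha j)
      (fun j => ha1 j) (hs.subtype _) hz
  rw [← Finset.tprod_subtype' A fun j => blaschkeFactor (a j) z]
  exact (Multipliable.tprod_mul_tprod_compl (f := fun j => blaschkeFactor (a j) z)
    (s := (A : Set ι)) (A.finite_toSet.multipliable _) hm).symm

lemma exists_finset_mul_tprod_blaschkeFactor (ha : ∀ j, a j ≠ 0) (ha1 : ∀ j, ‖a j‖ < 1)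
    (hs : Summable fun j => 1 - ‖a j‖) {ε : ℝ} (hε : 0 < ε) :
    ∃ (A : Finset ι) (R : ℂ → ℂ), DifferentiableOn ℂ R 𝔻 ∧ (∀ z ∈ 𝔻, ‖R z‖ ≤ 1) ∧
      1 - ε ≤ ‖R 0‖ ∧
      ∀ z ∈ 𝔻, ∏' j, blaschkeFactor (a j) z = (∏ j ∈ A, blaschkeFactor (a j) z) * R z := by
  obtain ⟨A, hA⟩ := ((tendsto_tsum_compl_atTop_zero fun j => 1 - ‖a j‖).eventually
    (gt_mem_nhds hε)).exists
  have hsA : Summable fun j : {j // j ∉ A} => 1 - ‖a j‖ := hs.subtype _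
  refine ⟨A, fun z => ∏' j : {j // j ∉ A}, blaschkeFactor (a j) z,
    differentiableOn_tprod_blaschkeFactor (fun j => ha j) (fun j => ha1 j) hsA,
    fun z hz => norm_tprod_blaschkeFactor_le_one (fun j => ha j) (fun j => ha1 j) hsA
      (mem_ball_zero_iff.1 hz), ?_, fun z hz => tprod_blaschkeFactor_eq_prod_mul_tprod ha ha1 hs A
        (mem_ball_zero_iff.1 hz)⟩
  have := one_sub_tsum_le_norm_tprod_blaschkeFactor_zero (fun j : {j // j ∉ A} => ha j)
    (fun j => ha1 j) hsA
  linarith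

lemma norm_mul_pow_mul_tprod_blaschkeFactor_le_one (ha : ∀ j, a j ≠ 0) (ha1 : ∀ j, ‖a j‖ < 1)
    (hs : Summable fun j => 1 - ‖a j‖) {η z : ℂ} (hη : ‖η‖ = 1) (m : ℕ) (hz : ‖z‖ < 1) :
    ‖η * z ^ m * ∏' j, blaschkeFactor (a j) z‖ ≤ 1 := by
  rw [norm_mul, norm_mul, hη, one_mul, norm_pow]
  exact mul_le_one₀ (pow_le_one₀ (norm_nonneg _) hz.le) (norm_nonneg _)
    (norm_tprod_blaschkeFactor_le_one ha ha1 hs hz)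

theorem hasUnimodularMean_mul_tprod_blaschkeFactor (ha : ∀ j, a j ≠ 0) (ha1 : ∀ j, ‖a j‖ < 1)
    (hs : Summable fun j => 1 - ‖a j‖) {η : ℂ} (hη : ‖η‖ = 1) (m : ℕ) :
    HasUnimodularMean (fun z => η * z ^ m * ∏' j, blaschkeFactor (a j) z) := by
  refine tendsto_order.2 ⟨fun x hx => ?_, fun ε hε => ?_⟩
  · filter_upwards [eventually_zero_lt_and_lt_one] with ρ hρ
    refine hx.trans_le (Real.circleAverage_nonneg_of_nonneg fun z hz => sub_nonneg.2 ?_)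
    exact norm_mul_pow_mul_tprod_blaschkeFactor_le_one ha ha1 hs hη m
      (mem_ball_zero_iff.1 (sphere_subset_unitDisc hρ.1.le hρ.2 hz))
  obtain ⟨A, R, hRd, hR1, hR0, hAR⟩ :=
    exists_finset_mul_tprod_blaschkeFactor ha ha1 hs (half_pos hε)
  set p : ℂ → ℂ := fun z => η * z ^ m * ∏ j ∈ A, blaschkeFactor (a j) z
  have hpc : ContinuousOn p (closedBall 0 1) := fun z hz =>
    (ContinuousAt.mul (by fun_prop) (differentiableAt_prod_blaschkeFactor ha1 A
      (mem_closedBall_zero_iff.1 hz)).continuousAt).continuousWithinAt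
  have hp1 : ∀ z, ‖z‖ = 1 → ‖p z‖ = 1 := fun z hz => by
    simp [p, hη, hz, -norm_prod, norm_prod_blaschkeFactor_of_norm_eq_one ha ha1 A hz]
  have hple : ∀ z ∈ 𝔻, ‖p z‖ ≤ 1 := fun z hz => by
    have hz1 : ‖z‖ < 1 := mem_ball_zero_iff.1 hz
    simp only [p, norm_mul, hη, one_mul, norm_pow]
    exact mul_le_one₀ (pow_le_one₀ (norm_nonneg _) hz1.le) (norm_nonneg _)
      (norm_prod_blaschkeFactor_le_one ha ha1 A hz1)
  filter_upwards [eventually_zero_lt_and_lt_one,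
    (HasUnimodularMean.of_continuousOn hpc hp1).eventually (gt_mem_nhds (half_pos hε))]
    with ρ hρ hpρ
  have hmul := circleAverage_one_sub_norm_mul_le (hpc.mono ball_subset_closedBall) hRd hple hR1
    hρ.1 hρ.2
  rw [Real.circleAverage_congr_sphere (f₂ := fun z => 1 - ‖p z * R z‖) fun z hz => ?_]
  · linarith
  · simp only [p, hAR z (sphere_subset_unitDisc hρ.1.le hρ.2 hz), mul_assoc]

theorem IsBlaschkeProduct.hasUnimodularMean {B : ℂ → ℂ} (hB : IsBlaschkeProduct B) :
    HasUnimodularMean B := by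
  obtain ⟨-, η, m, ι, a, hη, ha, hs, hBeq⟩ := hB
  exact (hasUnimodularMean_mul_tprod_blaschkeFactor (fun j => (ha j).1) (fun j => (ha j).2) hs hη
    m).congr fun z hz => (hBeq z hz).symm

lemma IsBlaschkeProduct.norm_le_one {B : ℂ → ℂ} (hB : IsBlaschkeProduct B) {z : ℂ} (hz : z ∈ 𝔻) :
    ‖B z‖ ≤ 1 := by
  obtain ⟨-, η, m, ι, a, hη, ha, hs, hBeq⟩ := hB
  rw [hBeq z hz]
  exact norm_mul_pow_mul_tprod_blaschkeFactor_le_one (fun j => (ha j).1) (fun j => (ha j).2) hs hη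
    m (mem_ball_zero_iff.1 hz)

end BlaschkeMean

section FeketePoints

open Polynomial Lagrange

variable {ι : Type*} [Fintype ι]

lemma sq_sub_le_one_add_sq_mul (a b : ℝ) : (a - b) ^ 2 ≤ (1 + a ^ 2) * (1 + b ^ 2) := by
  nlinarith [sq_nonneg (1 + a * b)]

lemma norm_le_prod_one_add_sq (x : ι → ℝ) : ‖x‖ ≤ ∏ i, (1 + x i ^ 2) := by
  classical
  have h1 : ∀ i, 1 ≤ 1 + x i ^ 2 := fun i => by nlinarith [sq_nonneg (x i)]
  refine (pi_norm_le_iff_of_nonneg (Finset.prod_nonneg fun i _ => by positivity)).2 fun i => ?_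
  calc ‖x i‖ ≤ 1 + x i ^ 2 := by
        rw [Real.norm_eq_abs, ← sq_abs]
        nlinarith [sq_nonneg (|x i| - 1)]
    _ ≤ ∏ k, (1 + x k ^ 2) :=
        Finset.mul_prod_erase Finset.univ (fun k => 1 + x k ^ 2) (Finset.mem_univ i) ▸
          le_mul_of_one_le_right (by positivity) (Finset.one_le_prod fun k _ => h1 k)

lemma eq_zero_of_degree_lt_of_double_roots {K : Type*} [Field K] {x : ι → K}
    (hx : Function.Injective x) {T : K[X]} (hdeg : T.degree < (nodal Finset.univ x ^ 2).degree)
    (h0 : ∀ j, T.eval (x j) = 0) (h1 : ∀ j, T.derivative.eval (x j) = 0) : T = 0 := by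
  refine eq_zero_of_dvd_of_degree_lt ?_ hdeg
  rw [nodal_eq, ← Finset.prod_pow]
  refine Finset.prod_dvd_of_coprime (fun i _ k _ hik => IsCoprime.pow
    (isCoprime_X_sub_C_of_isUnit_sub (sub_ne_zero.2 (hx.ne hik)).isUnit)) fun j _ => ?_
  by_cases hT : T = 0
  · simp [hT]
  · rw [← le_rootMultiplicity_iff hT]
    exact (one_lt_rootMultiplicity_iff_isRoot hT).2 ⟨h0 j, h1 j⟩

variable [DecidableEq ι]

/-- The squared modulus `∏ i, ∏ k ≠ i, |x i - x k|` of the Vandermonde determinant of the points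
`x`, whose weighted maximisers are the Fekete points. -/
noncomputable def offDiagProd (x : ι → ℝ) : ℝ := ∏ i, ∏ k ∈ Finset.univ.erase i, |x i - x k|

lemma offDiagProd_nonneg (x : ι → ℝ) : 0 ≤ offDiagProd x :=
  Finset.prod_nonneg fun _ _ => Finset.prod_nonneg fun _ _ => abs_nonneg _

lemma offDiagProd_pos_iff {x : ι → ℝ} : 0 < offDiagProd x ↔ Function.Injective x := by
  rw [(offDiagProd_nonneg x).lt_iff_ne']
  simp only [offDiagProd, Finset.prod_ne_zero_iff, Finset.mem_erase, Finset.mem_univ, abs_ne_zero,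
    sub_ne_zero, true_implies, and_true]
  exact ⟨fun h i k hik => by_contra fun hne => h i k (Ne.symm hne) hik,
    fun h i k hne hik => hne (h hik).symm⟩

lemma offDiagProd_mul_prod_le (x : ι → ℝ) :
    offDiagProd x * ∏ i, (1 + x i ^ 2) ≤ ∏ i, (1 + x i ^ 2) ^ Fintype.card ι := by
  have hs : ∀ i, √(1 + x i ^ 2) * √(1 + x i ^ 2) = 1 + x i ^ 2 := fun i =>
    Real.mul_self_sqrt (by positivity)
  calc offDiagProd x * ∏ i, (1 + x i ^ 2)
      = ∏ i, ((√(1 + x i ^ 2) * √(1 + x i ^ 2)) * ∏ k ∈ Finset.univ.erase i, |x i - x k|) := by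
        simp only [hs, Finset.prod_mul_distrib, offDiagProd]
        exact mul_comm _ _
    _ ≤ ∏ i, ∏ k, (√(1 + x i ^ 2) * √(1 + x k ^ 2)) := by
        refine Finset.prod_le_prod (fun i _ => by positivity) fun i _ => ?_
        rw [← Finset.mul_prod_erase Finset.univ (fun k => √(1 + x i ^ 2) * √(1 + x k ^ 2))
          (Finset.mem_univ i)]
        gcongr with k
        rw [← Real.sqrt_mul (by positivity)]
        exact Real.abs_le_sqrt (sq_sub_le_one_add_sq_mul _ _)
    _ = ∏ i, (1 + x i ^ 2) ^ Fintype.card ι := by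
        simp only [Finset.prod_mul_distrib, Finset.prod_const, Finset.card_univ, Finset.prod_pow]
        rw [← mul_pow, ← Finset.prod_mul_distrib]
        simp only [hs]

lemma offDiagProd_div_prod_mul_norm_le {q : ℝ → ℝ} {κ : ℝ} (hκ : 0 < κ)
    (hlow : ∀ t, κ * (1 + t ^ 2) ^ Fintype.card ι ≤ q t) (x : ι → ℝ) :
    (offDiagProd x / ∏ j, q (x j)) * ‖x‖ ≤ (κ ^ Fintype.card ι)⁻¹ := by
  have hq : κ ^ Fintype.card ι * ∏ j, (1 + x j ^ 2) ^ Fintype.card ι ≤ ∏ j, q (x j) := by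
    rw [← Finset.card_univ, ← Finset.prod_const, ← Finset.prod_mul_distrib]
    exact Finset.prod_le_prod (fun j _ => by positivity) fun j _ => hlow _
  have hqpos : 0 < ∏ j, q (x j) :=
    Finset.prod_pos fun j _ => lt_of_lt_of_le (by positivity) (hlow (x j))
  rw [div_mul_eq_mul_div, div_le_iff₀ hqpos, le_inv_mul_iff₀ (by positivity)]
  refine le_trans ?_ hq
  gcongr
  refine le_trans ?_ (offDiagProd_mul_prod_le x)
  exact mul_le_mul_of_nonneg_left (norm_le_prod_one_add_sq x) (offDiagProd_nonneg x)

lemma exists_offDiagProd_div_prod_le {q : ℝ → ℝ} (hq : Continuous q) {κ : ℝ} (hκ : 0 < κ)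
    (hlow : ∀ t, κ * (1 + t ^ 2) ^ Fintype.card ι ≤ q t) :
    ∃ x : ι → ℝ, Function.Injective x ∧
      ∀ y : ι → ℝ, offDiagProd y / ∏ j, q (y j) ≤ offDiagProd x / ∏ j, q (x j) := by
  have hqpos : ∀ y : ι → ℝ, 0 < ∏ j, q (y j) := fun y =>
    Finset.prod_pos fun j _ => lt_of_lt_of_le (by positivity) (hlow (y j))
  have hc : Continuous fun y : ι → ℝ => offDiagProd y / ∏ j, q (y j) :=
    Continuous.div (by unfold offDiagProd; fun_prop) (by fun_prop) fun y => (hqpos y).ne'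
  obtain ⟨x₀, hx₀⟩ : ∃ x₀ : ι → ℝ, Function.Injective x₀ :=
    ⟨fun i => (Fintype.equivFin ι i : ℕ),
      Nat.cast_injective.comp (Fin.val_injective.comp (Fintype.equivFin ι).injective)⟩
  have hΨ₀ : 0 < offDiagProd x₀ / ∏ j, q (x₀ j) := div_pos (offDiagProd_pos_iff.2 hx₀) (hqpos _)
  obtain ⟨x, hx⟩ := hc.exists_forall_ge' x₀ <| by
    filter_upwards [tendsto_norm_cocompact_atTop.eventually_gt_atTop 0,
      tendsto_norm_cocompact_atTop.eventually_ge_atTop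
        ((κ ^ Fintype.card ι)⁻¹ / (offDiagProd x₀ / ∏ j, q (x₀ j)))] with y hy0 hy
    rw [div_le_iff₀ hΨ₀, mul_comm ‖y‖] at hy
    exact le_of_mul_le_mul_right ((offDiagProd_div_prod_mul_norm_le hκ hlow y).trans hy) hy0
  exact ⟨x, offDiagProd_pos_iff.1
    ((div_pos_iff_of_pos_right (hqpos x)).1 (hΨ₀.trans_le (hx x₀))), hx⟩

lemma exists_offDiagProd_update_eq (x : ι → ℝ) (j : ι) :
    ∃ K, 0 ≤ K ∧ ∀ y, offDiagProd (Function.update x j y) =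
      (nodal (Finset.univ.erase j) x).eval y ^ 2 * K := by
  refine ⟨∏ i ∈ Finset.univ.erase j, ∏ k ∈ (Finset.univ.erase i).erase j, |x i - x k|,
    Finset.prod_nonneg fun _ _ => Finset.prod_nonneg fun _ _ => abs_nonneg _, fun y => ?_⟩
  have hrow : ∀ i ∈ Finset.univ.erase j, ∏ k ∈ Finset.univ.erase i,
      |Function.update x j y i - Function.update x j y k| =
        |y - x i| * ∏ k ∈ (Finset.univ.erase i).erase j, |x i - x k| := fun i hi => by
    have hij : i ≠ j := Finset.ne_of_mem_erase hi
    rw [← Finset.mul_prod_erase _ _ (Finset.mem_erase.2 ⟨hij.symm, Finset.mem_univ j⟩),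
      Function.update_self, Function.update_of_ne hij, abs_sub_comm]
    congr 1
    exact Finset.prod_congr rfl fun k hk => by
      rw [Function.update_of_ne (Finset.ne_of_mem_erase hk)]
  have hcol : ∏ k ∈ Finset.univ.erase j, |Function.update x j y j - Function.update x j y k| =
      ∏ k ∈ Finset.univ.erase j, |y - x k| :=
    Finset.prod_congr rfl fun k hk => by
      rw [Function.update_self, Function.update_of_ne (Finset.ne_of_mem_erase hk)]
  rw [offDiagProd, ← Finset.mul_prod_erase Finset.univ _ (Finset.mem_univ j), hcol,
    Finset.prod_congr rfl hrow, Finset.prod_mul_distrib, ← mul_assoc, ← Finset.prod_mul_distrib,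
    eval_nodal, ← Finset.prod_pow]
  simp only [abs_mul_abs_self, sq]

lemma eval_nodal_erase_ne_zero {K : Type*} [Field K] {x : ι → K} (hx : Function.Injective x)
    (j : ι) : (nodal (Finset.univ.erase j) x).eval (x j) ≠ 0 :=
  eval_nodal_not_at_node fun _ hi => hx.ne (Finset.ne_of_mem_erase hi).symm

lemma eval_nodal_erase_of_ne {R : Type*} [CommRing R] (x : ι → R) {i j : ι} (hij : i ≠ j) :
    (nodal (Finset.univ.erase i) x).eval (x j) = 0 :=
  eval_nodal_at_node (Finset.mem_erase.2 ⟨hij.symm, Finset.mem_univ j⟩)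

lemma sq_eval_nodal_erase_div_le {q : ℝ → ℝ} (hq : ∀ t, 0 < q t) {x : ι → ℝ}
    (hx : Function.Injective x)
    (hmax : ∀ y : ι → ℝ, offDiagProd y / ∏ j, q (y j) ≤ offDiagProd x / ∏ j, q (x j))
    (j : ι) (y : ℝ) :
    (nodal (Finset.univ.erase j) x).eval y ^ 2 / q y ≤
      (nodal (Finset.univ.erase j) x).eval (x j) ^ 2 / q (x j) := by
  obtain ⟨K, hK0, hK⟩ := exists_offDiagProd_update_eq x j
  have hKx := hK (x j)
  rw [Function.update_eq_self] at hKx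
  have hKpos : 0 < K := hK0.lt_of_ne' fun h =>
    (offDiagProd_pos_iff.2 hx).ne' (by rw [hKx, h, mul_zero])
  have hprod : ∏ i, q (Function.update x j y i) =
      q y * ∏ i ∈ Finset.univ.erase j, q (x i) := by
    rw [← Finset.mul_prod_erase Finset.univ _ (Finset.mem_univ j), Function.update_self]
    congr 1
    exact Finset.prod_congr rfl fun i hi => by
      rw [Function.update_of_ne (Finset.ne_of_mem_erase hi)]
  have hle := hmax (Function.update x j y)
  rw [hK, hKx, hprod, ← Finset.mul_prod_erase Finset.univ _ (Finset.mem_univ j),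
    mul_div_mul_comm, mul_div_mul_comm] at hle
  exact le_of_mul_le_mul_right hle (div_pos hKpos (Finset.prod_pos fun i _ => hq _))

lemma two_mul_derivative_nodal_erase_mul_eval {Q : ℝ[X]} (hQ : ∀ t, 0 < Q.eval t) {x : ι → ℝ}
    (hx : Function.Injective x)
    (hmax : ∀ y : ι → ℝ, offDiagProd y / ∏ j, Q.eval (y j) ≤ offDiagProd x / ∏ j, Q.eval (x j))
    (j : ι) :
    2 * (derivative (nodal (Finset.univ.erase j) x)).eval (x j) * Q.eval (x j) =
      (nodal (Finset.univ.erase j) x).eval (x j) * Q.derivative.eval (x j) := by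
  set A := nodal (Finset.univ.erase j) x
  have hloc : IsLocalMax (fun y => A.eval y ^ 2 / Q.eval y) (x j) :=
    Eventually.of_forall (sq_eval_nodal_erase_div_le hQ hx hmax j)
  have hd : HasDerivAt (fun y => A.eval y ^ 2 / Q.eval y) _ (x j) :=
    ((A.hasDerivAt (x j)).fun_pow 2).fun_div (Q.hasDerivAt (x j)) (hQ _).ne'
  have hzero := (div_eq_zero_iff.1 (hloc.hasDerivAt_eq_zero hd)).resolve_right
    (pow_ne_zero _ (hQ _).ne')
  refine mul_left_cancel₀ (eval_nodal_erase_ne_zero hx j) ?_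
  simp only [Nat.cast_ofNat, Nat.add_one_sub_one, pow_one] at hzero
  linear_combination hzero

lemma degree_sub_nodal_sq_sub_sum_lt {K : Type*} [Field K] {Q : K[X]} (hQm : Q.Monic)
    (hQd : Q.natDegree = 2 * Fintype.card ι) (x m : ι → K) :
    (Q - nodal Finset.univ x ^ 2 - ∑ j, C (m j) * nodal (Finset.univ.erase j) x ^ 2).degree <
      (nodal Finset.univ x ^ 2).degree := by
  have hNd : (nodal Finset.univ x ^ 2).degree = (2 * Fintype.card ι : ℕ) := by
    rw [degree_pow, degree_nodal, Finset.card_univ, nsmul_eq_mul]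
    norm_cast
  have hQ : (Q - nodal Finset.univ x ^ 2).degree < (nodal Finset.univ x ^ 2).degree := by
    have hd : Q.degree = (nodal Finset.univ x ^ 2).degree := by
      rw [hNd, degree_eq_natDegree hQm.ne_zero, hQd]
    rw [← hd]
    exact degree_sub_lt_left hd hQm.ne_zero
      (by rw [hQm.leadingCoeff, (nodal_monic.pow 2).leadingCoeff])
  have hA : (∑ j, C (m j) * nodal (Finset.univ.erase j) x ^ 2).degree <
      (nodal Finset.univ x ^ 2).degree := by
    have hbot : ⊥ < (nodal Finset.univ x ^ 2).degree := hNd ▸ WithBot.bot_lt_coe _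
    refine (degree_sum_le _ _).trans_lt ((Finset.sup_lt_iff hbot).2 fun j _ => ?_)
    rw [← smul_eq_C_mul]
    refine (degree_smul_le _ _).trans_lt ?_
    rw [hNd, degree_pow, degree_nodal, Finset.card_erase_of_mem (Finset.mem_univ j),
      Finset.card_univ, nsmul_eq_mul]
    have := Fintype.card_pos_iff.2 ⟨j⟩
    exact_mod_cast (by omega : 2 * (Fintype.card ι - 1) < 2 * Fintype.card ι)
  exact (degree_sub_le _ _).trans_lt (max_lt hQ hA)

lemma eq_nodal_sq_add_sum {K : Type*} [Field K] {Q : K[X]} (hQm : Q.Monic)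
    (hQd : Q.natDegree = 2 * Fintype.card ι) {x : ι → K} (hx : Function.Injective x)
    (hcrit : ∀ j, 2 * (derivative (nodal (Finset.univ.erase j) x)).eval (x j) * Q.eval (x j) =
      (nodal (Finset.univ.erase j) x).eval (x j) * Q.derivative.eval (x j)) :
    Q = nodal Finset.univ x ^ 2 +
      ∑ j, C (Q.eval (x j) / (nodal (Finset.univ.erase j) x).eval (x j) ^ 2) *
        nodal (Finset.univ.erase j) x ^ 2 := by
  set A : ι → K[X] := fun j => nodal (Finset.univ.erase j) x
  set m : ι → K := fun j => Q.eval (x j) / (A j).eval (x j) ^ 2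
  have hm : ∀ j, m j * (A j).eval (x j) ^ 2 = Q.eval (x j) := fun j =>
    div_mul_cancel₀ _ (pow_ne_zero 2 (eval_nodal_erase_ne_zero hx j))
  have hN0 : ∀ j, (nodal Finset.univ x).eval (x j) = 0 := fun j =>
    eval_nodal_at_node (Finset.mem_univ j)
  have hT := eq_zero_of_degree_lt_of_double_roots hx (degree_sub_nodal_sq_sub_sum_lt hQm hQd x m)
    (fun j => ?_) fun j => ?_
  · linear_combination hT
  · rw [eval_sub, eval_sub, eval_finsetSum, Finset.sum_eq_single j
      (fun i _ hij => by simp [eval_nodal_erase_of_ne x hij]) (by simp)]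
    simp [hN0, ← hm j, A]
  · have hj : (derivative (C (m j) * A j ^ 2)).eval (x j) = Q.derivative.eval (x j) := by
      refine mul_left_cancel₀ (eval_nodal_erase_ne_zero hx j) ?_
      rw [← hcrit j, ← hm]
      simp only [derivative_mul, derivative_C, derivative_pow, A]
      simp
      ring
    rw [derivative_sub, derivative_sub, eval_sub, eval_sub, derivative_sum, eval_finsetSum,
      Finset.sum_eq_single j (fun i _ hij => by
        simp [derivative_pow, eval_nodal_erase_of_ne x hij]) (by simp), hj]
    simp [derivative_pow, hN0]

theorem exists_eq_nodal_sq_add_sum {Q : ℝ[X]} (hQm : Q.Monic)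
    (hQd : Q.natDegree = 2 * Fintype.card ι) {κ : ℝ} (hκ : 0 < κ)
    (hlow : ∀ t, κ * (1 + t ^ 2) ^ Fintype.card ι ≤ Q.eval t) :
    ∃ x m : ι → ℝ, (∀ j, 0 < m j) ∧
      Q = nodal Finset.univ x ^ 2 + ∑ j, C (m j) * nodal (Finset.univ.erase j) x ^ 2 := by
  have hQ : ∀ t, 0 < Q.eval t := fun t => lt_of_lt_of_le (by positivity) (hlow t)
  obtain ⟨x, hx, hmax⟩ := exists_offDiagProd_div_prod_le Q.continuous hκ hlow
  exact ⟨x, _, fun j => div_pos (hQ _) (pow_two_pos_of_ne_zero (eval_nodal_erase_ne_zero hx j)),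
    eq_nodal_sq_add_sum hQm hQd hx
    (two_mul_derivative_nodal_erase_mul_eval hQ hx hmax)⟩

end FeketePoints

section PrescribedCriticalPoints

variable {ι : Type*} [Fintype ι]

lemma exists_mul_one_add_sq_le {b : ℝ} (hb : b ≠ 0) (a : ℝ) :
    ∃ κ > 0, ∀ t, κ * (1 + t ^ 2) ≤ (t - a) ^ 2 + b ^ 2 := by
  refine ⟨(2 + (1 + 2 * a ^ 2) / b ^ 2)⁻¹, by positivity, fun t => ?_⟩
  rw [inv_mul_le_iff₀ (by positivity)]
  have : 1 + 2 * a ^ 2 ≤ (1 + 2 * a ^ 2) / b ^ 2 * ((t - a) ^ 2 + b ^ 2) := by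
    rw [div_mul_eq_mul_div, le_div_iff₀ (by positivity)]
    gcongr
    exact le_add_of_nonneg_left (sq_nonneg _)
  nlinarith [sq_nonneg (t - 2 * a), sq_nonneg b]

lemma sub_mul_sub_conj (y ξ : ℂ) :
    (y - ξ) * (y - conj ξ) = (y - ξ.re) ^ 2 + ((ξ.im ^ 2 : ℝ) : ℂ) := by
  apply Complex.ext <;> simp [pow_two] <;> ring

lemma exists_prod_sub_mul_sub_conj_eq [DecidableEq ι] {ξ : ι → ℂ} (hξ : ∀ j, (ξ j).im ≠ 0) :
    ∃ x m : ι → ℝ, (∀ j, 0 < m j) ∧ ∀ y : ℂ,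
      ∏ j, ((y - ξ j) * (y - conj (ξ j))) =
        (∏ j, (y - x j)) ^ 2 +
          ∑ j, (m j : ℂ) * (∏ i ∈ Finset.univ.erase j, (y - x i)) ^ 2 := by
  open Polynomial in
  set q : ι → ℝ[X] := fun j => (X - C (ξ j).re) ^ 2 + C ((ξ j).im ^ 2)
  have hm : ∀ j, (q j).Monic := fun j => by
    refine ((monic_X_sub_C _).pow 2).add_of_left (degree_C_le.trans_lt ?_)
    rw [degree_pow, degree_X_sub_C]
    norm_num
  have hd : ∀ j, (q j).natDegree = 2 := fun j => by
    rw [natDegree_add_C, natDegree_pow, natDegree_X_sub_C]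
  choose κ hκ hlow using fun j => exists_mul_one_add_sq_le (hξ j) (ξ j).re
  obtain ⟨x, m, hm0, hQ⟩ := exists_eq_nodal_sq_add_sum (ι := ι)
    (monic_prod_of_monic Finset.univ q fun j _ => hm j)
    (by rw [natDegree_prod_of_monic _ _ fun j _ => hm j]; simp [hd, mul_comm])
    (Finset.prod_pos fun j _ => hκ j) fun t => by
      rw [← Finset.card_univ (α := ι), ← Finset.prod_const, ← Finset.prod_mul_distrib, eval_prod]
      exact Finset.prod_le_prod (fun j _ => by have := hκ j; positivity) fun j _ => by
        simpa [q] using hlow j t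
  refine ⟨x, m, hm0, fun y => ?_⟩
  have hQy := congrArg (aeval y) hQ
  simp only [Lagrange.nodal_eq, map_prod, map_add, map_pow, map_sum, map_mul, map_sub, aeval_X,
    aeval_C, Complex.coe_algebraMap, q] at hQy
  simp only [sub_mul_sub_conj, Complex.ofReal_pow, hQy]

/-- A linear form in `z`, vanishing at the point of the unit circle which the Cayley transform
`z ↦ I * (1 + z) / (1 - z)` sends to the real number `x`. -/
noncomputable def boundaryForm (x : ℝ) (z : ℂ) : ℂ := Complex.I * (1 + z) - x * (1 - z)

lemma im_cayley (z : ℂ) :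
    (Complex.I * (1 + z) / (1 - z)).im = (1 - ‖z‖ ^ 2) / ‖1 - z‖ ^ 2 := by
  rw [← Complex.normSq_eq_norm_sq, ← Complex.normSq_eq_norm_sq, Complex.div_im,
    Complex.normSq_apply z]
  simp
  ring

lemma one_sub_ne_zero_of_norm_lt_one {z : ℂ} (hz : ‖z‖ < 1) : 1 - z ≠ 0 := fun h => by
  rw [← sub_eq_zero.1 h, norm_one] at hz
  exact lt_irrefl _ hz

lemma im_cayley_pos {z : ℂ} (hz : ‖z‖ < 1) : 0 < (Complex.I * (1 + z) / (1 - z)).im := by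
  rw [im_cayley]
  exact div_pos (one_sub_sq_norm_pos hz)
    (pow_pos (norm_pos_iff.2 (one_sub_ne_zero_of_norm_lt_one hz)) 2)

lemma boundaryForm_eq (x : ℝ) {z : ℂ} (hz : ‖z‖ < 1) :
    boundaryForm x z = (1 - z) * (Complex.I * (1 + z) / (1 - z) - x) := by
  have := one_sub_ne_zero_of_norm_lt_one hz
  rw [boundaryForm]
  field

lemma boundaryForm_ne_zero (x : ℝ) {z : ℂ} (hz : ‖z‖ < 1) : boundaryForm x z ≠ 0 := by
  rw [boundaryForm_eq x hz]
  refine mul_ne_zero (one_sub_ne_zero_of_norm_lt_one hz) fun h => (im_cayley_pos hz).ne' ?_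
  rw [sub_eq_zero.1 h, Complex.ofReal_im]

lemma im_sub_one_div_boundaryForm (x : ℝ) (z : ℂ) :
    ((z - 1) / boundaryForm x z).im = (1 - ‖z‖ ^ 2) / ‖boundaryForm x z‖ ^ 2 := by
  rw [← Complex.normSq_eq_norm_sq, ← Complex.normSq_eq_norm_sq, Complex.div_im,
    Complex.normSq_apply z, boundaryForm]
  simp
  ring

lemma hasDerivAt_sub_one_div_boundaryForm (x : ℝ) {z : ℂ} (hz : ‖z‖ < 1) :
    HasDerivAt (fun z => (z - 1) / boundaryForm x z) (2 * Complex.I / boundaryForm x z ^ 2) z := by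
  have hd : HasDerivAt (boundaryForm x) (Complex.I + x) z := by
    have h := (((hasDerivAt_id z).const_add 1).const_mul Complex.I).sub
      (((hasDerivAt_id z).const_sub 1).const_mul (x : ℂ))
    convert! h using 1
    ring
  refine (((hasDerivAt_id' z).sub_const 1).fun_div hd (boundaryForm_ne_zero x hz)).congr_deriv ?_
  rw [boundaryForm]
  ring

lemma hasDerivAt_cayley {z : ℂ} (hz : 1 - z ≠ 0) :
    HasDerivAt (fun z => Complex.I * (1 + z) / (1 - z)) (2 * Complex.I / (1 - z) ^ 2) z := by
  refine ((((hasDerivAt_id' z).const_add 1).const_mul Complex.I).fun_div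
    ((hasDerivAt_id' z).const_sub 1) hz).congr_deriv ?_
  ring

/-- The map of the unit disc into the upper half plane with simple poles of positive mass at `1`
and at the zeros of the forms `boundaryForm (x j)`. -/
noncomputable def herglotzMap (x m : ι → ℝ) (z : ℂ) : ℂ :=
  Complex.I * (1 + z) / (1 - z) + ∑ j, m j * ((z - 1) / boundaryForm (x j) z)

lemma im_herglotzMap (x m : ι → ℝ) (z : ℂ) :
    (herglotzMap x m z).im =
      (1 - ‖z‖ ^ 2) * (1 / ‖1 - z‖ ^ 2 + ∑ j, m j / ‖boundaryForm (x j) z‖ ^ 2) := by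
  rw [herglotzMap, Complex.add_im, im_cayley, Complex.im_sum, mul_add, Finset.mul_sum]
  congr 1
  · ring
  · refine Finset.sum_congr rfl fun j _ => ?_
    rw [Complex.im_ofReal_mul, im_sub_one_div_boundaryForm]
    ring

lemma hasDerivAt_herglotzMap (x m : ι → ℝ) {z : ℂ} (hz : ‖z‖ < 1) :
    HasDerivAt (herglotzMap x m)
      (2 * Complex.I * (1 / (1 - z) ^ 2 + ∑ j, m j / boundaryForm (x j) z ^ 2)) z := by
  refine ((hasDerivAt_cayley (one_sub_ne_zero_of_norm_lt_one hz)).add (HasDerivAt.fun_sum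
    fun j _ => (hasDerivAt_sub_one_div_boundaryForm (x j) hz).const_mul (m j : ℂ))).congr_deriv ?_
  simp only [mul_add, Finset.mul_sum]
  congr 1
  · ring
  · exact Finset.sum_congr rfl fun j _ => by ring

lemma cayley_sub_mul_sub_conj {w z : ℂ} (hw : ‖w‖ < 1) (hz : ‖z‖ < 1) :
    (Complex.I * (1 + z) / (1 - z) - Complex.I * (1 + w) / (1 - w)) *
        (Complex.I * (1 + z) / (1 - z) - conj (Complex.I * (1 + w) / (1 - w))) =
      (z - w) * (-4 * (1 - conj w * z) / ((1 - w) * (1 - conj w))) / (1 - z) ^ 2 := by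
  have hz1 := one_sub_ne_zero_of_norm_lt_one hz
  have hw1 := one_sub_ne_zero_of_norm_lt_one hw
  have hw2 := one_sub_ne_zero_of_norm_lt_one ((RCLike.norm_conj w).trans_lt hw)
  simp only [map_div₀, map_mul, map_add, map_sub, map_one, Complex.conj_I]
  field_simp
  ring_nf
  simp only [Complex.I_sq]
  ring

lemma exists_one_div_add_sum_eq_prod_div {w : ι → ℂ} (hw : ∀ j, ‖w j‖ < 1) :
    ∃ x m : ι → ℝ, (∀ j, 0 < m j) ∧ ∀ z : ℂ, ‖z‖ < 1 →
      1 / (1 - z) ^ 2 + ∑ j, m j / boundaryForm (x j) z ^ 2 =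
        (∏ j, ((z - w j) * (-4 * (1 - conj (w j) * z) / ((1 - w j) * (1 - conj (w j)))))) /
          ((1 - z) * ∏ j, boundaryForm (x j) z) ^ 2 := by
  classical
  obtain ⟨x, m, hm, hxm⟩ :=
    exists_prod_sub_mul_sub_conj_eq fun j => (im_cayley_pos (hw j)).ne'
  refine ⟨x, m, hm, fun z hz => ?_⟩
  set y := Complex.I * (1 + z) / (1 - z) with hy
  have hform : ∀ j, boundaryForm (x j) z = (1 - z) * (y - x j) := fun j => boundaryForm_eq _ hz
  have hyx : ∀ j, y - x j ≠ 0 := fun j =>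
    right_ne_zero_of_mul (hform j ▸ boundaryForm_ne_zero (x j) hz)
  have hpoles : 1 + ∑ j, m j / (y - x j) ^ 2 =
      (∏ j, ((z - w j) * (-4 * (1 - conj (w j) * z) / ((1 - w j) * (1 - conj (w j)))))) /
        (∏ j, boundaryForm (x j) z) ^ 2 := by
    have hprod : ∏ j, (y - x j) ≠ 0 := Finset.prod_ne_zero_iff.2 fun j _ => hyx j
    calc 1 + ∑ j, m j / (y - x j) ^ 2
        = ((∏ j, (y - x j)) ^ 2 +
            ∑ j, (m j : ℂ) * (∏ i ∈ Finset.univ.erase j, (y - x i)) ^ 2) /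
              (∏ j, (y - x j)) ^ 2 := by
          rw [add_div, div_self (pow_ne_zero 2 hprod), Finset.sum_div]
          congr 1
          refine Finset.sum_congr rfl fun j _ => ?_
          rw [← Finset.mul_prod_erase Finset.univ _ (Finset.mem_univ j)] at hprod ⊢
          rw [mul_pow, mul_div_mul_right _ _ (pow_ne_zero 2 (right_ne_zero_of_mul hprod))]
      _ = _ := by
          rw [← hxm, ← Finset.prod_pow, ← Finset.prod_pow, ← Finset.prod_div_distrib,
            ← Finset.prod_div_distrib]
          refine Finset.prod_congr rfl fun j _ => ?_
          rw [hy, cayley_sub_mul_sub_conj (hw j) hz, ← hy, hform, mul_pow, div_div]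
  rw [mul_pow, mul_comm ((1 - z) ^ 2), ← div_div, ← hpoles, add_div, Finset.sum_div]
  congr 1
  refine Finset.sum_congr rfl fun j _ => ?_
  rw [hform, mul_pow, div_div, mul_comm]

lemma exists_one_div_add_sum_le (x m : ι → ℝ) :
    ∃ C, ∀ z : ℂ, ‖z‖ < 1 → 1 / ‖1 - z‖ ^ 2 + ∑ j, m j / ‖boundaryForm (x j) z‖ ^ 2 ≤
      C / ‖(1 - z) * ∏ j, boundaryForm (x j) z‖ ^ 2 := by
  classical
  set S : ℂ → ℝ := fun z => ‖∏ j, boundaryForm (x j) z‖ ^ 2 + ∑ j, m j *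
    (‖1 - z‖ * ‖∏ i ∈ Finset.univ.erase j, boundaryForm (x i) z‖) ^ 2
  have hS : Continuous S := by
    unfold S boundaryForm
    fun_prop
  obtain ⟨C, hC⟩ := (isCompact_closedBall (0 : ℂ) 1).exists_bound_of_continuousOn hS.continuousOn
  refine ⟨C, fun z hz => ?_⟩
  have hv : 0 < ‖1 - z‖ := norm_pos_iff.2 (one_sub_ne_zero_of_norm_lt_one hz)
  have hL : ∀ j, 0 < ‖boundaryForm (x j) z‖ := fun j => norm_pos_iff.2 (boundaryForm_ne_zero _ hz)
  have hN : 0 < ‖∏ j, boundaryForm (x j) z‖ :=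
    norm_pos_iff.2 (Finset.prod_ne_zero_iff.2 fun j _ => boundaryForm_ne_zero _ hz)
  rw [le_div_iff₀ (by rw [norm_mul]; positivity), add_mul, Finset.sum_mul]
  refine (le_of_eq ?_).trans ((le_abs_self (S z)).trans (hC z (mem_closedBall_zero_iff.2 hz.le)))
  unfold S
  congr 1
  · rw [norm_mul]
    field
  · refine Finset.sum_congr rfl fun j _ => ?_
    have := hL j
    rw [← Finset.mul_prod_erase Finset.univ _ (Finset.mem_univ j), norm_mul, norm_mul]
    field

lemma add_I_ne_zero {y : ℂ} (hy : 0 < y.im) : y + Complex.I ≠ 0 := fun h => by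
  have := congrArg Complex.im h
  simp only [Complex.add_im, Complex.I_im, Complex.zero_im] at this
  linarith

lemma one_sub_sq_norm_sub_I_div_add_I {y : ℂ} (hy : 0 < y.im) :
    1 - ‖(y - Complex.I) / (y + Complex.I)‖ ^ 2 = 4 * y.im / ‖y + Complex.I‖ ^ 2 := by
  have : 0 < ‖y + Complex.I‖ := norm_pos_iff.2 (add_I_ne_zero hy)
  rw [norm_div, div_pow]
  field_simp
  rw [← Complex.normSq_eq_norm_sq, ← Complex.normSq_eq_norm_sq, Complex.normSq_apply,
    Complex.normSq_apply]
  simp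
  ring

lemma hasDerivAt_sub_I_div_add_I {h : ℂ → ℂ} {h' z : ℂ} (hh : HasDerivAt h h' z)
    (hz : 0 < (h z).im) :
    HasDerivAt (fun z => (h z - Complex.I) / (h z + Complex.I))
      (2 * Complex.I / (h z + Complex.I) ^ 2 * h') z := by
  refine ((hh.sub_const Complex.I).fun_div (hh.add_const Complex.I) (add_I_ne_zero hz)).congr_deriv
    ?_
  ring

lemma im_herglotzMap_pos {x m : ι → ℝ} (hm : ∀ j, 0 < m j) {z : ℂ} (hz : ‖z‖ < 1) :
    0 < (herglotzMap x m z).im := by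
  rw [im_herglotzMap]
  have h1 := one_sub_sq_norm_pos hz
  have h2 := norm_pos_iff.2 (one_sub_ne_zero_of_norm_lt_one hz)
  have h3 : 0 ≤ ∑ j, m j / ‖boundaryForm (x j) z‖ ^ 2 :=
    Finset.sum_nonneg fun j _ => div_nonneg (hm j).le (sq_nonneg _)
  positivity

lemma prod_one_sub_norm_le_norm_prod {w : ι → ℂ} (hw : ∀ j, ‖w j‖ < 1) {z : ℂ} (hz : ‖z‖ < 1) :
    ∏ j, (1 - ‖w j‖) ≤
      ‖∏ j, (-4 * (1 - conj (w j) * z) / ((1 - w j) * (1 - conj (w j))))‖ := by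
  rw [norm_prod]
  refine Finset.prod_le_prod (fun j _ => (sub_pos.2 (hw j)).le) fun j _ => ?_
  have hne : 0 < ‖1 - w j‖ := norm_pos_iff.2 (one_sub_ne_zero_of_norm_lt_one (hw j))
  have hconj : ‖1 - conj (w j)‖ = ‖1 - w j‖ := by
    rw [← RCLike.norm_conj, map_sub, map_one, Complex.conj_conj]
  have hle : ‖1 - w j‖ ≤ 2 := (norm_sub_le 1 (w j)).trans (by rw [norm_one]; linarith [hw j])
  have hge : 1 - ‖w j‖ ≤ ‖1 - conj (w j) * z‖ := by
    have h := norm_sub_norm_le 1 (conj (w j) * z)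
    rw [norm_one, norm_mul, RCLike.norm_conj] at h
    nlinarith [norm_nonneg (w j)]
  rw [norm_div, norm_mul, norm_mul, hconj, le_div_iff₀ (mul_pos hne hne), norm_neg,
    Complex.norm_ofNat]
  nlinarith [hw j, mul_le_mul hle hle hne.le zero_le_two]

lemma exists_im_pos_deriv_eq_prod_sub_mul {w : ι → ℂ} (hw : ∀ j, ‖w j‖ < 1) :
    ∃ h k : ℂ → ℂ, ∃ C : ℝ, (∀ z ∈ 𝔻, 0 < (h z).im) ∧ DifferentiableOn ℂ k 𝔻 ∧
      (∀ z ∈ 𝔻, HasDerivAt h ((∏ j, (z - w j)) * k z) z) ∧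
      ∀ z ∈ 𝔻, (h z).im ≤ C * ((1 - ‖z‖ ^ 2) * ‖k z‖) := by
  obtain ⟨x, m, hm, hxm⟩ := exists_one_div_add_sum_eq_prod_div hw
  obtain ⟨C, hC⟩ := exists_one_div_add_sum_le x m
  set p : ℂ → ℂ := fun z => ∏ j, (-4 * (1 - conj (w j) * z) / ((1 - w j) * (1 - conj (w j))))
  set N : ℂ → ℂ := fun z => (1 - z) * ∏ j, boundaryForm (x j) z
  have hN : ∀ z : ℂ, ‖z‖ < 1 → N z ≠ 0 := fun z hz => mul_ne_zero
    (one_sub_ne_zero_of_norm_lt_one hz)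
    (Finset.prod_ne_zero_iff.2 fun j _ => boundaryForm_ne_zero _ hz)
  have hP : 0 < ∏ j, (1 - ‖w j‖) := Finset.prod_pos fun j _ => sub_pos.2 (hw j)
  simp only [mem_ball_zero_iff]
  refine ⟨herglotzMap x m, fun z => 2 * Complex.I * (p z / N z ^ 2), C / (2 * ∏ j, (1 - ‖w j‖)),
    fun z hz => im_herglotzMap_pos hm hz, fun z hz => ?_, fun z hz => ?_, fun z hz => ?_⟩
  · have hp : DifferentiableAt ℂ p z := by fun_prop
    have hNd : DifferentiableAt ℂ N z := by unfold N boundaryForm; fun_prop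
    exact ((hp.fun_div (hNd.fun_pow 2) (pow_ne_zero 2 (hN z (mem_ball_zero_iff.1 hz)))).const_mul
      _).differentiableWithinAt
  · refine (hasDerivAt_herglotzMap x m hz).congr_deriv ?_
    rw [hxm z hz, Finset.prod_mul_distrib]
    ring
  · have hCz := hC z hz
    have hC0 : 0 ≤ C / ‖N z‖ ^ 2 := le_trans (add_nonneg (by positivity)
      (Finset.sum_nonneg fun j _ => div_nonneg (hm j).le (sq_nonneg _))) hCz
    have hp := prod_one_sub_norm_le_norm_prod hw hz
    calc (herglotzMap x m z).im
        ≤ (1 - ‖z‖ ^ 2) * (C / ‖N z‖ ^ 2 * (‖p z‖ / ∏ j, (1 - ‖w j‖))) := by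
          rw [im_herglotzMap]
          exact mul_le_mul_of_nonneg_left (hCz.trans (le_mul_of_one_le_right hC0
            ((one_le_div hP).2 hp))) (one_sub_sq_norm_pos hz).le
      _ = _ := by
          rw [norm_mul (2 * Complex.I), norm_mul 2, norm_div, norm_pow, Complex.norm_ofNat,
            Complex.norm_I]
          ring

theorem exists_isSelfMap_deriv_eq_prod_sub_mul {w : ι → ℂ} (hw : ∀ j, ‖w j‖ < 1) :
    ∃ G k : ℂ → ℂ, ∃ C : ℝ, IsSelfMap G ∧ DifferentiableOn ℂ k 𝔻 ∧
      (∀ z ∈ 𝔻, deriv G z = (∏ j, (z - w j)) * k z) ∧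
      ∀ z ∈ 𝔻, 1 - ‖G z‖ ^ 2 ≤ C * ((1 - ‖z‖ ^ 2) * ‖k z‖) := by
  obtain ⟨h, k, C, hpos, hk, hd, hC⟩ := exists_im_pos_deriv_eq_prod_sub_mul hw
  have hI : ∀ z ∈ 𝔻, h z + Complex.I ≠ 0 := fun z hz => add_I_ne_zero (hpos z hz)
  have hGd := fun z hz => hasDerivAt_sub_I_div_add_I (hd z hz) (hpos z hz)
  have hG := fun z hz => one_sub_sq_norm_sub_I_div_add_I (hpos z hz)
  refine ⟨fun z => (h z - Complex.I) / (h z + Complex.I),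
    fun z => 2 * Complex.I / (h z + Complex.I) ^ 2 * k z, 2 * C,
    ⟨fun z hz => (hGd z hz).differentiableAt.differentiableWithinAt, fun z hz => ?_⟩,
    fun z hz => ?_, fun z hz => ?_, fun z hz => ?_⟩
  · have := div_pos (mul_pos four_pos (hpos z hz)) (pow_pos (norm_pos_iff.2 (hI z hz)) 2)
    rw [← hG z hz, sub_pos] at this
    exact mem_ball_zero_iff.2 (pow_lt_one_iff_of_nonneg (norm_nonneg _) two_ne_zero |>.1 this)
  · exact ((differentiableAt_const _).fun_div (((hd z hz).differentiableAt.add_const _).fun_pow 2)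
      (pow_ne_zero 2 (hI z hz))).differentiableWithinAt.mul (hk z hz)
  · rw [(hGd z hz).deriv]
    ring
  · rw [hG z hz, norm_mul, norm_div, norm_mul, norm_pow, Complex.norm_ofNat, Complex.norm_I]
    calc 4 * (h z).im / ‖h z + Complex.I‖ ^ 2
        ≤ 4 * (C * ((1 - ‖z‖ ^ 2) * ‖k z‖)) / ‖h z + Complex.I‖ ^ 2 := by
          gcongr
          exact hC z hz
      _ = _ := by ring

end PrescribedCriticalPoints

section BlaschkeFactorization

variable {a z : ℂ} {F p S : ℂ → ℂ}

lemma exists_eq_mul_of_norm_eq_one_on_sphere (hp : DifferentiableOn ℂ p 𝔻)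
    (hpc : ContinuousOn p (closedBall 0 1)) (hp1 : ∀ z, ‖z‖ = 1 → ‖p z‖ = 1)
    (hF : DifferentiableOn ℂ F 𝔻) (hF1 : ∀ z ∈ 𝔻, ‖F z‖ ≤ 1) (hF0 : ∃ z ∈ 𝔻, F z ≠ 0)
    (hord : ∀ z ∈ 𝔻, analyticOrderAt p z ≤ analyticOrderAt F z) :
    ∃ S, DifferentiableOn ℂ S 𝔻 ∧ (∀ z ∈ 𝔻, ‖S z‖ ≤ 1) ∧ ∀ z ∈ 𝔻, F z = S z * p z := by
  obtain ⟨S, hS, hFS⟩ := exists_analyticOnNhd_eq_mul (hF.analyticOnNhd isOpen_ball)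
    (hp.analyticOnNhd isOpen_ball) (fun z hz => ne_top_of_le_ne_top
      (analyticOrderAt_ne_top_of_exists_ne_zero isOpen_ball isPreconnected_unitDisc hF hF0 hz)
      (hord z hz)) hord
  refine ⟨S, hS.differentiableOn, fun z hz => le_one_of_levi_nonneg isOpen_ball isBounded_ball
    hS.continuousOn.norm (fun c hc => ?_) (fun z hz h1 => ?_) hz, hFS⟩
  · refine ⟨closedBall 0 1 ∩ (‖p ·‖) ⁻¹' Set.Iic c⁻¹, fun z hz => ?_,
      (isCompact_closedBall 0 1).of_isClosed_subset (hpc.norm.preimage_isClosed_of_isClosed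
        isClosed_closedBall isClosed_Iic) Set.inter_subset_left, fun z hz => ?_⟩
    · refine mem_ball_zero_iff.2 ((mem_closedBall_zero_iff.1 hz.1).lt_of_ne fun h => ?_)
      exact (inv_lt_one_of_one_lt₀ hc).not_ge ((hp1 z h).symm.trans_le hz.2)
    · have hpz : c⁻¹ < ‖p z‖ := lt_of_not_ge fun h => hz.2 ⟨ball_subset_closedBall hz.1, h⟩
      have h1 := hF1 z hz.1
      rw [hFS z hz.1, norm_mul] at h1
      have hc0 := one_pos.trans hc
      rw [inv_lt_iff_one_lt_mul₀ hc0] at hpz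
      nlinarith [norm_nonneg (S z)]
  · exact ⟨_, 0, le_rfl, .log_norm (hS z hz) (norm_pos_iff.1 (one_pos.trans h1)),
      Eventually.of_forall fun w => le_rfl, rfl⟩

lemma ne_zero_of_analyticOrderAt_eq {𝕜 : Type*} [NontriviallyNormedField 𝕜] {F p S : 𝕜 → 𝕜}
    {z : 𝕜} (hp : AnalyticAt 𝕜 p z) (hS : AnalyticAt 𝕜 S z) (hFS : F =ᶠ[𝓝 z] S * p)
    (hord : analyticOrderAt p z = analyticOrderAt F z) (htop : analyticOrderAt F z ≠ ⊤) :
    S z ≠ 0 := by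
  rw [← hS.analyticOrderAt_eq_zero]
  have h := analyticOrderAt_mul hS hp
  rw [← analyticOrderAt_congr hFS, hord] at h
  exact (WithTop.add_right_cancel htop ((zero_add _).trans h)).symm

lemma analyticOrderAt_fun_prod {𝕜 ι : Type*} [NontriviallyNormedField 𝕜] {b : ι → 𝕜 → 𝕜} {x : 𝕜}
    (s : Finset ι) (hb : ∀ j ∈ s, AnalyticAt 𝕜 (b j) x) :
    analyticOrderAt (fun w => ∏ j ∈ s, b j w) x = ∑ j ∈ s, analyticOrderAt (b j) x := by
  classical
  induction s using Finset.induction_on with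
  | empty => simpa using analyticAt_const.analyticOrderAt_eq_zero.2 (one_ne_zero (α := 𝕜))
  | insert j s hj ih =>
    rw [Finset.forall_mem_insert] at hb
    simp only [Finset.prod_insert hj, Finset.sum_insert hj, ← ih hb.2]
    exact analyticOrderAt_mul hb.1 (Finset.analyticAt_fun_prod s hb.2)

lemma analyticAt_blaschkeFactor (ha1 : ‖a‖ < 1) (hz : ‖z‖ < 1) :
    AnalyticAt ℂ (blaschkeFactor a) z :=
  DifferentiableOn.analyticAt (s := 𝔻) (fun _ hw => (differentiableAt_blaschkeFactor ha1
    (mem_ball_zero_iff.1 hw).le).differentiableWithinAt) (isOpen_ball.mem_nhds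
      (mem_ball_zero_iff.2 hz))

lemma analyticOrderAt_blaschkeFactor (ha : a ≠ 0) (ha1 : ‖a‖ < 1) (hz : ‖z‖ < 1) :
    analyticOrderAt (blaschkeFactor a) z = if a = z then 1 else 0 := by
  have hc : -(((‖a‖ : ℝ) : ℂ) / a) ≠ 0 := neg_ne_zero.2 (div_ne_zero (by simpa using ha) ha)
  split_ifs with h
  · subst h
    refine (analyticAt_blaschkeFactor ha1 hz).analyticOrderAt_eq_one_of_zero_deriv_ne_zero
      (by simp [blaschkeFactor]) ?_
    have hd := hasDerivAt_moebius ha1 ha1.le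
    rw [blaschkeFactor_eq, deriv_const_mul _ hd.differentiableAt, ← norm_ne_zero_iff, norm_mul,
      norm_deriv_moebius ha1 ha1, moebius_self, norm_zero, zero_pow two_ne_zero, sub_zero]
    exact mul_ne_zero (norm_ne_zero_iff.2 hc) (one_div_ne_zero (one_sub_sq_norm_pos ha1).ne')
  · rw [(analyticAt_blaschkeFactor ha1 hz).analyticOrderAt_eq_zero, blaschkeFactor_eq]
    exact mul_ne_zero hc (div_ne_zero (sub_ne_zero.2 (Ne.symm h))
      (one_sub_conj_mul_ne_zero ha1 hz.le))

section Family

variable {ι : Type*} {a : ι → ℂ}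

lemma analyticOrderAt_prod_blaschkeFactor (ha : ∀ j, a j ≠ 0) (ha1 : ∀ j, ‖a j‖ < 1)
    (hz : ‖z‖ < 1) (s : Finset ι) [DecidablePred fun j => a j = z] :
    analyticOrderAt (fun w => ∏ j ∈ s, blaschkeFactor (a j) w) z = (s.filter (a · = z)).card := by
  rw [analyticOrderAt_fun_prod s fun j _ => analyticAt_blaschkeFactor (ha1 j) hz,
    ← Finset.sum_boole]
  exact Finset.sum_congr rfl fun j _ => by
    rw [analyticOrderAt_blaschkeFactor (ha j) (ha1 j) hz]
    congr

lemma finite_setOf_eq_of_summable_one_sub_norm (hs : Summable fun j => 1 - ‖a j‖)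
    (hz : ‖z‖ < 1) : {j | a j = z}.Finite := by
  refine (eventually_cofinite.1 (hs.tendsto_cofinite_zero.eventually
    (gt_mem_nhds (sub_pos.2 hz)))).subset fun j hj => ?_
  rw [Set.mem_ofPred_eq] at hj ⊢
  rw [hj]
  exact lt_irrefl _

lemma tprod_blaschkeFactor_ne_zero (ha : ∀ j, a j ≠ 0) (ha1 : ∀ j, ‖a j‖ < 1)
    (hs : Summable fun j => 1 - ‖a j‖) (hz : ‖z‖ < 1) (haz : ∀ j, a j ≠ z) :
    ∏' j, blaschkeFactor (a j) z ≠ 0 := by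
  have h := tprod_one_add_ne_zero_of_summable (f := fun j => blaschkeFactor (a j) z - 1)
    (fun j => ?_) ((hs.mul_left (2 / (1 - ‖z‖))).of_nonneg_of_le (fun j => norm_nonneg _)
      fun j => norm_blaschkeFactor_sub_one_le (ha j) (ha1 j) hz)
  · simpa using h
  · rw [add_sub_cancel, ← (analyticAt_blaschkeFactor (ha1 j) hz).analyticOrderAt_eq_zero,
      analyticOrderAt_blaschkeFactor (ha j) (ha1 j) hz, if_neg (haz j)]

lemma analyticOrderAt_tprod_blaschkeFactor (ha : ∀ j, a j ≠ 0) (ha1 : ∀ j, ‖a j‖ < 1)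
    (hs : Summable fun j => 1 - ‖a j‖) (hz : ‖z‖ < 1) :
    analyticOrderAt (fun w => ∏' j, blaschkeFactor (a j) w) z = {j | a j = z}.encard := by
  classical
  set A := (finite_setOf_eq_of_summable_one_sub_norm hs hz).toFinset
  have hA : ∀ j, j ∈ A ↔ a j = z := fun j => Set.Finite.mem_toFinset _
  set R : ℂ → ℂ := fun w => ∏' j : {j // j ∉ A}, blaschkeFactor (a j) w
  have hsA : Summable fun j : {j // j ∉ A} => 1 - ‖a j‖ := hs.subtype _
  have hR : AnalyticAt ℂ R z := (differentiableOn_tprod_blaschkeFactor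
    (a := fun j : {j // j ∉ A} => a j) (fun j => ha j) (fun j => ha1 j) hsA).analyticAt
      (isOpen_ball.mem_nhds (mem_ball_zero_iff.2 hz))
  have hR0 : R z ≠ 0 := tprod_blaschkeFactor_ne_zero (fun j => ha j) (fun j => ha1 j) hsA hz
    fun j h => j.2 ((hA j).2 h)
  have hmul : (fun w => ∏' j, blaschkeFactor (a j) w) =ᶠ[𝓝 z]
      (fun w => ∏ j ∈ A, blaschkeFactor (a j) w) * R := by
    filter_upwards [isOpen_ball.mem_nhds (mem_ball_zero_iff.2 hz)] with w hw
    exact tprod_blaschkeFactor_eq_prod_mul_tprod ha ha1 hs A (mem_ball_zero_iff.1 hw)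
  rw [analyticOrderAt_congr hmul, analyticOrderAt_mul (Finset.analyticAt_fun_prod A fun j _ =>
    analyticAt_blaschkeFactor (ha1 j) hz) hR, hR.analyticOrderAt_eq_zero.2 hR0, add_zero,
    analyticOrderAt_prod_blaschkeFactor ha ha1 hz, Finset.filter_true_of_mem fun j => (hA j).1,
    ← Set.encard_coe_eq_coe_finsetCard, Set.Finite.coe_toFinset]

lemma summable_one_sub_of_le_prod {x : ι → ℝ} {c : ℝ} (hc : 0 < c) (h0 : ∀ j, 0 < x j)
    (h1 : ∀ j, x j ≤ 1) (hx : ∀ s : Finset ι, c ≤ ∏ j ∈ s, x j) : Summable fun j => 1 - x j := by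
  refine summable_of_sum_le (c := -Real.log c) (fun j => sub_nonneg.2 (h1 j)) fun s => ?_
  calc ∑ j ∈ s, (1 - x j) ≤ ∑ j ∈ s, -Real.log (x j) :=
        Finset.sum_le_sum fun j _ => by linarith [Real.log_le_sub_one_of_pos (h0 j)]
    _ = -Real.log (∏ j ∈ s, x j) := by
        rw [Finset.sum_neg_distrib, Real.log_prod fun j _ => (h0 j).ne']
    _ ≤ -Real.log c := neg_le_neg (Real.log_le_log hc (hx s))

lemma norm_le_norm_prod_blaschkeFactor (ha : ∀ j, a j ≠ 0) (ha1 : ∀ j, ‖a j‖ < 1)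
    (hF : DifferentiableOn ℂ F 𝔻) (hF1 : ∀ z ∈ 𝔻, ‖F z‖ ≤ 1) (hF0 : ∃ z ∈ 𝔻, F z ≠ 0)
    (hord : ∀ z ∈ 𝔻, {j | a j = z}.encard ≤ analyticOrderAt F z) (s : Finset ι) (hz : z ∈ 𝔻) :
    ‖F z‖ ≤ ‖∏ j ∈ s, blaschkeFactor (a j) z‖ := by
  classical
  obtain ⟨S, -, hS1, hFS⟩ := exists_eq_mul_of_norm_eq_one_on_sphere
    (fun w hw => (differentiableAt_prod_blaschkeFactor ha1 s
      (mem_ball_zero_iff.1 hw).le).differentiableWithinAt)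
    (fun w hw => (differentiableAt_prod_blaschkeFactor ha1 s
      (mem_closedBall_zero_iff.1 hw)).continuousAt.continuousWithinAt)
    (fun w hw => norm_prod_blaschkeFactor_of_norm_eq_one ha ha1 s hw) hF hF1 hF0 fun w hw => by
      rw [analyticOrderAt_prod_blaschkeFactor ha ha1 (mem_ball_zero_iff.1 hw),
        ← Set.encard_coe_eq_coe_finsetCard]
      exact (Set.encard_le_encard fun j hj => (Finset.mem_filter.1 hj).2).trans (hord w hw)
  rw [hFS z hz, norm_mul]
  exact mul_le_of_le_one_left (norm_nonneg _) (hS1 z hz)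

end Family

universe u in
lemma exists_family_encard_eq {α : Type u} (s : Set α) (N : α → ℕ) :
    ∃ (ι : Type u) (a : ι → α), (∀ j, a j ∈ s) ∧ ∀ z ∈ s, {j | a j = z}.encard = N z := by
  refine ⟨Σ x : s, Fin (N x), fun j => j.1, fun j => j.1.2, fun z hz => ?_⟩
  have h : {j : Σ x : s, Fin (N x) | (j.1 : α) = z} =
      Sigma.mk (β := fun x : s => Fin (N x)) ⟨z, hz⟩ '' Set.univ := by
    ext ⟨⟨x, hx⟩, i⟩
    simp only [Set.mem_ofPred_eq, Set.image_univ, Set.mem_range]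
    constructor
    · rintro rfl
      exact ⟨i, rfl⟩
    · rintro ⟨y, hy⟩
      exact congrArg (fun j => (j.1 : α)) hy.symm
  rw [h, sigma_mk_injective.encard_image, Set.encard_univ, ENat.card_eq_coe_fintype_card,
    Fintype.card_fin]

lemma norm_le_one_of_norm_mul_le (hS : ContinuousOn S 𝔻) (hp : DifferentiableOn ℂ p 𝔻)
    (hp0 : ∃ z ∈ 𝔻, p z ≠ 0) (hSp : ∀ z ∈ 𝔻, ‖S z * p z‖ ≤ ‖p z‖) (hz : z ∈ 𝔻) : ‖S z‖ ≤ 1 := by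
  have hlim : Tendsto (‖S ·‖) (𝓝[≠] z) (𝓝 ‖S z‖) :=
    (hS.continuousAt (isOpen_ball.mem_nhds hz)).norm.tendsto.mono_left nhdsWithin_le_nhds
  refine le_of_tendsto hlim ?_
  filter_upwards [eventually_ne_zero_of_exists_ne_zero isOpen_ball isPreconnected_unitDisc hp hp0
    hz, nhdsWithin_le_nhds (isOpen_ball.mem_nhds hz)] with w hw hwD
  have h := hSp w hwD
  rw [norm_mul] at h
  exact le_of_mul_le_mul_right (h.trans_eq (one_mul _).symm) (norm_pos_iff.2 hw)

lemma exists_eq_mul_tprod_blaschkeFactor (hF : DifferentiableOn ℂ F 𝔻)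
    (hF1 : ∀ z ∈ 𝔻, ‖F z‖ ≤ 1) (hF0 : F 0 ≠ 0) :
    ∃ (ι : Type) (a : ι → ℂ) (S : ℂ → ℂ), (∀ j, a j ≠ 0) ∧ (∀ j, ‖a j‖ < 1) ∧
      (Summable fun j => 1 - ‖a j‖) ∧ DifferentiableOn ℂ S 𝔻 ∧ (∀ z ∈ 𝔻, ‖S z‖ ≤ 1) ∧
      (∀ z ∈ 𝔻, S z ≠ 0) ∧ ∀ z ∈ 𝔻, F z = S z * ∏' j, blaschkeFactor (a j) z := by
  have h0D : (0 : ℂ) ∈ 𝔻 := mem_ball_self one_pos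
  have hex : ∃ z ∈ 𝔻, F z ≠ 0 := ⟨0, h0D, hF0⟩
  have htop : ∀ z ∈ 𝔻, analyticOrderAt F z ≠ ⊤ := fun z hz =>
    analyticOrderAt_ne_top_of_exists_ne_zero isOpen_ball isPreconnected_unitDisc hF hex hz
  have hFan := hF.analyticOnNhd isOpen_ball
  obtain ⟨ι, a, haD, hN⟩ := exists_family_encard_eq 𝔻 (analyticOrderNatAt F)
  have hord : ∀ z ∈ 𝔻, {j | a j = z}.encard = analyticOrderAt F z := fun z hz =>
    (hN z hz).trans (ENat.natCast_toNat (htop z hz))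
  have ha1 : ∀ j, ‖a j‖ < 1 := fun j => mem_ball_zero_iff.1 (haD j)
  have ha : ∀ j, a j ≠ 0 := fun j hj => by
    have h := hord 0 h0D
    rw [(hFan 0 h0D).analyticOrderAt_eq_zero.2 hF0, Set.encard_eq_zero] at h
    exact h.subset hj
  have hle := fun s z (hz : z ∈ 𝔻) =>
    norm_le_norm_prod_blaschkeFactor ha ha1 hF hF1 hex (fun z hz => (hord z hz).le) s hz
  have hs : Summable fun j => 1 - ‖a j‖ := summable_one_sub_of_le_prod (norm_pos_iff.2 hF0)
    (fun j => norm_pos_iff.2 (ha j)) (fun j => (ha1 j).le) fun s => by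
      simpa [norm_prod, norm_blaschkeFactor_zero_right, ha] using hle s 0 h0D
  set b : ℂ → ℂ := fun z => ∏' j, blaschkeFactor (a j) z
  have hb : DifferentiableOn ℂ b 𝔻 := differentiableOn_tprod_blaschkeFactor ha ha1 hs
  have hFb : ∀ z ∈ 𝔻, ‖F z‖ ≤ ‖b z‖ := fun z hz => ge_of_tendsto
    (multipliable_blaschkeFactor ha ha1 hs (mem_ball_zero_iff.1 hz)).hasProd.norm
    (Eventually.of_forall fun s => (hle s z hz).trans_eq (norm_prod _ _))
  have hbord : ∀ z ∈ 𝔻, analyticOrderAt b z = analyticOrderAt F z := fun z hz =>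
    (analyticOrderAt_tprod_blaschkeFactor ha ha1 hs (mem_ball_zero_iff.1 hz)).trans (hord z hz)
  obtain ⟨S, hS, hFS⟩ := exists_analyticOnNhd_eq_mul hFan (hb.analyticOnNhd isOpen_ball)
    (fun z hz => hbord z hz ▸ htop z hz) fun z hz => (hbord z hz).le
  refine ⟨ι, a, S, ha, ha1, hs, hS.differentiableOn, fun z hz =>
    norm_le_one_of_norm_mul_le hS.continuousOn hb ⟨0, h0D, fun h => hF0 ?_⟩
      (fun w hw => hFS w hw ▸ hFb w hw) hz, fun z hz =>
    ne_zero_of_analyticOrderAt_eq (hb.analyticAt (isOpen_ball.mem_nhds hz)) (hS z hz)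
      (eventually_of_mem (isOpen_ball.mem_nhds hz) hFS) (hbord z hz) (htop z hz), hFS⟩
  simpa [h] using hFb 0 h0D

theorem exists_isBlaschkeProduct_mul (hF : DifferentiableOn ℂ F 𝔻) (hF1 : ∀ z ∈ 𝔻, ‖F z‖ ≤ 1)
    (hF0 : ∃ z ∈ 𝔻, F z ≠ 0) :
    ∃ b S : ℂ → ℂ, IsBlaschkeProduct b ∧ DifferentiableOn ℂ S 𝔻 ∧ (∀ z ∈ 𝔻, ‖S z‖ ≤ 1) ∧
      (∀ z ∈ 𝔻, S z ≠ 0) ∧ ∀ z ∈ 𝔻, F z = b z * S z := by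
  have h0D : (0 : ℂ) ∈ 𝔻 := mem_ball_self one_pos
  have htop := analyticOrderAt_ne_top_of_exists_ne_zero isOpen_ball isPreconnected_unitDisc hF hF0
    h0D
  set m := analyticOrderNatAt F 0
  have hm : analyticOrderAt (fun z : ℂ => z ^ m) 0 = analyticOrderAt F 0 := by
    have h := analyticOrderAt_pow (n := m) (analyticAt_id (𝕜 := ℂ) (z := 0))
    rw [analyticOrderAt_id, nsmul_one] at h
    exact h.trans (ENat.natCast_toNat htop)
  obtain ⟨F₁, hF₁, hF₁1, hFF₁⟩ := exists_eq_mul_of_norm_eq_one_on_sphere (p := fun z => z ^ m)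
    (by fun_prop) (by fun_prop) (fun z hz => by rw [norm_pow, hz, one_pow]) hF hF1 hF0
    fun z _ => by
      rcases eq_or_ne z 0 with rfl | hz
      · exact hm.le
      · have h : AnalyticAt ℂ (fun w : ℂ => w ^ m) z := by fun_prop
        rw [h.analyticOrderAt_eq_zero.2 (pow_ne_zero m hz)]
        exact bot_le
  have hF₁0 : F₁ 0 ≠ 0 := ne_zero_of_analyticOrderAt_eq (p := fun z => z ^ m) (by fun_prop)
    (hF₁.analyticAt (isOpen_ball.mem_nhds h0D)) (eventually_of_mem (isOpen_ball.mem_nhds h0D) hFF₁)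
    hm htop
  obtain ⟨ι, a, S, ha, ha1, hs, hS, hS1, hS0, hFS⟩ :=
    exists_eq_mul_tprod_blaschkeFactor hF₁ hF₁1 hF₁0
  refine ⟨fun z => 1 * z ^ m * ∏' j, blaschkeFactor (a j) z, S, ⟨fun z hz => ?_, 1, m, ι, a,
    norm_one, fun j => ⟨ha j, ha1 j⟩, hs, fun z _ => rfl⟩, hS, hS1, hS0, fun z hz => ?_⟩
  · exact (by fun_prop : DifferentiableAt ℂ (fun z : ℂ => 1 * z ^ m) z).fun_mul
      ((differentiableOn_tprod_blaschkeFactor ha ha1 hs).differentiableAt (isOpen_ball.mem_nhds hz))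
  · rw [hFF₁ z hz, hFS z hz]
    ring

end BlaschkeFactorization

section AhlforsComparison

variable {F S u p G k : ℂ → ℂ} {z : ℂ} {s M C : ℝ}

lemma exists_analyticAt_sq_eq (hF : AnalyticAt ℂ F z) (h0 : F z ≠ 0) :
    ∃ g : ℂ → ℂ, AnalyticAt ℂ g z ∧ ∀ w, g w ^ 2 = F w := by
  have hsq : ∀ x : ℂ, (x ^ (2⁻¹ : ℂ)) ^ 2 = x := fun x =>
    Complex.cpow_nat_inv_pow x two_ne_zero
  refine ⟨fun w => F z ^ (2⁻¹ : ℂ) * (F w / F z) ^ (2⁻¹ : ℂ), analyticAt_const.mul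
    ((hF.div analyticAt_const h0).cpow analyticAt_const ?_), fun w => ?_⟩
  · simp [h0]
  · rw [mul_pow, hsq, hsq, mul_div_cancel₀ _ h0]

lemma hasLeviAt_and_le_neg_log_one_sub_norm_of_eq_zero (hF : AnalyticAt ℂ F z)
    (h0 : F z = 0) (hs : 0 < s) :
    HasLeviAt (fun w => (4 * s)⁻¹ * ‖F w‖ ^ 2) z ((4 * s)⁻¹ * ‖deriv F z‖ ^ 2) ∧
      ∀ᶠ w in 𝓝 z, (4 * s)⁻¹ * ‖F w‖ ^ 2 ≤ -Real.log (1 - ‖F w‖) := by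
  refine ⟨(HasLeviAt.sq_norm hF).const_mul _, ?_⟩
  have hlim : Tendsto (‖F ·‖) (𝓝 z) (𝓝 0) := by simpa [h0] using hF.continuousAt.norm.tendsto
  filter_upwards [hlim.eventually_lt_const (show (0 : ℝ) < min 1 (4 * s) by positivity)] with w hw
  obtain ⟨hw1, hws⟩ := lt_min_iff.1 hw
  have hsq : (4 * s)⁻¹ * ‖F w‖ ^ 2 ≤ ‖F w‖ := by
    rw [inv_mul_le_iff₀ (by positivity)]
    nlinarith [norm_nonneg (F w)]
  linarith [Real.log_le_sub_one_of_pos (sub_pos.2 hw1)]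

/-- Near a zero of `F` the minorant is a multiple of `‖F‖ ^ 2`; elsewhere `-log (1 - ‖F‖)` is the
log-density `-log (1 - ‖g‖ ^ 2)` for a local square root `g` of `F`. -/
lemma exists_hasLeviAt_le_neg_log_one_sub_norm (hF : AnalyticAt ℂ F z) (h1 : ‖F z‖ < 1)
    (hs : 0 < s) (hFs : ‖F z‖ ≤ s) :
    ∃ ψ L, (‖deriv F z‖ / (2 * (1 - ‖F z‖) * √s)) ^ 2 ≤ L ∧ HasLeviAt ψ z L ∧
      (∀ᶠ w in 𝓝 z, ψ w ≤ -Real.log (1 - ‖F w‖)) ∧ ψ z = -Real.log (1 - ‖F z‖) := by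
  rcases eq_or_ne (F z) 0 with h0 | h0
  · obtain ⟨hψ, hle⟩ := hasLeviAt_and_le_neg_log_one_sub_norm_of_eq_zero hF h0 hs
    refine ⟨_, _, ?_, hψ, hle, by simp [h0]⟩
    rw [h0, norm_zero, div_pow, mul_pow, Real.sq_sqrt hs.le]
    field_simp
    norm_num
  · obtain ⟨g, hg, hgF⟩ := exists_analyticAt_sq_eq hF h0
    have hnorm : ∀ w, ‖g w‖ ^ 2 = ‖F w‖ := fun w => by rw [← norm_pow, hgF]
    have hg1 : ‖g z‖ < 1 := by
      rw [← sq_lt_one_iff₀ (norm_nonneg _), hnorm]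
      exact h1
    have hg0 : 0 < ‖g z‖ := norm_pos_iff.2 fun h => h0 (by rw [← hgF, h, zero_pow two_ne_zero])
    have hgs : ‖g z‖ ≤ √s := Real.le_sqrt_of_sq_le ((hnorm z).trans_le hFs)
    have hderiv : ‖deriv F z‖ = 2 * ‖g z‖ * ‖deriv g z‖ := by
      rw [← funext hgF, deriv_fun_pow hg.differentiableAt]
      simp
    refine ⟨_, _, ?_, (HasLeviAt.log_one_sub_sq_norm hg hg1).neg,
      Eventually.of_forall fun w => by rw [hnorm], by rw [hnorm]⟩
    have := sub_pos.2 h1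
    rw [neg_neg, hypDensity, hnorm, hderiv]
    refine pow_le_pow_left₀ (by positivity) ?_ 2
    rw [div_le_div_iff₀ (by positivity) this]
    calc 2 * ‖g z‖ * ‖deriv g z‖ * (1 - ‖F z‖) = 2 * (1 - ‖F z‖) * ‖deriv g z‖ * ‖g z‖ := by ring
      _ ≤ 2 * (1 - ‖F z‖) * ‖deriv g z‖ * √s := by gcongr
      _ = _ := by ring

lemma ne_zero_of_one_sub_sq_norm_le (hG : IsSelfMap G) (hz : z ∈ 𝔻)
    (hC : 1 - ‖G z‖ ^ 2 ≤ C * ((1 - ‖z‖ ^ 2) * ‖k z‖)) : k z ≠ 0 := fun h => by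
  rw [h, norm_zero, mul_zero, mul_zero] at hC
  exact hC.not_gt (hG.one_sub_sq_norm_pos hz)

/-- The quotient of the metric `‖F'‖ / (2 * (1 - ‖F‖) * √‖S‖)` by the pullback
`‖G'‖ / (1 - ‖G‖ ^ 2)` of the hyperbolic metric, where `F' = p * u` and `G' = p * k` and the common
factor `p` is cancelled. -/
noncomputable def ahlforsRatio (F S u G k : ℂ → ℂ) (z : ℂ) : ℝ :=
  ‖u z‖ * (1 - ‖G z‖ ^ 2) / (2 * (1 - ‖F z‖) * √‖S z‖ * ‖k z‖)

lemma ahlforsRatio_le (hF : IsSelfMap F) (hG : IsSelfMap G) (hz : z ∈ 𝔻) (hS0 : S z ≠ 0)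
    (hM : ‖u z‖ ≤ M * (2 * (1 - ‖F z‖) * √‖S z‖))
    (hC : 1 - ‖G z‖ ^ 2 ≤ C * ((1 - ‖z‖ ^ 2) * ‖k z‖)) (hk0 : 0 < ‖k z‖) :
    ahlforsRatio F S u G k z ≤ M * C * (1 - ‖z‖ ^ 2) := by
  have := sub_pos.2 (hF.norm_lt_one hz)
  have := Real.sqrt_pos.2 (norm_pos_iff.2 hS0)
  have hG1 := (hG.one_sub_sq_norm_pos hz).le
  rw [ahlforsRatio, div_le_iff₀ (by positivity)]
  calc ‖u z‖ * (1 - ‖G z‖ ^ 2)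
      ≤ M * (2 * (1 - ‖F z‖) * √‖S z‖) * (C * ((1 - ‖z‖ ^ 2) * ‖k z‖)) :=
        mul_le_mul hM hC hG1 ((norm_nonneg _).trans hM)
    _ = _ := by ring

lemma exists_hasLeviAt_le_log_ahlforsRatio (hF : IsSelfMap F) (hG : IsSelfMap G)
    (hS : AnalyticAt ℂ S z) (hu : AnalyticAt ℂ u z) (hk : AnalyticAt ℂ k z) (hz : z ∈ 𝔻)
    (hS0 : S z ≠ 0) (hFS : ‖F z‖ ≤ ‖S z‖) (hk0 : k z ≠ 0) (hFu : deriv F z = p z * u z)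
    (hGk : deriv G z = p z * k z) (h1 : 1 < ahlforsRatio F S u G k z) :
    ∃ ψ L, 0 ≤ L ∧ HasLeviAt ψ z L ∧
      (∀ᶠ w in 𝓝 z, ψ w ≤ Real.log (ahlforsRatio F S u G k w)) ∧
      ψ z = Real.log (ahlforsRatio F S u G k z) := by
  have hu0 : u z ≠ 0 := fun h => by simp [ahlforsRatio, h, zero_lt_one.not_gt] at h1
  have hlog : ∀ᶠ w in 𝓝 z, Real.log (ahlforsRatio F S u G k w) =
      Real.log ‖u w‖ + Real.log (1 - ‖G w‖ ^ 2) - 2⁻¹ * Real.log ‖S w‖ - Real.log ‖k w‖ -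
        Real.log 2 - Real.log (1 - ‖F w‖) := by
    filter_upwards [hu.continuousAt.eventually_ne hu0, hS.continuousAt.eventually_ne hS0,
      hk.continuousAt.eventually_ne hk0, isOpen_ball.mem_nhds hz] with w huw hSw hkw hwD
    have hFw := sub_pos.2 (hF.norm_lt_one hwD)
    have hGw := hG.one_sub_sq_norm_pos hwD
    have hSw' := Real.sqrt_pos.2 (norm_pos_iff.2 hSw)
    rw [← norm_pos_iff] at huw hkw
    rw [ahlforsRatio, Real.log_div (by positivity) (by positivity), Real.log_mul huw.ne' hGw.ne',
      Real.log_mul (by positivity) hkw.ne', Real.log_mul (by positivity) hSw'.ne',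
      Real.log_mul two_ne_zero hFw.ne', Real.log_sqrt (norm_nonneg _)]
    ring
  obtain ⟨ψ, L, hL, hψ, hψle, hψz⟩ := exists_hasLeviAt_le_neg_log_one_sub_norm (hF.analyticAt hz)
    (hF.norm_lt_one hz) (norm_pos_iff.2 hS0) hFS
  refine ⟨_, _, ?_, (((((HasLeviAt.log_norm hu hu0).add (.log_one_sub_sq_norm (hG.analyticAt hz)
    (hG.norm_lt_one hz))).sub ((HasLeviAt.log_norm hS hS0).const_mul 2⁻¹)).sub
    (.log_norm hk hk0)).sub (.const (Real.log 2) z)).add hψ, ?_, ?_⟩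
  · suffices hypDensity G z ^ 2 ≤ L by linarith
    refine le_trans (pow_le_pow_left₀ ?_ ?_ 2) hL
    all_goals have := sub_pos.2 (hF.norm_lt_one hz)
    all_goals have := hG.one_sub_sq_norm_pos hz
    all_goals have := Real.sqrt_pos.2 (norm_pos_iff.2 hS0)
    · unfold hypDensity
      positivity
    · rw [ahlforsRatio, lt_div_iff₀ (by have := norm_pos_iff.2 hk0; positivity), one_mul] at h1
      rw [hypDensity, hGk, hFu, norm_mul, norm_mul, div_le_div_iff₀ (by assumption) (by positivity)]
      linarith [mul_le_mul_of_nonneg_left h1.le (norm_nonneg (p z))]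
  · filter_upwards [hlog, hψle] with w hw hψw
    linarith
  · linarith [hlog.self_of_nhds]

/-- **Ahlfors' lemma** for the metric `‖F'‖ / (2 * (1 - ‖F‖) * √‖S‖)`. -/
theorem ahlforsRatio_le_one (hF : IsSelfMap F) (hG : IsSelfMap G) (hS : DifferentiableOn ℂ S 𝔻)
    (hu : DifferentiableOn ℂ u 𝔻) (hk : DifferentiableOn ℂ k 𝔻) (hS0 : ∀ z ∈ 𝔻, S z ≠ 0)
    (hFS : ∀ z ∈ 𝔻, ‖F z‖ ≤ ‖S z‖) (hFu : ∀ z ∈ 𝔻, deriv F z = p z * u z)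
    (hGk : ∀ z ∈ 𝔻, deriv G z = p z * k z)
    (hM : ∀ z ∈ 𝔻, ‖u z‖ ≤ M * (2 * (1 - ‖F z‖) * √‖S z‖))
    (hC : ∀ z ∈ 𝔻, 1 - ‖G z‖ ^ 2 ≤ C * ((1 - ‖z‖ ^ 2) * ‖k z‖)) (hz : z ∈ 𝔻) :
    ahlforsRatio F S u G k z ≤ 1 := by
  have hk0 : ∀ z ∈ 𝔻, k z ≠ 0 := fun z hz => ne_zero_of_one_sub_sq_norm_le hG hz (hC z hz)
  have han : ∀ {h : ℂ → ℂ}, DifferentiableOn ℂ h 𝔻 → ∀ {z}, z ∈ 𝔻 → AnalyticAt ℂ h z :=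
    fun hh _ hz => hh.analyticAt (isOpen_ball.mem_nhds hz)
  have hcont : ContinuousOn (ahlforsRatio F S u G k) 𝔻 := by
    refine (hu.continuousOn.norm.mul (continuousOn_const.sub
      (hG.differentiableOn.continuousOn.norm.pow 2))).div (((continuousOn_const.mul
      (continuousOn_const.sub hF.differentiableOn.continuousOn.norm)).mul
      hS.continuousOn.norm.sqrt).mul hk.continuousOn.norm) fun z hz => ?_
    have := sub_pos.2 (hF.norm_lt_one hz)
    have := norm_pos_iff.2 (hS0 z hz)
    have := norm_pos_iff.2 (hk0 z hz)
    positivity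
  refine le_one_of_levi_nonneg isOpen_ball isBounded_ball hcont (fun c hc => ?_)
    (fun z hz h1 => exists_hasLeviAt_le_log_ahlforsRatio hF hG (han hS hz) (han hu hz) (han hk hz)
      hz (hS0 z hz) (hFS z hz) (hk0 z hz) (hFu z hz) (hGk z hz) h1) hz
  have hlim : ContinuousAt (fun t : ℝ => M * C * (1 - t ^ 2)) 1 := by fun_prop
  obtain ⟨R, hR1, hR⟩ := (mem_nhdsLE_iff_exists_Ioc_subset' zero_lt_one).1
    (nhdsWithin_le_nhds (hlim.eventually_lt_const (by simpa using one_pos.trans hc)))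
  refine ⟨closedBall 0 R, closedBall_subset_ball hR1, isCompact_closedBall 0 R, fun z hz => ?_⟩
  have hzR : ‖z‖ ∈ Set.Ioc R 1 := ⟨not_le.1 fun h => hz.2 (mem_closedBall_zero_iff.2 h),
    (mem_ball_zero_iff.1 hz.1).le⟩
  exact (ahlforsRatio_le hF hG hz.1 (hS0 z hz.1) (hM z hz.1) (hC z hz.1)
    (norm_pos_iff.2 (hk0 z hz.1))).trans (hR hzR).le

end AhlforsComparison

section DensityBound

lemma finite_setOf_eq_zero {𝕜 : Type*} [NontriviallyNormedField 𝕜] {v : 𝕜 → 𝕜} {K : Set 𝕜}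
    (hv : AnalyticOnNhd 𝕜 v K) (htop : ∀ z ∈ K, analyticOrderAt v z ≠ ⊤) (hK : IsCompact K) :
    {z ∈ K | v z = 0}.Finite := by
  by_contra hinf
  obtain ⟨x, hx, hacc⟩ := Set.Infinite.exists_accPt_of_subset_isCompact hinf hK
    (Set.sep_subset K _)
  obtain ⟨y, hy, hy0⟩ := ((accPt_iff_frequently_nhdsNE.1 hacc).and_eventually
    ((hv x hx).eventually_eq_zero_or_eventually_ne_zero.resolve_left
      (mt analyticOrderAt_eq_top.2 (htop x hx)))).exists
  exact hy0 hy.2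

lemma analyticOrderAt_prod_sub {𝕜 ι : Type*} [NontriviallyNormedField 𝕜] [Fintype ι] (w : ι → 𝕜)
    (x : 𝕜) : analyticOrderAt (fun z => ∏ j, (z - w j)) x = {j | w j = x}.encard := by
  classical
  have hord : ∀ j, analyticOrderAt (fun z => z - w j) x = if w j = x then 1 else 0 := fun j => by
    split_ifs with h
    · exact h ▸ analyticOrderAt_id_sub_const_self
    · exact analyticOrderAt_id_sub_const_of_ne (Ne.symm h)
  rw [analyticOrderAt_fun_prod _ fun j _ => by fun_prop, Finset.sum_congr rfl fun j _ => hord j,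
    Finset.sum_boole, ← Finset.coe_filter_univ, Set.encard_coe_eq_coe_finsetCard]

universe u in
lemma exists_eq_prod_sub_mul {𝕜 : Type u} [NontriviallyNormedField 𝕜] [CompleteSpace 𝕜]
    {U K Z : Set 𝕜} {v : 𝕜 → 𝕜} (hU : IsOpen U)
    (hv : AnalyticOnNhd 𝕜 v U) (htop : ∀ z ∈ U, analyticOrderAt v z ≠ ⊤)
    (hK : IsCompact K) (hKU : K ⊆ U) (hZK : Z ⊆ K) :
    ∃ (ι : Type u) (_ : Fintype ι) (w : ι → 𝕜) (q : 𝕜 → 𝕜), (∀ j, w j ∈ Z) ∧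
      AnalyticOnNhd 𝕜 q U ∧ (∀ z ∈ U, v z = (∏ j, (z - w j)) * q z) ∧ ∀ z ∈ Z, q z ≠ 0 := by
  set Z₀ := {z ∈ Z | v z = 0}
  have hZ₀ : Z₀.Finite := (finite_setOf_eq_zero (hv.mono hKU) (fun z hz => htop z (hKU hz))
    hK).subset fun z hz => ⟨hZK hz.1, hz.2⟩
  obtain ⟨ι, w, hw, hN⟩ := exists_family_encard_eq Z₀ (analyticOrderNatAt v)
  have hι : Finite ι := Set.finite_univ_iff.1 <|
    (hZ₀.preimage' (f := w) fun z hz => Set.encard_ne_top_iff.1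
      ((hN z hz).trans_ne (ENat.natCast_ne_top _))).subset fun j _ => hw j
  have := Fintype.ofFinite ι
  set P : 𝕜 → 𝕜 := fun z => ∏ j, (z - w j)
  have hP : AnalyticOnNhd 𝕜 P U := fun z _ =>
    Finset.analyticAt_fun_prod _ fun j _ => by fun_prop
  have hPv : ∀ z ∈ Z₀, analyticOrderAt P z = analyticOrderAt v z := fun z hz =>
    (analyticOrderAt_prod_sub w z).trans
      ((hN z hz).trans (Nat.cast_analyticOrderNatAt (htop z (hKU (hZK hz.1)))))
  have hP0 : ∀ z ∉ Z₀, analyticOrderAt P z = 0 := fun z hz => by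
    rw [analyticOrderAt_prod_sub, Set.encard_eq_zero, Set.eq_empty_iff_forall_notMem]
    rintro j rfl
    exact hz (hw j)
  have hle : ∀ z ∈ U, analyticOrderAt P z ≤ analyticOrderAt v z := fun z _ => by
    by_cases hz : z ∈ Z₀
    · exact (hPv z hz).le
    · exact (hP0 z hz).trans_le bot_le
  obtain ⟨q, hq, hvq⟩ := exists_analyticOnNhd_eq_mul hv hP
    (fun z hz => ne_top_of_le_ne_top (htop z hz) (hle z hz)) hle
  refine ⟨ι, this, w, q, fun j => (hw j).1, hq, fun z hz => (hvq z hz).trans (mul_comm _ _),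
    fun z hz hqz => ?_⟩
  have hzU := hKU (hZK hz)
  exact ne_zero_of_analyticOrderAt_eq (hP z hzU) (hq z hzU)
    (eventually_of_mem (hU.mem_nhds hzU) hvq) (hPv z ⟨hz, by rw [hvq z hzU, hqz, zero_mul]⟩)
    (htop z hzU) hqz

variable {U : Set ℂ} {F S : ℂ → ℂ} {x : ℂ}

lemma exists_ahlforsRatio_le_one (hU : IsOpen U) (hUc : IsPreconnected U)
    (hUD : closedBall 0 1 ⊆ U) (hF : DifferentiableOn ℂ F U) (hS : DifferentiableOn ℂ S U)
    (hF1 : ∀ z ∈ U, ‖F z‖ < 1) (hS0 : ∀ z ∈ U, S z ≠ 0) (hFS : ∀ z ∈ U, ‖F z‖ ≤ ‖S z‖)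
    (hF0 : ∃ z ∈ U, deriv F z ≠ 0) :
    ∃ p u G k : ℂ → ℂ, DifferentiableOn ℂ u 𝔻 ∧ IsSelfMap G ∧ DifferentiableOn ℂ k 𝔻 ∧
      (∀ z ∈ 𝔻, deriv F z = p z * u z) ∧ (∀ z ∈ 𝔻, deriv G z = p z * k z) ∧
      (∀ z ∈ 𝔻, u z ≠ 0) ∧ (∀ z ∈ 𝔻, k z ≠ 0) ∧ ∀ z ∈ 𝔻, ahlforsRatio F S u G k z ≤ 1 := by
  have hDU : 𝔻 ⊆ U := ball_subset_closedBall.trans hUD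
  have hFD : IsSelfMap F := ⟨hF.mono hDU, fun z hz => mem_ball_zero_iff.2 (hF1 z (hDU hz))⟩
  obtain ⟨ι, _, w, u, hw, hu, hFu, hu0⟩ := exists_eq_prod_sub_mul hU
    ((hF.analyticOnNhd hU).deriv)
    (fun z hz => analyticOrderAt_ne_top_of_exists_ne_zero hU hUc (hF.deriv hU) hF0 hz)
    (isCompact_closedBall 0 1) hUD (ball_subset_closedBall (x := (0 : ℂ)))
  obtain ⟨G, k, C, hG, hk, hGk, hC⟩ :=
    exists_isSelfMap_deriv_eq_prod_sub_mul fun j => mem_ball_zero_iff.1 (hw j)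
  have hpos : ∀ z ∈ U, 0 < 2 * (1 - ‖F z‖) * √‖S z‖ := fun z hz => by
    have := sub_pos.2 (hF1 z hz)
    have := norm_pos_iff.2 (hS0 z hz)
    positivity
  obtain ⟨M, hM⟩ := (isCompact_closedBall (0 : ℂ) 1).bddAbove_image
    (f := fun z => ‖u z‖ / (2 * (1 - ‖F z‖) * √‖S z‖))
    ((hu.continuousOn.norm.div ((continuousOn_const.mul
      (continuousOn_const.sub hF.continuousOn.norm)).mul hS.continuousOn.norm.sqrt)
      fun z hz => (hpos z hz).ne').mono hUD)
  have huD := hu.differentiableOn.mono hDU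
  have hFuD : ∀ z ∈ 𝔻, deriv F z = (∏ j, (z - w j)) * u z := fun z hz => hFu z (hDU hz)
  refine ⟨_, u, G, k, huD, hG, hk, hFuD, hGk, hu0,
    fun z hz => ne_zero_of_one_sub_sq_norm_le hG hz (hC z hz), fun z hz => ?_⟩
  exact ahlforsRatio_le_one hFD hG (hS.mono hDU) huD hk (fun z hz => hS0 z (hDU hz))
    (fun z hz => hFS z (hDU hz)) hFuD hGk (fun z hz => (div_le_iff₀ (hpos z (hDU hz))).1
      (hM ⟨z, ball_subset_closedBall hz, rfl⟩)) hC hz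

/-- `h` is `G` followed by the automorphism taking `G x` to `0`. -/
lemma exists_isSelfMap_one_le_of_closedBall_subset (hU : IsOpen U) (hUc : IsPreconnected U)
    (hUD : closedBall 0 1 ⊆ U) (hF : DifferentiableOn ℂ F U) (hS : DifferentiableOn ℂ S U)
    (hF1 : ∀ z ∈ U, ‖F z‖ < 1) (hS0 : ∀ z ∈ U, S z ≠ 0) (hFS : ∀ z ∈ U, ‖F z‖ ≤ ‖S z‖)
    (hF0 : ∃ z ∈ U, deriv F z ≠ 0) (hx : x ∈ 𝔻) :
    ∃ h q : ℂ → ℂ, IsSelfMap h ∧ DifferentiableOn ℂ q 𝔻 ∧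
      (∀ z ∈ 𝔻, deriv h z = q z * deriv F z) ∧ h x = 0 ∧
      1 ≤ 2 * (1 - ‖F x‖) * √‖S x‖ * ‖q x‖ := by
  obtain ⟨p, u, G, k, hu, hG, hk, hFu, hGk, hu0, hk0, hle⟩ :=
    exists_ahlforsRatio_le_one hU hUc hUD hF hS hF1 hS0 hFS hF0
  have hm := IsSelfMap.moebius (hG.norm_lt_one hx)
  refine ⟨moebius (G x) ∘ G, fun z => deriv (moebius (G x)) (G z) * k z / u z, hm.comp hG,
    ((hm.differentiableOn_deriv.comp hG.differentiableOn hG.mapsTo).mul hk).div hu hu0,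
    fun z hz => ?_, moebius_self _, ?_⟩
  · have := hu0 z hz
    rw [deriv_comp z (hm.differentiableAt (hG.mapsTo hz)) (hG.differentiableAt hz), hGk z hz,
      hFu z hz]
    field
  · have hxU := hUD (ball_subset_closedBall hx)
    have := sub_pos.2 (hF1 x hxU)
    have := norm_pos_iff.2 (hS0 x hxU)
    have := hG.one_sub_sq_norm_pos hx
    have := norm_pos_iff.2 (hu0 x hx)
    have := norm_pos_iff.2 (hk0 x hx)
    have hle := hle x hx
    rw [ahlforsRatio, div_le_one (by positivity)] at hle
    rw [norm_div, norm_mul, norm_deriv_moebius (hG.norm_lt_one hx) (hG.norm_lt_one hx),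
      moebius_self, norm_zero, zero_pow two_ne_zero, sub_zero]
    calc (1 : ℝ) = ‖u x‖ * (1 - ‖G x‖ ^ 2) / (‖u x‖ * (1 - ‖G x‖ ^ 2)) := by field
      _ ≤ 2 * (1 - ‖F x‖) * √‖S x‖ * ‖k x‖ / (‖u x‖ * (1 - ‖G x‖ ^ 2)) := by gcongr
      _ = _ := by field

end DensityBound

section MaximalDensity

lemma mapsTo_mul_ball_inv {r : ℝ} (hr : 0 < r) :
    Set.MapsTo (fun z => (r : ℂ) * z) (ball 0 r⁻¹) 𝔻 := fun z hz => by
  rw [mem_ball_zero_iff, ← one_div, lt_div_iff₀' hr] at hz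
  rwa [mem_ball_zero_iff, norm_mul, Complex.norm_real, Real.norm_of_nonneg hr.le]

section Exhaustion

variable {F S : ℂ → ℂ} {x : ℂ} {r : ℝ}

lemma exists_differentiableOn_ball_one_le (hF : IsSelfMap F) (hS : DifferentiableOn ℂ S 𝔻)
    (hS0 : ∀ z ∈ 𝔻, S z ≠ 0) (hFS : ∀ z ∈ 𝔻, ‖F z‖ ≤ ‖S z‖) (hF0 : ∃ z ∈ 𝔻, deriv F z ≠ 0)
    (hr : r < 1) (hx : x ∈ ball 0 r) :
    ∃ h q : ℂ → ℂ, DifferentiableOn ℂ h (ball 0 r) ∧ DifferentiableOn ℂ q (ball 0 r) ∧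
      (∀ z ∈ ball 0 r, ‖h z‖ ≤ 1) ∧ (∀ z ∈ ball 0 r, deriv h z = q z * deriv F z) ∧ h x = 0 ∧
      1 ≤ 2 * (1 - ‖F x‖) * √‖S x‖ * ‖q x‖ := by
  have hr0 : 0 < r := pos_of_mem_ball hx
  have hmaps := mapsTo_mul_ball_inv hr0
  have hmaps' : Set.MapsTo (fun z => ((r⁻¹ : ℝ) : ℂ) * z) (ball 0 r) 𝔻 := by
    simpa only [inv_inv] using mapsTo_mul_ball_inv (inv_pos.2 hr0)
  have hcancel : ∀ z : ℂ, (r : ℂ) * (((r⁻¹ : ℝ) : ℂ) * z) = z := fun z => by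
    rw [Complex.ofReal_inv, mul_inv_cancel_left₀ (Complex.ofReal_ne_zero.2 hr0.ne')]
  have hderiv : ∀ z, deriv (fun w => F (r * w)) z = r * deriv F (r * z) := fun z =>
    deriv_comp_mul_left _ F z
  have hd : ∀ c : ℂ, Differentiable ℂ (c * ·) := fun c => differentiable_id.const_mul c
  have hF0' : ∃ z ∈ ball 0 r⁻¹, deriv (fun w => F (r * w)) z ≠ 0 := by
    obtain ⟨z, hz, hz0⟩ := hF0
    refine ⟨(r⁻¹ : ℝ) * z, ?_, ?_⟩
    · rw [mem_ball_zero_iff, norm_mul, Complex.norm_real, Real.norm_of_nonneg (by positivity)]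
      exact mul_lt_of_lt_one_right (by positivity) (mem_ball_zero_iff.1 hz)
    · rw [hderiv, hcancel]
      exact mul_ne_zero (Complex.ofReal_ne_zero.2 hr0.ne') hz0
  obtain ⟨H, Q, hH, hQ, hHQ, hHx, hle⟩ := exists_isSelfMap_one_le_of_closedBall_subset
    (F := fun z => F (r * z)) (S := fun z => S (r * z)) isOpen_ball
    (convex_ball 0 r⁻¹).isPreconnected (closedBall_subset_ball ((one_lt_inv₀ hr0).2 hr))
    (hF.differentiableOn.comp (hd r).differentiableOn hmaps)
    (hS.comp (hd r).differentiableOn hmaps) (fun z hz => hF.norm_lt_one (hmaps hz))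
    (fun z hz => hS0 _ (hmaps hz)) (fun z hz => hFS _ (hmaps hz)) hF0' (hmaps' hx)
  refine ⟨fun z => H ((r⁻¹ : ℝ) * z), fun z => Q ((r⁻¹ : ℝ) * z),
    hH.differentiableOn.comp (hd _).differentiableOn hmaps',
    hQ.comp (hd _).differentiableOn hmaps', fun z hz => (hH.norm_lt_one (hmaps' hz)).le,
    fun z hz => ?_, hHx, by simpa only [hcancel] using hle⟩
  rw [deriv_comp_mul_left, hHQ _ (hmaps' hz), hderiv, hcancel, smul_eq_mul, Complex.ofReal_inv]
  have := Complex.ofReal_ne_zero.2 hr0.ne'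
  field

end Exhaustion

section QuotientLimits

variable {ι : Type*} {U V : Set ℂ} {v : ℂ → ℂ} {z : ℂ}

lemma exists_norm_le_of_norm_mul_le (hv : AnalyticAt ℂ v z) (hv0 : ∀ᶠ w in 𝓝[≠] z, v w ≠ 0)
    (hV : V ∈ 𝓝 z) :
    ∃ r > 0, ball z r ⊆ V ∧ ∃ C, ∀ (q : ℂ → ℂ) (M : ℝ), DifferentiableOn ℂ q V →
      (∀ w ∈ V, ‖q w * v w‖ ≤ M) → ∀ w ∈ ball z r, ‖q w‖ ≤ M * C := by
  obtain ⟨r, hr, hrV⟩ := nhds_basis_closedBall.mem_iff.1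
    (((eventually_nhdsWithin_iff.1 hv0).and hv.eventually_analyticAt).and hV)
  have hv0 : ∀ w ∈ sphere z r, v w ≠ 0 := fun w hw =>
    (hrV (sphere_subset_closedBall hw)).1.1 (ne_of_mem_sphere hw hr.ne')
  obtain ⟨C, hC⟩ := (isCompact_sphere z r).exists_bound_of_continuousOn (f := fun w => (v w)⁻¹)
    fun w hw => ((hrV (sphere_subset_closedBall hw)).1.2.continuousAt.inv₀
      (hv0 w hw)).continuousWithinAt
  refine ⟨r, hr, fun w hw => (hrV (ball_subset_closedBall hw)).2, C, fun q M hq hM w hw => ?_⟩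
  refine Complex.norm_le_of_forall_mem_frontier_norm_le isBounded_ball
    (hq.mono fun y hy => (hrV (closure_ball_subset_closedBall hy)).2).diffContOnCl
    (fun y hy => ?_) (subset_closure hw)
  rw [frontier_ball z hr.ne'] at hy
  have hyM := hM y (hrV (sphere_subset_closedBall hy)).2
  calc ‖q y‖ = ‖q y * v y‖ * ‖(v y)⁻¹‖ := by rw [← norm_mul, mul_inv_cancel_right₀ (hv0 y hy)]
    _ ≤ M * C := mul_le_mul hyM (hC y hy) (norm_nonneg _) ((norm_nonneg _).trans hyM)

lemma exists_norm_deriv_le (hV : V ∈ 𝓝 z) (C : ℝ) :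
    ∃ W ∈ 𝓝 z, W ⊆ V ∧ ∃ M, ∀ h : ℂ → ℂ, DifferentiableOn ℂ h V → (∀ w ∈ V, ‖h w‖ ≤ C) →
      ∀ w ∈ W, ‖deriv h w‖ ≤ M := by
  obtain ⟨δ, hδ, hδV⟩ := nhds_basis_closedBall.mem_iff.1 hV
  have hsub : ∀ w ∈ closedBall z (δ / 2), closedBall w (δ / 2) ⊆ V := fun w hw =>
    (closedBall_subset_closedBall' (by linarith [mem_closedBall.1 hw])).trans hδV
  refine ⟨closedBall z (δ / 2), closedBall_mem_nhds z (half_pos hδ),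
    (closedBall_subset_closedBall (half_le_self hδ.le)).trans hδV, C / (δ / 2),
    fun h hh hC w hw => Complex.norm_deriv_le_of_forall_mem_sphere_norm_le (half_pos hδ)
      (hh.mono (closure_ball_subset_closedBall.trans (hsub w hw))).diffContOnCl
      fun y hy => hC y (hsub w hw (sphere_subset_closedBall hy))⟩

/-- `q` stays bounded near the zeros of `v`, by the maximum principle on small circles around
them. -/
lemma exists_ball_norm_le_of_deriv_eq_mul (hv : AnalyticAt ℂ v z) (hv0 : ∀ᶠ w in 𝓝[≠] z, v w ≠ 0)
    (hV : V ∈ 𝓝 z) :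
    ∃ r > 0, ball z r ⊆ V ∧ ∃ C, ∀ h q : ℂ → ℂ, DifferentiableOn ℂ h V → DifferentiableOn ℂ q V →
      (∀ w ∈ V, ‖h w‖ ≤ 1) → (∀ w ∈ V, deriv h w = q w * v w) → ∀ w ∈ ball z r, ‖q w‖ ≤ C := by
  obtain ⟨W, hW, hWV, M, hM⟩ := exists_norm_deriv_le hV 1
  obtain ⟨r, hr, hrW, C, hC⟩ := exists_norm_le_of_norm_mul_le hv hv0 hW
  refine ⟨r, hr, hrW.trans hWV, M * C, fun h q hh hq hle hhq => hC q M (hq.mono hWV) fun w hw => ?_⟩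
  rw [← hhq w (hWV hw)]
  exact hM h hh hle w hw

lemma exists_tendsto_of_deriv_eq_mul (l : Ultrafilter ι) {h q : ι → ℂ → ℂ} (hU : IsOpen U)
    (hv : DifferentiableOn ℂ v U) (hv0 : ∀ z ∈ U, ∀ᶠ w in 𝓝[≠] z, v w ≠ 0)
    (hhq : ∀ z ∈ U, ∃ V ∈ 𝓝 z, ∀ᶠ i in (l : Filter ι), DifferentiableOn ℂ (h i) V ∧
      DifferentiableOn ℂ (q i) V ∧ (∀ w ∈ V, ‖h i w‖ ≤ 1) ∧
      ∀ w ∈ V, deriv (h i) w = q i w * v w) :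
    ∃ g p : ℂ → ℂ, DifferentiableOn ℂ g U ∧ DifferentiableOn ℂ p U ∧
      (∀ z ∈ U, deriv g z = p z * v z) ∧ (∀ z ∈ U, Tendsto (h · z) l (𝓝 (g z))) ∧
      ∀ z ∈ U, Tendsto (q · z) l (𝓝 (p z)) := by
  have hloc : ∀ z ∈ U, ∃ r > 0, ball z r ⊆ U ∧ ∃ C, ∀ᶠ i in (l : Filter ι),
      (DifferentiableOn ℂ (h i) (ball z r) ∧ ∀ w ∈ ball z r, ‖h i w‖ ≤ 1) ∧
      (DifferentiableOn ℂ (q i) (ball z r) ∧ ∀ w ∈ ball z r, ‖q i w‖ ≤ C) ∧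
      ∀ w ∈ ball z r, deriv (h i) w = q i w * v w := fun z hz => by
    obtain ⟨V, hV, hVhq⟩ := hhq z hz
    obtain ⟨r, hr, hrV, C, hC⟩ := exists_ball_norm_le_of_deriv_eq_mul
      (hv.analyticAt (hU.mem_nhds hz)) (hv0 z hz) (inter_mem hV (hU.mem_nhds hz))
    obtain ⟨hrV, hrU⟩ := Set.subset_inter_iff.1 hrV
    refine ⟨r, hr, hrU, C, hVhq.mono fun i hi => ?_⟩
    obtain ⟨hh, hq, hle, hderiv⟩ := hi
    exact ⟨⟨hh.mono hrV, fun w hw => hle w (hrV hw)⟩, ⟨hq.mono hrV, hC (h i) (q i)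
      (hh.mono Set.inter_subset_left) (hq.mono Set.inter_subset_left) (fun w hw => hle w hw.1)
      fun w hw => hderiv w hw.1⟩, fun w hw => hderiv w (hrV hw)⟩
  obtain ⟨g, hg⟩ := exists_tendstoLocallyUniformlyOn_of_eventually_norm_le l fun z hz => by
    obtain ⟨r, hr, -, C, hC⟩ := hloc z hz
    exact ⟨r, hr, 1, hC.mono fun i hi => hi.1⟩
  obtain ⟨p, hp⟩ := exists_tendstoLocallyUniformlyOn_of_eventually_norm_le l fun z hz => by
    obtain ⟨r, hr, -, C, hC⟩ := hloc z hz
    exact ⟨r, hr, C, hC.mono fun i hi => hi.2.1⟩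
  refine ⟨g, p, fun z hz => ?_, fun z hz => ?_, fun z hz => ?_, fun z hz => hg.tendsto_at hz,
    fun z hz => hp.tendsto_at hz⟩
  all_goals obtain ⟨r, hr, hrU, C, hC⟩ := hloc z hz
  · exact (((hg.mono hrU).differentiableOn (hC.mono fun i hi => hi.1.1)
      isOpen_ball).differentiableAt (ball_mem_nhds z hr)).differentiableWithinAt
  · exact (((hp.mono hrU).differentiableOn (hC.mono fun i hi => hi.2.1.1)
      isOpen_ball).differentiableAt (ball_mem_nhds z hr)).differentiableWithinAt
  · have hz := mem_ball_self (x := z) hr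
    exact tendsto_nhds_unique
      (((hg.mono hrU).deriv (hC.mono fun i hi => hi.1.1) isOpen_ball).tendsto_at hz)
      (((hp.tendsto_at (hrU hz)).mul_const (v z)).congr' (hC.mono fun i hi => (hi.2.2 z hz).symm))

end QuotientLimits

section Maximality

variable {F S : ℂ → ℂ} {x : ℂ}

lemma exists_differentiableOn_unitDisc_one_le (hF : IsSelfMap F) (hS : DifferentiableOn ℂ S 𝔻)
    (hS0 : ∀ z ∈ 𝔻, S z ≠ 0) (hFS : ∀ z ∈ 𝔻, ‖F z‖ ≤ ‖S z‖) (hF0 : ∃ z ∈ 𝔻, deriv F z ≠ 0)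
    (hx : x ∈ 𝔻) :
    ∃ h q : ℂ → ℂ, DifferentiableOn ℂ h 𝔻 ∧ DifferentiableOn ℂ q 𝔻 ∧ (∀ z ∈ 𝔻, ‖h z‖ ≤ 1) ∧
      (∀ z ∈ 𝔻, deriv h z = q z * deriv F z) ∧ h x = 0 ∧
      1 ≤ 2 * (1 - ‖F x‖) * √‖S x‖ * ‖q x‖ := by
  have hex := fun (r : ℝ) (hr : r ∈ Set.Ioo ‖x‖ 1) => exists_differentiableOn_ball_one_le
    hF hS hS0 hFS hF0 hr.2 (mem_ball_zero_iff.2 hr.1)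
  choose! h q hh hq hle hhq hhx hqx using hex
  set l := Ultrafilter.of (𝓝[<] (1 : ℝ))
  have hIoo : ∀ z ∈ 𝔻, ∀ᶠ r in (l : Filter ℝ), r ∈ Set.Ioo ‖z‖ 1 := fun z hz =>
    Ultrafilter.of_le _ (Ioo_mem_nhdsLT (mem_ball_zero_iff.1 hz))
  obtain ⟨g, p, hg, hp, hgp, hlimg, hlimp⟩ := exists_tendsto_of_deriv_eq_mul l (h := h) (q := q)
    isOpen_ball hF.differentiableOn_deriv
    (fun z hz => eventually_ne_zero_of_exists_ne_zero isOpen_ball isPreconnected_unitDisc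
      hF.differentiableOn_deriv hF0 hz) fun z hz => by
      obtain ⟨ρ, hzρ, hρ⟩ := exists_between (mem_ball_zero_iff.1 hz)
      refine ⟨ball 0 ρ, isOpen_ball.mem_nhds (mem_ball_zero_iff.2 hzρ), ?_⟩
      filter_upwards [hIoo x hx, Ultrafilter.of_le _ (Ioo_mem_nhdsLT hρ)] with r hr hρr
      have hsub := ball_subset_ball (x := (0 : ℂ)) hρr.1.le
      exact ⟨(hh r hr).mono hsub, (hq r hr).mono hsub, fun w hw => hle r hr w (hsub hw),
        fun w hw => hhq r hr w (hsub hw)⟩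
  refine ⟨g, p, hg, hp, fun z hz => ?_, hgp, ?_, ?_⟩
  · refine le_of_tendsto (hlimg z hz).norm ?_
    filter_upwards [hIoo x hx, hIoo z hz] with r hxr hzr
    exact hle r hxr z (mem_ball_zero_iff.2 hzr.1)
  · exact tendsto_nhds_unique (hlimg x hx)
      (tendsto_const_nhds.congr' ((hIoo x hx).mono fun r hr => (hhx r hr).symm))
  · exact ge_of_tendsto ((hlimp x hx).norm.const_mul _) ((hIoo x hx).mono hqx)

namespace IsDensityMaximal

lemma one_add_norm_le_two_mul_sqrt (hF : IsDensityMaximal F) (hS : DifferentiableOn ℂ S 𝔻)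
    (hS0 : ∀ z ∈ 𝔻, S z ≠ 0) (hFS : ∀ z ∈ 𝔻, ‖F z‖ ≤ ‖S z‖) (hx : x ∈ 𝔻) :
    1 + ‖F x‖ ≤ 2 * √‖S x‖ := by
  obtain ⟨h, q, hh, hq, hle, hhq, hhx, hqx⟩ := exists_differentiableOn_unitDisc_one_le
    hF.toIsSelfMap hS hS0 hFS hF.exists_deriv_ne_zero hx
  have hhD : IsSelfMap h := by
    by_cases hne : ∃ z ∈ 𝔻, ∃ w ∈ 𝔻, h z ≠ h w
    · exact .of_norm_le_one hh hle hne
    · push Not at hne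
      exact ⟨hh, fun z hz => by rw [hne z hz x hx, hhx]; exact mem_ball_self one_pos⟩
  have hmax := hF.densityRatio_le_one h q hhD hq hhq x hx
  rw [densityRatio, hhx, norm_zero, zero_pow two_ne_zero, sub_zero, div_one] at hmax
  have hF1 := sub_pos.2 (hF.norm_lt_one hx)
  have hq0 : 0 < ‖q x‖ := (norm_nonneg _).lt_of_ne fun h0 => by
    rw [← h0, mul_zero] at hqx
    exact hqx.not_gt one_pos
  refine le_of_mul_le_mul_right ?_ (mul_pos hq0 hF1)
  calc (1 + ‖F x‖) * (‖q x‖ * (1 - ‖F x‖)) = ‖q x‖ * (1 - ‖F x‖ ^ 2) := by ring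
    _ ≤ 2 * (1 - ‖F x‖) * √‖S x‖ * ‖q x‖ := hmax.trans hqx
    _ = _ := by ring

end IsDensityMaximal

end Maximality

end MaximalDensity

section Conclusion

variable {B F f q : ℂ → ℂ} {η z : ℂ}

lemma neg_two_mul_one_sub_le_log {s t : ℝ} (ht0 : 0 ≤ t) (ht : t ≤ 1) (h : 1 + t ≤ 2 * √s) :
    -2 * (1 - t) ≤ Real.log s := by
  have hs : 0 < s := Real.sqrt_pos.1 (by linarith)
  have hinv : ((1 + t) / 2)⁻¹ ≤ 2 - t := by
    rw [inv_div, div_le_iff₀ (by linarith)]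
    nlinarith
  have hlog := (Real.one_sub_inv_le_log_of_pos (by linarith)).trans
    (Real.log_le_log (by linarith) (by linarith : (1 + t) / 2 ≤ √s))
  rw [Real.log_sqrt hs.le] at hlog
  linarith

lemma IsBlaschkeProduct.const_mul (hB : IsBlaschkeProduct B) (hη : ‖η‖ = 1) :
    IsBlaschkeProduct (fun z => η * B z) := by
  obtain ⟨hd, η', m, ι, a, hη', ha, hs, hprod⟩ := hB
  refine ⟨fun z hz => (hd z hz).const_mul η, η * η', m, ι, a, by rw [norm_mul, hη, hη', one_mul],
    ha, hs, fun z hz => ?_⟩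
  simp only [hprod z hz, mul_assoc]

lemma IsBlaschkeProduct.congr (hB : IsBlaschkeProduct B) (h : Set.EqOn f B 𝔻) :
    IsBlaschkeProduct f := by
  obtain ⟨hd, η, m, ι, a, hη, ha, hs, hprod⟩ := hB
  exact ⟨fun z hz => (hd z hz).congr_of_eventuallyEq
    (h.eventuallyEq_of_mem (isOpen_ball.mem_nhds hz)), η, m, ι, a, hη, ha, hs,
    fun z hz => (h hz).trans (hprod z hz)⟩

namespace IsDensityMaximal

lemma neg_two_mul_circleAverage_le_log_norm {S : ℂ → ℂ} (hF : IsDensityMaximal F)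
    (hS : DifferentiableOn ℂ S 𝔻) (hS0 : ∀ z ∈ 𝔻, S z ≠ 0) (hFS : ∀ z ∈ 𝔻, ‖F z‖ ≤ ‖S z‖)
    {ρ : ℝ} (h0 : 0 ≤ ρ) (h1 : ρ < 1) :
    -2 * Real.circleAverage (fun z => 1 - ‖F z‖) 0 ρ ≤ Real.log ‖S 0‖ := by
  have hsphere := sphere_subset_unitDisc h0 h1
  have hball : closedBall (0 : ℂ) |ρ| ⊆ 𝔻 := closedBall_subset_ball (by rwa [abs_of_nonneg h0])
  have hFc := hF.differentiableOn.continuousOn.mono hsphere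
  rw [← smul_eq_mul, ← Real.circleAverage_fun_smul,
    ← AnalyticOnNhd.circleAverage_log_norm_of_ne_zero
      ((hS.analyticOnNhd isOpen_ball).mono hball) fun z hz => hS0 z (hball hz)]
  exact Real.circleAverage_mono (ContinuousOn.circleIntegrable' (by fun_prop))
    (ContinuousOn.circleIntegrable' ((hS.continuousOn.mono hsphere).norm.log
      fun z hz => (norm_pos_iff.2 (hS0 z (hsphere hz))).ne'))
    fun z hz => neg_two_mul_one_sub_le_log (norm_nonneg _) (hF.norm_lt_one (hsphere hz)).le
      (hF.one_add_norm_le_two_mul_sqrt hS hS0 hFS (hsphere hz))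

theorem isBlaschkeProduct (hF : IsDensityMaximal F) (hmean : HasUnimodularMean F) :
    IsBlaschkeProduct F := by
  have h0D : (0 : ℂ) ∈ 𝔻 := mem_ball_self one_pos
  have hF0 : ∃ z ∈ 𝔻, F z ≠ 0 := by
    by_contra! h
    obtain ⟨z, hz, w, hw, hne⟩ := (exists_ne_iff_exists_deriv_ne_zero isOpen_ball
      isPreconnected_unitDisc hF.differentiableOn).2 hF.exists_deriv_ne_zero
    exact hne ((h z hz).trans (h w hw).symm)
  obtain ⟨b, S, hb, hS, hS1, hS0, hFbS⟩ := exists_isBlaschkeProduct_mul hF.differentiableOn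
    (fun z hz => (hF.norm_lt_one hz).le) hF0
  have hFS : ∀ z ∈ 𝔻, ‖F z‖ ≤ ‖S z‖ := fun z hz => by
    rw [hFbS z hz, norm_mul]
    exact mul_le_of_le_one_left (norm_nonneg _) (hb.norm_le_one hz)
  have hlog : 0 ≤ Real.log ‖S 0‖ := by
    refine le_of_tendsto (by simpa only [mul_zero] using hmean.const_mul (-2)) ?_
    filter_upwards [eventually_zero_lt_and_lt_one] with ρ hρ
    exact hF.neg_two_mul_circleAverage_le_log_norm hS hS0 hFS hρ.1.le hρ.2
  have hnorm : 1 ≤ ‖S 0‖ := (Real.log_nonneg_iff (norm_pos_iff.2 (hS0 0 h0D))).1 hlog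
  have hconst : ∀ z ∈ 𝔻, S z = S 0 := fun z hz => by
    by_contra hne
    exact hnorm.not_gt (norm_lt_one_of_exists_ne isOpen_ball isPreconnected_unitDisc hS hS1
      ⟨z, hz, 0, h0D, hne⟩ h0D)
  exact (hb.const_mul (le_antisymm (hS1 0 h0D) hnorm)).congr fun z hz => by
    rw [hFbS z hz, hconst z hz, mul_comm]

end IsDensityMaximal

lemma hDeriv_div_hDeriv_eq_densityRatio (hB : IsSelfMap B) (hz : z ∈ 𝔻) (hBz : deriv B z ≠ 0)
    (hfq : deriv f z = q z * deriv B z) : hDeriv f z / hDeriv B z = densityRatio q B f z := by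
  have hpos : 0 < hDeriv B z := by
    have := hB.one_sub_sq_norm_pos hz
    have := one_sub_sq_norm_pos (mem_ball_zero_iff.1 hz)
    have := norm_pos_iff.2 hBz
    unfold hDeriv
    positivity
  have hden := hypDensity_eq_densityRatio_mul hB hz hfq
  rw [div_eq_iff hpos.ne', hDeriv, hDeriv, mul_div_assoc, mul_div_assoc, ← hypDensity,
    ← hypDensity, hden]
  ring

/-- Along a sequence accumulating inside the disk, `hlittleo` is the interior equality case. -/
theorem nehari_schwarz_boundary_rigidity_general {ι : Type*} {l : Filter ι} [l.NeBot]
    (hB : IsMaximalBlaschke B) (hf_diff : ∀ z ∈ 𝔻, DifferentiableAt ℂ f z)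
    (hf_le : ∀ z ∈ 𝔻, ‖f z‖ ≤ 1) (hf_nc : ∃ z ∈ 𝔻, ∃ w ∈ 𝔻, f z ≠ f w)
    (hcrit : ∀ z ∈ 𝔻, vOrder (deriv B) z ≤ vOrder (deriv f) z)
    (z : ι → ℂ) (hz_mem : ∀ i, z i ∈ 𝔻) (hz_crit : ∀ i, deriv B (z i) ≠ 0)
    (hlittleo : Tendsto
      (fun i => (hDeriv f (z i) / hDeriv B (z i) - 1) / (1 - ‖z i‖) ^ 2) l (𝓝 0)) :
    (∃ τ z₀ : ℂ, ‖τ‖ = 1 ∧ ‖z₀‖ < 1 ∧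
      ∀ w ∈ 𝔻, f w = τ * (z₀ - B w) / (1 - conj z₀ * B w)) ∧ IsMaximalBlaschke f := by
  obtain ⟨i₀⟩ := l.nonempty_of_neBot
  have hB0 : ∃ z ∈ 𝔻, deriv B z ≠ 0 := ⟨z i₀, hz_mem i₀, hz_crit i₀⟩
  have hBd : DifferentiableOn ℂ B 𝔻 := fun w hw => (hB.1.1 w hw).differentiableWithinAt
  have hBD : IsSelfMap B := .of_norm_le_one hBd (fun _ => hB.1.norm_le_one)
    ((exists_ne_iff_exists_deriv_ne_zero isOpen_ball isPreconnected_unitDisc hBd).2 hB0)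
  have hBmax := hB.isDensityMaximal hBD hB0
  have hfD : IsSelfMap f :=
    .of_norm_le_one (fun w hw => (hf_diff w hw).differentiableWithinAt) hf_le hf_nc
  obtain ⟨q, hq, hfq⟩ := hBmax.exists_deriv_eq_mul hfD hcrit
  have hratio : ∀ i, hDeriv f (z i) / hDeriv B (z i) = densityRatio q B f (z i) := fun i =>
    hDeriv_div_hDeriv_eq_densityRatio hBD (hz_mem i) (hz_crit i) (hfq _ (hz_mem i))
  simp only [hratio] at hlittleo
  obtain ⟨τ, c, hτ, hc, hfB⟩ := hBmax.eqOn_mul_moebius_of_densityRatio_eq_one hfD hq hfq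
    (densityRatio_eq_one_of_tendsto hBD hfD hq hfq (hBmax.densityRatio_le_one f q hfD hq hfq)
      hz_mem hlittleo)
  have hfmax := (hBmax.moebius_comp hτ hc).congr hfB
  have hfmean := (hB.1.hasUnimodularMean.moebius_comp hBD hτ hc).congr hfB.symm
  refine ⟨⟨-τ, c, by rwa [norm_neg], hc, fun w hw => ?_⟩,
    hfmax.isMaximalBlaschke (hfmax.isBlaschkeProduct hfmean)⟩
  simp only [hfB hw, moebius]
  ring

end Conclusion

/-- **Strong form of the generalized Nehari–Schwarz lemma at the boundary.** Let `B`
be a maximal Blaschke product and `f` a nonconstant holomorphic map of the open unit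
disk into the closed unit disk whose critical set contains that of `B`. If there is a
sequence `(z_n)` in the disk with `B'(z_n) ≠ 0`, `|z_n| → 1` and
`f^h(z_n)/B^h(z_n) = 1 + o((1 − |z_n|)²)`, then `f = T ∘ B` for some conformal
automorphism `T` of the disk; in particular `f` is itself a maximal Blaschke
product. -/
theorem nehari_schwarz_boundary_rigidity (B : ℂ → ℂ) (hB : IsMaximalBlaschke B)
    (f : ℂ → ℂ)
    (hf_diff : ∀ z ∈ Metric.ball (0 : ℂ) 1, DifferentiableAt ℂ f z)
    (hf_le : ∀ z ∈ Metric.ball (0 : ℂ) 1, ‖f z‖ ≤ 1)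
    (hf_nc : ∃ z ∈ Metric.ball (0 : ℂ) 1, ∃ w ∈ Metric.ball (0 : ℂ) 1, f z ≠ f w)
    (hcrit : ∀ z ∈ Metric.ball (0 : ℂ) 1, vOrder (deriv B) z ≤ vOrder (deriv f) z)
    (z : ℕ → ℂ) (hz_mem : ∀ n, z n ∈ Metric.ball (0 : ℂ) 1)
    (hz_crit : ∀ n, deriv B (z n) ≠ 0)
    (hz_bd : Tendsto (fun n => ‖z n‖) atTop (nhds 1))
    (hlittleo : Tendsto
      (fun n => (hDeriv f (z n) / hDeriv B (z n) - 1) / (1 - ‖z n‖) ^ 2)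
      atTop (nhds 0)) :
    (∃ (τ : ℂ) (z₀ : ℂ), ‖τ‖ = 1 ∧ ‖z₀‖ < 1 ∧
      ∀ w ∈ Metric.ball (0 : ℂ) 1,
        f w = τ * (z₀ - B w) / (1 - (starRingEnd ℂ) z₀ * B w)) ∧
    IsMaximalBlaschke f := by
  exact nehari_schwarz_boundary_rigidity_general hB hf_diff hf_le hf_nc hcrit z hz_mem hz_crit
    hlittleo
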